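/- arXiv:0911.0354 — 5 statements merged into one kernel-verified Lean document; each statement's English description precedes it below -/
import Mathlib

section
/- Let (W,S) be a Coxeter system with S finite. Then there exists a constant N such that every base (s,w) satisfies ℓ(w) ≤ N. -/
variable {B : Type*} {W : Type*} [Group W] {M : CoxeterMatrix B}

/-- A subset `J` of the index set is *spherical* if the corresponding simple reflections
generate a finite subgroup. -/
def Spherical (cs : CoxeterSystem M W) (J : Set B) : Prop :=
  (Subgroup.closure (cs.simple '' J) : Set W).Finite

/-- Two indices are *adjacent* if the corresponding simple reflections generate a finite
subgroup. -/
def Adjacent (cs : CoxeterSystem M W) (i j : B) : Prop :=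
  (Subgroup.closure {cs.simple i, cs.simple j} : Set W).Finite

/-- A subset is *2-spherical* if every pair of its elements is adjacent. -/
def TwoSpherical (cs : CoxeterSystem M W) (J : Set B) : Prop :=
  ∀ i ∈ J, ∀ j ∈ J, Adjacent cs i j

/-- A subset is *irreducible* if it cannot be partitioned into two nonempty subsets whose
corresponding simple reflections commute elementwise. -/
def IrreducibleSubset (cs : CoxeterSystem M W) (J : Set B) : Prop :=
  ¬ ∃ K L : Set B, K.Nonempty ∧ L.Nonempty ∧ Disjoint K L ∧ K ∪ L = J ∧
      ∀ k ∈ K, ∀ l ∈ L, Commute (cs.simple k) (cs.simple l)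

/-- `perpIn cs T J` is the set `J⊥` of elements of `T ∖ J` whose simple reflections commute
with those of every element of `J`. -/
def perpIn (cs : CoxeterSystem M W) (T J : Set B) : Set B :=
  {i ∈ T \ J | ∀ j ∈ J, Commute (cs.simple i) (cs.simple j)}

/-- A subset `T` of the index set is *connected* if any two of its elements are joined by a
path inside `T` whose edges are adjacent pairs. -/
def ConnectedIn (cs : CoxeterSystem M W) (T : Set B) : Prop :=
  ∀ a ∈ T, ∀ b ∈ T,
    Relation.ReflTransGen (fun x y => x ∈ T ∧ y ∈ T ∧ Adjacent cs x y) a b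

/-- A subset `T` is *twist-rigid* if for every irreducible spherical subset `L ⊆ T` the set
`T ∖ (L ∪ L⊥)` is connected, where `L⊥` is taken inside `T`. -/
def TwistRigidIn (cs : CoxeterSystem M W) (T : Set B) : Prop :=
  ∀ L ⊆ T, IrreducibleSubset cs L → Spherical cs L →
    ConnectedIn cs (T \ (L ∪ perpIn cs T L))

/-- A pair `(s, w)` is a *base* if `ℓ(w⁻¹ s w) = 2 ℓ(w) + 1` and every reflection `t` with
`ℓ(t w) < ℓ(w)` generates together with `s` a finite subgroup. -/
def IsBase (cs : CoxeterSystem M W) (s : B) (w : W) : Prop :=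
  cs.length (w⁻¹ * cs.simple s * w) = 2 * cs.length w + 1 ∧
    ∀ t : W, cs.IsReflection t → cs.length (t * w) < cs.length w →
      (Subgroup.closure {cs.simple s, t} : Set W).Finite

/-- `J` is the *support* of `(s, w)` if it is the smallest subset of the index set containing
`s` with `w ∈ W_J`. -/
def IsSupport (cs : CoxeterSystem M W) (s : B) (w : W) (J : Set B) : Prop :=
  s ∈ J ∧ w ∈ Subgroup.closure (cs.simple '' J) ∧
    ∀ J' : Set B, s ∈ J' → w ∈ Subgroup.closure (cs.simple '' J') → J ⊆ J'

/-- A base `(s, w)` is *simple* if `w` is represented by a reduced word whose letters are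
pairwise distinct and distinct from `s`. -/
def IsSimpleBase (cs : CoxeterSystem M W) (s : B) (w : W) : Prop :=
  IsBase cs s w ∧ ∃ l : List B, w = cs.wordProd l ∧ cs.length w = l.length ∧
    l.Nodup ∧ s ∉ l

/-- The *shadow* of a base `(s, w)` with support `J`: the set of `j ∈ J` with
`ℓ((wj)⁻¹ s (wj)) ≤ ℓ(w⁻¹ s w)`. -/
def shadow (cs : CoxeterSystem M W) (s : B) (w : W) (J : Set B) : Set B :=
  {j ∈ J | cs.length ((w * cs.simple j)⁻¹ * cs.simple s * (w * cs.simple j)) ≤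
    cs.length (w⁻¹ * cs.simple s * w)}


/-- Twice the standard bilinear form on simple roots. -/
noncomputable def cxA (M : CoxeterMatrix B) (i j : B) : ℝ :=
  if M i j = 0 then -2 else -2 * Real.cos (Real.pi / M i j)

lemma cxA_self (M : CoxeterMatrix B) (i : B) : cxA M i i = 2 := by
  simp [cxA]

lemma cxA_symm (M : CoxeterMatrix B) (i j : B) : cxA M i j = cxA M j i := by
  simp [cxA, M.symmetric i j]

lemma cxA_nonpos (M : CoxeterMatrix B) {i j : B} (h : i ≠ j) : cxA M i j ≤ 0 := by
  unfold cxA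
  split_ifs with h0
  · norm_num
  · have h1 : M i j ≠ 1 := M.off_diagonal i j h
    have h2 : (2 : ℝ) ≤ M i j := by
      have : 2 ≤ M i j := by omega
      exact_mod_cast this
    have hp := Real.pi_pos
    have : 0 ≤ Real.cos (Real.pi / M i j) := by
      apply Real.cos_nonneg_of_neg_pi_div_two_le_of_le
      · have : 0 ≤ Real.pi / M i j := by positivity
        linarith
      · exact div_le_div_of_nonneg_left hp.le (by norm_num) h2
    linarith

lemma cxA_ge (M : CoxeterMatrix B) (i j : B) : -2 ≤ cxA M i j := by
  unfold cxA
  split_ifs with h0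
  · norm_num
  · have := Real.cos_le_one (Real.pi / M i j)
    linarith

/-- Twice the standard bilinear form. -/
noncomputable def cxQ [Fintype B] [DecidableEq B] (M : CoxeterMatrix B) :
    LinearMap.BilinForm ℝ (B → ℝ) :=
  Matrix.toBilin' (Matrix.of (cxA M))

/-- simple root -/
noncomputable def cxE [DecidableEq B] (i : B) : B → ℝ := Pi.single i 1

section
variable [Fintype B] [DecidableEq B]

lemma cxQ_E (M : CoxeterMatrix B) (i j : B) : cxQ M (cxE i) (cxE j) = cxA M i j := by
  simp [cxQ, cxE]

lemma cxQ_apply_E (M : CoxeterMatrix B) (v : B → ℝ) (j : B) :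
    cxQ M v (cxE j) = ∑ i, v i * cxA M i j := by
  have : v = ∑ i, v i • cxE i := by
    ext l; simp [cxE, Finset.sum_apply, Pi.single_apply]
  conv_lhs => rw [this]
  simp [cxQ_E]

lemma cxQ_symm (M : CoxeterMatrix B) (v w : B → ℝ) : cxQ M v w = cxQ M w v := by
  simp only [cxQ, Matrix.toBilin'_apply]
  rw [Finset.sum_comm]
  refine Finset.sum_congr rfl fun i _ => Finset.sum_congr rfl fun j _ => ?_
  simp only [Matrix.of_apply, cxA_symm M j i]
  ring

/-- reflection in a vector -/
noncomputable def cxR (M : CoxeterMatrix B) (x : B → ℝ) : Module.End ℝ (B → ℝ) :=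
  LinearMap.id - ((cxQ M).flip x).smulRight x

lemma cxR_apply (M : CoxeterMatrix B) (x v : B → ℝ) : cxR M x v = v - cxQ M v x • x := by
  simp [cxR]

lemma cxR_sq (M : CoxeterMatrix B) (x : B → ℝ) (hx : cxQ M x x = 2) (v : B → ℝ) :
    cxR M x (cxR M x v) = v := by
  simp only [cxR_apply, map_sub, map_smul, LinearMap.sub_apply, LinearMap.smul_apply, hx,
    smul_eq_mul]
  module

lemma cxQ_R (M : CoxeterMatrix B) (x : B → ℝ) (hx : cxQ M x x = 2) (v w : B → ℝ) :
    cxQ M (cxR M x v) (cxR M x w) = cxQ M v w := by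
  simp only [cxR_apply, map_sub, map_smul, LinearMap.sub_apply, LinearMap.smul_apply, hx,
    smul_eq_mul, cxQ_symm M x w]
  ring

lemma S_eval_sin (n : ℤ) (φ : ℝ) :
    ((Polynomial.Chebyshev.S ℝ n).eval (2 * Real.cos φ)) * Real.sin φ =
      Real.sin ((n + 1) * φ) := by
  have h := Polynomial.Chebyshev.U_real_cos φ n
  rw [← Polynomial.Chebyshev.S_comp_two_mul_X] at h
  simpa using h

lemma cx_relation_aux (M : CoxeterMatrix B) (x y : B → ℝ) (hx : cxQ M x x = 2)
    (hy : cxQ M y y = 2) (m : ℕ) (h2m : 2 ≤ m)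
    (hxy : cxQ M x y = -2 * Real.cos (Real.pi / m)) :
    (cxR M x * cxR M y) ^ m = 1 := by
  have hf : (cxQ M).flip x x = 2 := hx
  have hg : (cxQ M).flip y y = 2 := hy
  have hxy' : cxR M x * cxR M y =
      (Module.reflection hf * Module.reflection hg).toLinearMap := rfl
  have key := Module.reflection_mul_reflection_pow_apply hf hg m
  have hpow : ((cxR M x * cxR M y) ^ m : Module.End ℝ (B → ℝ)) =
      ((Module.reflection hf * Module.reflection hg) ^ m).toLinearMap := by
    rw [hxy']
    clear key h2m hxy
    induction m with
    | zero => rfl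
    | succ m ih => rw [pow_succ, pow_succ, ih]; rfl
  rw [hpow]
  apply LinearMap.ext
  intro z
  rw [LinearEquiv.coe_coe, key z]
  have hfl (u v : B → ℝ) : (cxQ M).flip u v = cxQ M v u := rfl
  simp only [hfl, cxQ_symm M y x]
  set a := cxQ M x y with ha
  by_cases h2 : m = 2
  · have ha0 : a = 0 := by simp [hxy, h2]
    subst h2
    simp only [ha0]
    norm_num
    abel
  set φ : ℝ := 2 * (Real.pi / m) with hφ
  have ht : a * a - 2 = 2 * Real.cos φ := by
    rw [hφ, Real.cos_two_mul, hxy]; ring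
  have hm3 : (3 : ℝ) ≤ m := by
    have : 3 ≤ m := by omega
    exact_mod_cast this
  have hsin : Real.sin φ ≠ 0 := by
    apply ne_of_gt
    apply Real.sin_pos_of_pos_of_lt_pi
    · have := Real.pi_pos; positivity
    · have := Real.pi_pos
      have : φ = 2 * Real.pi / m := by rw [hφ]; ring
      rw [this, div_lt_iff₀ (by linarith)]; nlinarith
  rw [ht]
  have hmφ : m * φ = 2 * Real.pi := by
    rw [hφ]; field_simp
  obtain ⟨k, hk | hk⟩ := Nat.even_or_odd' m
  · have e1 : ((m : ℤ) - 2) / 2 = k - 1 := by omega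
    have e2 : ((m : ℤ) - 1) / 2 = k - 1 := by omega
    have hz : ((Polynomial.Chebyshev.S ℝ (k - 1)).eval (2 * Real.cos φ)) = 0 := by
      have := S_eval_sin (k - 1) φ
      have e : (((k : ℤ) - 1 : ℤ) + 1 : ℝ) * φ = Real.pi := by
        push_cast
        have : (m : ℝ) = 2 * k := by exact_mod_cast hk
        rw [this] at hmφ; linarith
      rw [e, Real.sin_pi] at this
      exact (mul_eq_zero.mp this).resolve_right hsin
    rw [e1, e2, hz]; simp
  · have e1 : ((m : ℤ) - 2) / 2 = k - 1 := by omega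
    have e2 : ((m : ℤ) - 1) / 2 = k := by omega
    have e3 : ((m : ℤ) - 3) / 2 = k - 1 := by omega
    have e4 : (m : ℤ) / 2 = k := by omega
    have hz : ((Polynomial.Chebyshev.S ℝ k).eval (2 * Real.cos φ)) +
       ((Polynomial.Chebyshev.S ℝ (k - 1)).eval (2 * Real.cos φ)) = 0 := by
      have A := S_eval_sin (k - 1) φ
      have A' := S_eval_sin k φ
      have e : (((k : ℤ) - 1 : ℤ) + 1 : ℝ) * φ = 2 * Real.pi - (((k : ℤ) : ℝ) + 1) * φ := by
        push_cast
        have : (m : ℝ) = 2 * k + 1 := by exact_mod_cast hk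
        rw [this] at hmφ; linarith
      rw [e, Real.sin_two_pi_sub] at A
      have : (((Polynomial.Chebyshev.S ℝ k).eval (2 * Real.cos φ)) +
       ((Polynomial.Chebyshev.S ℝ (k - 1)).eval (2 * Real.cos φ))) * Real.sin φ = 0 := by
        rw [add_mul, A, A']; ring
      exact (mul_eq_zero.mp this).resolve_right hsin
    rw [e1, e2, e3, e4, hz]; simp

lemma cx_relation (M : CoxeterMatrix B) (i j : B) :
    (cxR M (cxE i) * cxR M (cxE j)) ^ M i j = 1 := by
  have hE (i : B) : cxQ M (cxE i) (cxE i) = 2 := by rw [cxQ_E, cxA_self]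
  by_cases hij : i = j
  · subst hij
    rw [M.diagonal, pow_one]
    apply LinearMap.ext
    intro v
    rw [Module.End.mul_apply, cxR_sq _ _ (hE i)]
    rfl
  by_cases h0 : M i j = 0
  · rw [h0, pow_zero]
  have h1 : M i j ≠ 1 := M.off_diagonal i j hij
  apply cx_relation_aux M _ _ (hE i) (hE j) _ (by omega)
  rw [cxQ_E, cxA, if_neg h0]

/-- geometric representation -/
noncomputable def cxRho (cs : CoxeterSystem M W) : W →* Module.End ℝ (B → ℝ) :=
  cs.lift ⟨fun i => cxR M (cxE i), cx_relation M⟩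

lemma cxRho_simple (cs : CoxeterSystem M W) (i : B) :
    cxRho cs (cs.simple i) = cxR M (cxE i) := by
  exact cs.lift_apply_simple (cx_relation M) i

lemma cxQ_E_self (M : CoxeterMatrix B) (i : B) : cxQ M (cxE i) (cxE i) = 2 := by
  rw [cxQ_E, cxA_self]

lemma cxQ_rho (cs : CoxeterSystem M W) (w : W) (x y : B → ℝ) :
    cxQ M (cxRho cs w x) (cxRho cs w y) = cxQ M x y := by
  induction w using cs.simple_induction_left with
  | one => simp
  | mul_simple_left w i ih =>
    rw [map_mul, cxRho_simple, Module.End.mul_apply, Module.End.mul_apply,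
      cxQ_R _ _ (cxQ_E_self M i), ih]

lemma cxRho_inv_apply (cs : CoxeterSystem M W) (w : W) (x : B → ℝ) :
    cxRho cs w⁻¹ (cxRho cs w x) = x := by
  rw [← Module.End.mul_apply, ← map_mul]; simp

lemma cxRho_apply_inv (cs : CoxeterSystem M W) (w : W) (x : B → ℝ) :
    cxRho cs w (cxRho cs w⁻¹ x) = x := by
  rw [← Module.End.mul_apply, ← map_mul]; simp

lemma cxRho_mul_apply (cs : CoxeterSystem M W) (v w : W) (x : B → ℝ) :
    cxRho cs (v * w) x = cxRho cs v (cxRho cs w x) := by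
  rw [map_mul, Module.End.mul_apply]

lemma cxRho_conj (cs : CoxeterSystem M W) (g : W) (i : B) :
    cxRho cs (g * cs.simple i * g⁻¹) = cxR M (cxRho cs g (cxE i)) := by
  apply LinearMap.ext
  intro v
  rw [cxRho_mul_apply, cxRho_mul_apply, cxRho_simple, cxR_apply, cxR_apply, map_sub, map_smul,
    cxRho_apply_inv]
  congr 2
  rw [← cxQ_rho cs g, cxRho_apply_inv]

/-- Chebyshev-like recursion -/
def useq {R : Type*} [CommRing R] (c : R) : ℕ → R
  | 0 => 0
  | 1 => 1
  | (k + 2) => c * useq c (k + 1) - useq c k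

lemma useq_map {R S : Type*} [CommRing R] [CommRing S] (φ : R →+* S) (c : R) (k : ℕ) :
    φ (useq c k) = useq (φ c) k := by
  induction k using Nat.twoStepInduction with
  | zero => simp [useq]
  | one => simp [useq]
  | more k h1 h2 => simp [useq, h1, h2]

lemma useq_ne_zero {R : Type*} [NormedField R] (c : R) (hc : 2 < ‖c‖) (k : ℕ) :
    ‖useq c k‖ < ‖useq c (k + 1)‖ := by
  induction k with
  | zero => simp [useq]
  | succ k ih =>
    have h1 : ‖c * useq c (k + 1)‖ - ‖useq c k‖ ≤ ‖useq c (k + 2)‖ := norm_sub_norm_le _ _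
    rw [norm_mul] at h1
    have : 2 * ‖useq c (k + 1)‖ ≤ ‖c‖ * ‖useq c (k + 1)‖ := by gcongr
    have h0 := norm_nonneg (useq c k)
    show _ < ‖useq c (k + 2)‖
    linarith

lemma norm_le_of_useq {R : Type*} [NormedField R] (c : R) (k : ℕ) (hk : 0 < k)
    (h : useq c k = 0) : ‖c‖ ≤ 2 := by
  by_contra hc
  push Not at hc
  obtain ⟨k, rfl⟩ := Nat.exists_eq_succ_of_ne_zero hk.ne'
  have := useq_ne_zero c hc k
  rw [h, norm_zero] at this
  exact absurd this (not_lt.mpr (norm_nonneg _))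

lemma useq_sin (θ : ℝ) (k : ℕ) : useq (2 * Real.cos θ) k * Real.sin θ = Real.sin (k * θ) := by
  induction k using Nat.twoStepInduction with
  | zero => simp [useq]
  | one => simp [useq]
  | more k h1 h2 =>
    have e : ((k + 2 : ℕ) : ℝ) * θ = ((k + 1 : ℕ) : ℝ) * θ + θ := by push_cast; ring
    have e' : (k : ℝ) * θ = ((k + 1 : ℕ) : ℝ) * θ - θ := by push_cast; ring
    rw [useq, sub_mul, h1, mul_assoc, h2, e, e', Real.sin_add, Real.sin_sub]
    ring

lemma useq_two (k : ℕ) : useq (2 : ℝ) k = k := by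
  induction k using Nat.twoStepInduction with
  | zero => simp [useq]
  | one => simp [useq]
  | more k h1 h2 => rw [useq, h1, h2]; push_cast; ring

lemma useq_nonneg (M : CoxeterMatrix B) (i j : B) (hij : i ≠ j) (k : ℕ)
    (hk : M i j = 0 ∨ k ≤ M i j) : 0 ≤ useq (-cxA M i j) k := by
  by_cases h0 : M i j = 0
  · have : -cxA M i j = 2 := by simp [cxA, h0]
    rw [this, useq_two]; positivity
  have h1 : M i j ≠ 1 := M.off_diagonal i j hij
  have hk' : k ≤ M i j := hk.resolve_left h0
  have : -cxA M i j = 2 * Real.cos (Real.pi / M i j) := by simp [cxA, h0]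
  rw [this]
  have h2 : (2 : ℝ) ≤ M i j := by
    have : 2 ≤ M i j := by omega
    exact_mod_cast this
  have hp := Real.pi_pos
  have hs : 0 < Real.sin (Real.pi / M i j) := by
    apply Real.sin_pos_of_pos_of_lt_pi
    · positivity
    · rw [div_lt_iff₀ (by linarith)]; nlinarith
  have h3 : 0 ≤ Real.sin (k * (Real.pi / M i j)) := by
    apply Real.sin_nonneg_of_nonneg_of_le_pi
    · positivity
    · have : (k : ℝ) ≤ M i j := by exact_mod_cast hk'
      rw [← mul_div_assoc, div_le_iff₀ (by linarith)]; nlinarith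
  rw [← useq_sin] at h3
  exact nonneg_of_mul_nonneg_left h3 hs

lemma alt_apply (M : CoxeterMatrix B) (x y : B → ℝ) (hx : cxQ M x x = 2) (hy : cxQ M y y = 2)
    (k : ℕ) : ((cxR M x * cxR M y) ^ k) x =
      useq (-cxQ M x y) (2 * k + 1) • x + useq (-cxQ M x y) (2 * k) • y := by
  induction k with
  | zero => simp [useq]
  | succ k ih =>
    rw [pow_succ', Module.End.mul_apply, ih, Module.End.mul_apply]
    have e1 : 2 * (k + 1) + 1 = 2 * k + 1 + 2 := by ring
    have e2 : 2 * (k + 1) = 2 * k + 2 := by ring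
    rw [e1, e2, useq, useq]
    simp only [cxR_apply, map_add, map_sub, map_smul, LinearMap.add_apply, LinearMap.sub_apply,
      LinearMap.smul_apply, hx, hy, cxQ_symm M y x, smul_eq_mul]
    module

lemma alt_word_apply (cs : CoxeterSystem M W) (i j : B) (m : ℕ) :
    cxRho cs (cs.wordProd (CoxeterSystem.alternatingWord i j m)) (cxE i) =
      if Even m then useq (-cxA M i j) (m + 1) • cxE i + useq (-cxA M i j) m • cxE j
      else useq (-cxA M i j) m • cxE i + useq (-cxA M i j) (m + 1) • cxE j := by
  induction m with
  | zero => simp [useq, CoxeterSystem.alternatingWord]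
  | succ m ih =>
    rw [CoxeterSystem.alternatingWord_succ', CoxeterSystem.wordProd_cons, cxRho_mul_apply, ih,
      cxRho_simple]
    rw [useq]
    by_cases hm : Even m
    · have : ¬ Even (m + 1) := by simpa [parity_simps] using hm
      simp only [hm, this, if_true, if_false]
      simp only [cxR_apply, map_add, map_smul, LinearMap.add_apply, LinearMap.smul_apply,
        cxQ_E, cxA_self, smul_eq_mul]
      module
    · have : Even (m + 1) := by simpa [parity_simps] using hm
      simp only [hm, this, if_true, if_false]
      simp only [cxR_apply, map_add, map_smul, LinearMap.add_apply, LinearMap.smul_apply,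
        cxQ_E, cxA_self, smul_eq_mul, cxA_symm M j i]
      module

lemma cxE_nonneg (i l : B) : 0 ≤ cxE i l := by
  unfold cxE
  by_cases h : l = i
  · subst h; simp
  · simp [Pi.single_eq_of_ne h]

lemma pos_of_not_descent (cs : CoxeterSystem M W) : ∀ (n : ℕ) (w : W), cs.length w = n →
    ∀ i : B, cs.length w < cs.length (w * cs.simple i) → ∀ l, 0 ≤ cxRho cs w (cxE i) l := by
  intro n
  induction n using Nat.strong_induction_on with
  | _ n ih =>
  intro w hwn i hi l
  by_cases hw1 : w = 1
  · subst hw1; simpa using cxE_nonneg i l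
  obtain ⟨j, hj⟩ := cs.exists_rightDescent_of_ne_one hw1
  have hij : i ≠ j := by
    rintro rfl
    unfold CoxeterSystem.IsRightDescent at hj
    omega
  classical
  set P : ℕ → Prop := fun k => ∃ v, w = v * cs.wordProd (CoxeterSystem.alternatingWord i j k) ∧
    cs.length w = cs.length v + k with hP
  have hP1 : P 1 := by
    refine ⟨w * cs.simple j, ?_, ?_⟩
    · simp [CoxeterSystem.alternatingWord]
    · rw [cs.isRightDescent_iff] at hj; exact hj.symm
  have hlen : 1 ≤ cs.length w := by
    obtain ⟨v, _, h⟩ := hP1; omega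
  set k := Nat.findGreatest P (cs.length w) with hk
  have hPk : P k := Nat.findGreatest_spec hlen hP1
  have hk1 : 1 ≤ k := Nat.le_findGreatest hlen hP1
  obtain ⟨v, hv, hvl⟩ := hPk
  have hnot : ¬ P (k + 1) := by
    intro h
    have h' := h
    obtain ⟨v', _, hv'⟩ := h'
    have := Nat.le_findGreatest (P := P) (n := cs.length w) (by omega) h
    omega
  have hnext : cs.length v < cs.length (v * cs.simple (if Even k then j else i)) := by
    rcases cs.length_mul_simple v (if Even k then j else i) with h | h
    · omega
    · exfalso
      apply hnot
      refine ⟨v * cs.simple (if Even k then j else i), ?_, by omega⟩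
      rw [CoxeterSystem.alternatingWord_succ', CoxeterSystem.wordProd_cons, hv]
      simp [mul_assoc]
  have hprev : cs.length v < cs.length (v * cs.simple (if Even k then i else j)) := by
    rcases cs.length_mul_simple v (if Even k then i else j) with h | h
    · omega
    · exfalso
      obtain ⟨k', hk'⟩ : ∃ k', k = k' + 1 := ⟨k - 1, by omega⟩
      have he : (if Even k then i else j) = (if Even k' then j else i) := by
        rw [hk']
        by_cases h : Even k'
        · have : ¬ Even (k' + 1) := by simpa [parity_simps] using h
          simp [h, this]
        · have : Even (k' + 1) := by simpa [parity_simps] using h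
          simp [h, this]
      rw [he] at h
      have hw : w = v * cs.simple (if Even k' then j else i) *
          cs.wordProd (CoxeterSystem.alternatingWord i j k') := by
        rw [hv, hk', CoxeterSystem.alternatingWord_succ', CoxeterSystem.wordProd_cons, mul_assoc]
      have h1 := cs.length_mul_le (v * cs.simple (if Even k' then j else i))
        (cs.wordProd (CoxeterSystem.alternatingWord i j k'))
      have h2 := cs.length_wordProd_le (CoxeterSystem.alternatingWord i j k')
      rw [CoxeterSystem.length_alternatingWord] at h2
      rw [← hw] at h1
      omega
  have hvi : cs.length v < cs.length (v * cs.simple i) := by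
    by_cases h : Even k
    · simpa [h] using hprev
    · simpa [h] using hnext
  have hvj : cs.length v < cs.length (v * cs.simple j) := by
    by_cases h : Even k
    · simpa [h] using hnext
    · simpa [h] using hprev
  have hpi := ih (cs.length v) (by omega) v rfl i hvi l
  have hpj := ih (cs.length v) (by omega) v rfl j hvj l
  have hkm : M i j = 0 ∨ k + 1 ≤ M i j := by
    by_contra hcon
    push Not at hcon
    have hsym : M j i = M i j := M.symmetric i j ▸ rfl
    apply cs.not_isReduced_alternatingWord j i (m := k + 1) (by rw [hsym]; exact hcon.1)
      (by rw [hsym]; omega)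
    unfold CoxeterSystem.IsReduced
    rw [CoxeterSystem.length_alternatingWord]
    have h2 := cs.length_wordProd_le (CoxeterSystem.alternatingWord j i (k + 1))
    rw [CoxeterSystem.length_alternatingWord] at h2
    have hw : w * cs.simple i = v *
          cs.wordProd (CoxeterSystem.alternatingWord j i (k + 1)) := by
      rw [CoxeterSystem.alternatingWord_succ, CoxeterSystem.wordProd_concat, hv, mul_assoc]
    have h1 := cs.length_mul_le v (cs.wordProd (CoxeterSystem.alternatingWord j i (k + 1)))
    rw [← hw] at h1
    omega
  have u1 := useq_nonneg M i j hij (k + 1) hkm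
  have u0 := useq_nonneg M i j hij k (by omega)
  rw [hv, cxRho_mul_apply, alt_word_apply]
  split_ifs
  · simp only [map_add, map_smul, Pi.add_apply, Pi.smul_apply, smul_eq_mul]
    positivity
  · simp only [map_add, map_smul, Pi.add_apply, Pi.smul_apply, smul_eq_mul]
    positivity

lemma neg_of_descent (cs : CoxeterSystem M W) (w : W) (i : B)
    (h : cs.length (w * cs.simple i) < cs.length w) (l : B) : cxRho cs w (cxE i) l ≤ 0 := by
  have := pos_of_not_descent cs _ (w * cs.simple i) rfl i (by simpa using h) l
  rw [cxRho_mul_apply, cxRho_simple, cxR_apply, cxQ_E_self] at this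
  have e : cxE i - (2 : ℝ) • cxE i = - cxE i := by module
  rw [e, map_neg, Pi.neg_apply] at this
  linarith

lemma descent_of_neg (cs : CoxeterSystem M W) (w : W) (i l : B)
    (h : cxRho cs w (cxE i) l < 0) : cs.length (w * cs.simple i) < cs.length w := by
  rcases cs.length_mul_simple w i with h' | h'
  · have := pos_of_not_descent cs _ w rfl i (by omega) l
    linarith
  · omega

lemma pos_or_neg (cs : CoxeterSystem M W) (w : W) (i : B) :
    (∀ l, 0 ≤ cxRho cs w (cxE i) l) ∨ (∀ l, cxRho cs w (cxE i) l ≤ 0) := by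
  rcases cs.length_mul_simple w i with h' | h'
  · left; exact pos_of_not_descent cs _ w rfl i (by omega)
  · right; exact neg_of_descent cs w i (by omega)

lemma cxRho_faithful (cs : CoxeterSystem M W) (w : W) (h : cxRho cs w = 1) : w = 1 := by
  by_contra hw
  obtain ⟨j, hj⟩ := cs.exists_rightDescent_of_ne_one hw
  have := neg_of_descent cs w j hj j
  rw [h] at this
  simp [cxE] at this
  linarith

lemma cxRho_inj (cs : CoxeterSystem M W) (v w : W) (h : cxRho cs v = cxRho cs w) : v = w := by
  have : cxRho cs (v * w⁻¹) = 1 := by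
    rw [map_mul, h, ← map_mul]; simp
  have := cxRho_faithful cs _ this
  exact mul_inv_eq_one.mp this

lemma cxR_E_apply_ne (i l : B) (hl : l ≠ i) (v : B → ℝ) : cxR M (cxE i) v l = v l := by
  rw [cxR_apply]; simp [cxE, Pi.single_eq_of_ne hl]

lemma eq_smul_E (i : B) (v : B → ℝ) (h : ∀ l, l ≠ i → v l = 0) : v = v i • cxE i := by
  ext l
  by_cases hl : l = i
  · subst hl; simp [cxE]
  · simp [cxE, h l hl, Pi.single_eq_of_ne hl]

lemma cxR_E_eq_or (cs : CoxeterSystem M W) (g : W) (i k : B)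
    (hpos : ∀ l, 0 ≤ cxRho cs g (cxE i) l) (hneg : ∀ l, cxRho cs (cs.simple k * g) (cxE i) l ≤ 0) :
    cxRho cs g (cxE i) = cxE k := by
  have h1 := eq_smul_E k (cxRho cs g (cxE i)) (by
    intro l hl
    have h := hneg l
    rw [cxRho_mul_apply, cxRho_simple, cxR_E_apply_ne _ _ hl] at h
    exact le_antisymm h (hpos l))
  have h2 : cxQ M (cxRho cs g (cxE i)) (cxRho cs g (cxE i)) = 2 := by
    rw [cxQ_rho, cxQ_E_self]
  have h3 := hpos k
  set c := cxRho cs g (cxE i) k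
  rw [h1] at h2
  simp only [map_smul, LinearMap.smul_apply, cxQ_E_self, smul_eq_mul] at h2
  have : c = 1 := by nlinarith
  rw [h1, this, one_smul]

lemma inversion_of_neg (cs : CoxeterSystem M W) : ∀ (n : ℕ) (w : W), cs.length w = n →
    ∀ (g : W) (i l : B), (∀ l, 0 ≤ cxRho cs g (cxE i) l) →
    cxRho cs w (cxRho cs g (cxE i)) l < 0 →
    cs.length (w * (g * cs.simple i * g⁻¹)) < cs.length w := by
  intro n
  induction n with
  | zero =>
    intro w hw g i l hpos hneg
    rw [cs.length_eq_zero_iff] at hw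
    subst hw
    have := hpos l
    simp at hneg
    linarith
  | succ n ih =>
    intro w hw g i l hpos hneg
    have hw1 : w ≠ 1 := by rintro rfl; simp at hw
    obtain ⟨k, hk⟩ := cs.exists_rightDescent_of_ne_one hw1
    rw [cs.isRightDescent_iff] at hk
    rcases pos_or_neg cs (cs.simple k * g) i with h | h
    · have := ih (w * cs.simple k) (by omega) (cs.simple k * g) i l h (by
        rw [← cxRho_mul_apply] at hneg ⊢
        convert hneg using 3
        simp [mul_assoc])
      have e : w * cs.simple k * (cs.simple k * g * cs.simple i * (cs.simple k * g)⁻¹) =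
        w * (g * cs.simple i * g⁻¹) * cs.simple k := by simp [mul_assoc]
      rw [e] at this
      rcases cs.length_mul_simple (w * (g * cs.simple i * g⁻¹)) k with h' | h' <;> omega
    · have hE := cxR_E_eq_or cs g i k hpos h
      have : g * cs.simple i * g⁻¹ = cs.simple k := by
        apply cxRho_inj cs
        rw [cxRho_conj, hE, cxRho_simple]
      rw [this]
      omega

lemma finite_closure_sub (F0 D : Set ℝ) (hF : F0.Finite) (hD : D.Finite) (hpos : ∀ d ∈ D, 0 ≤ d) :
    ∃ G : Set ℝ, G.Finite ∧ (∀ g ∈ G, -2 ≤ g) ∧ (∀ f ∈ F0, -2 ≤ f → f ∈ G) ∧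
      ∀ g ∈ G, ∀ d ∈ D, -2 ≤ g - d → g - d ∈ G := by
  obtain ⟨ε, hε, hεD⟩ : ∃ ε : ℝ, 0 < ε ∧ ∀ d ∈ D, d ≠ 0 → ε ≤ d := by
    have hD' : (D \ {0}).Finite := hD.diff
    by_cases hne : (D \ {0}).Nonempty
    · obtain ⟨m, hm, hmin⟩ := Set.exists_min_image (D \ {0}) id hD' hne
      refine ⟨m, lt_of_le_of_ne (hpos m hm.1) (Ne.symm hm.2), ?_⟩
      intro d hd hd0
      exact hmin d ⟨hd, hd0⟩
    · refine ⟨1, one_pos, ?_⟩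
      intro d hd hd0
      exact absurd ⟨d, hd, hd0⟩ hne
  obtain ⟨C, hC⟩ := hF.bddAbove
  set stage : ℕ → Set ℝ := fun n => Nat.rec F0 (fun _ s => Set.image2 (fun g d => g - d) s (D \ {0})) n
    with hstage
  have hsfin : ∀ n, (stage n).Finite := by
    intro n
    induction n with
    | zero => exact hF
    | succ n ih => exact Set.Finite.image2 _ ih hD.diff
  have hsle : ∀ n, ∀ g ∈ stage n, g ≤ C - n * ε := by
    intro n
    induction n with
    | zero => intro g hg; simpa using hC hg
    | succ n ih =>
      rintro _ ⟨g, hg, d, hd, rfl⟩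
      have h1 := ih g hg
      have h2 := hεD d hd.1 hd.2
      push_cast
      linarith
  obtain ⟨N, hN⟩ := exists_nat_gt ((C + 2) / ε)
  rw [div_lt_iff₀ hε] at hN
  refine ⟨(⋃ n ∈ Set.Iic N, stage n) ∩ Set.Ici (-2), ?_, ?_, ?_, ?_⟩
  · exact ((Set.finite_Iic N).biUnion (fun n _ => hsfin n)).inter_of_left _
  · intro g hg; exact hg.2
  · intro f hf hf2
    refine ⟨?_, hf2⟩
    exact Set.mem_biUnion (x := 0) (Set.mem_Iic.mpr (Nat.zero_le _)) hf
  · intro g hg d hd hgd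
    refine ⟨?_, hgd⟩
    by_cases hd0 : d = 0
    · subst hd0; simpa using hg.1
    obtain ⟨hg1, hg2⟩ := hg
    simp only [Set.mem_iUnion, Set.mem_Iic] at hg1
    obtain ⟨n, hn, hgn⟩ := hg1
    have hnN : n ≠ N := by
      rintro rfl
      have := hsle n g hgn
      have h2 : -2 ≤ g := hg2
      linarith
    refine Set.mem_biUnion (x := n + 1) (Set.mem_Iic.mpr (by omega)) ?_
    exact ⟨g, hgn, d, ⟨hd, hd0⟩, rfl⟩

/-- subring of coefficients -/
noncomputable def cxK (M : CoxeterMatrix B) : IntermediateField ℚ ℝ :=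
  IntermediateField.adjoin ℚ (Set.range fun p : B × B => cxA M p.1 p.2)

lemma cxA_integral (M : CoxeterMatrix B) (i j : B) : IsIntegral ℤ (cxA M i j) := by
  unfold cxA
  split_ifs with h
  · exact_mod_cast isIntegral_algebraMap (R := ℤ) (A := ℝ) (x := -2)
  · have := Real.isIntegral_two_mul_cos_rat_mul_pi (1 / M i j)
    have h2 := this.neg
    convert h2 using 1
    push_cast
    rw [show Real.pi / (M i j : ℝ) = 1 / (M i j : ℝ) * Real.pi by ring]
    ring

noncomputable instance cxK_finite (M : CoxeterMatrix B) : FiniteDimensional ℚ (cxK M) := by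
  unfold cxK
  have : Finite (Set.range fun p : B × B => cxA M p.1 p.2) := Set.finite_range _
  apply IntermediateField.finiteDimensional_adjoin
  rintro _ ⟨p, rfl⟩
  exact (cxA_integral M p.1 p.2).tower_top

instance cxK_nf (M : CoxeterMatrix B) : NumberField (cxK M) where
  to_charZero := inferInstance
  to_finiteDimensional := cxK_finite M

/-- integral elements of the coefficient field -/
noncomputable def cxO (M : CoxeterMatrix B) : Subring ℝ :=
  (integralClosure ℤ ℝ).toSubring ⊓ (cxK M).toSubfield.toSubring

lemma cxA_mem (M : CoxeterMatrix B) (i j : B) : cxA M i j ∈ cxO M := by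
  refine ⟨cxA_integral M i j, ?_⟩
  exact IntermediateField.subset_adjoin ℚ _ ⟨(i, j), rfl⟩

/-- the finite set of possible values -/
def cxF (M : CoxeterMatrix B) : Set ℝ :=
  {x | x ∈ cxO M ∧ ∃ k, 0 < k ∧ useq (-x) k = 0}

lemma cxF_finite (M : CoxeterMatrix B) : (cxF M).Finite := by
  have h := NumberField.Embeddings.finite_of_norm_le (cxK M) ℂ 2
  refine (h.image (fun x : cxK M => (x : ℝ))).subset ?_
  rintro x ⟨⟨hx1, hx2⟩, k, hk, hu⟩
  refine ⟨⟨x, hx2⟩, ⟨?_, ?_⟩, rfl⟩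
  · have hinj : Function.Injective (algebraMap (cxK M) ℝ) := (algebraMap (cxK M) ℝ).injective
    rw [← isIntegral_algebraMap_iff hinj]
    exact hx1
  · intro φ
    have h0 : useq (-(⟨x, hx2⟩ : cxK M)) k = 0 := by
      apply (algebraMap (cxK M) ℝ).injective
      rw [useq_map, map_zero]
      exact hu
    have h1 := congrArg φ h0
    rw [useq_map, map_zero] at h1
    have := norm_le_of_useq _ k hk h1
    rwa [map_neg, norm_neg] at this

lemma cxF_ge (M : CoxeterMatrix B) (x : ℝ) (hx : x ∈ cxF M) : -2 ≤ x := by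
  obtain ⟨_, k, hk, hu⟩ := hx
  have := norm_le_of_useq _ k hk hu
  rw [norm_neg, Real.norm_eq_abs, abs_le] at this
  exact this.1

lemma cxQ_mem (M : CoxeterMatrix B) (v : B → ℝ) (hv : ∀ l, v l ∈ cxO M) (i : B) :
    cxQ M v (cxE i) ∈ cxO M := by
  rw [cxQ_apply_E]
  exact Subring.sum_mem _ fun l _ => Subring.mul_mem _ (hv l) (cxA_mem M l i)

lemma cxRho_mem (cs : CoxeterSystem M W) (w : W) (i l : B) :
    cxRho cs w (cxE i) l ∈ cxO M := by
  have hE (j l : B) : cxE j l ∈ cxO M := by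
    unfold cxE
    by_cases h : l = j
    · subst h; simpa using (cxO M).one_mem
    · simpa [Pi.single_eq_of_ne h] using (cxO M).zero_mem
  revert l
  induction w using cs.simple_induction_left with
  | one => simpa using hE i
  | mul_simple_left w j ih =>
    intro l
    rw [cxRho_mul_apply, cxRho_simple, cxR_apply]
    simp only [Pi.sub_apply, Pi.smul_apply, smul_eq_mul]
    exact Subring.sub_mem _ (ih l) (Subring.mul_mem _ (cxQ_mem M _ ih j) (hE j l))

lemma exists_pow_of_finite (a b : W) (h : (Subgroup.closure {a, b} : Set W).Finite) :
    ∃ N, 0 < N ∧ (a * b) ^ N = 1 := by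
  have : Finite (Subgroup.closure {a, b}) := h
  have hm : a * b ∈ Subgroup.closure {a, b} :=
    mul_mem (Subgroup.subset_closure (by simp)) (Subgroup.subset_closure (by simp))
  have := isOfFinOrder_of_finite (⟨a * b, hm⟩ : Subgroup.closure {a, b})
  obtain ⟨N, hN, h⟩ := isOfFinOrder_iff_pow_eq_one.mp this
  refine ⟨N, hN, ?_⟩
  have := congrArg Subtype.val h
  simpa using this

/-- partial products -/
def wseq (cs : CoxeterSystem M W) (t : ℕ → B) : ℕ → W
  | 0 => 1
  | k + 1 => wseq cs t k * cs.simple (t k)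

lemma wseq_congr (cs : CoxeterSystem M W) (t t' : ℕ → B) (n : ℕ) (h : ∀ k < n, t k = t' k) :
    wseq cs t n = wseq cs t' n := by
  induction n with
  | zero => rfl
  | succ n ih => rw [wseq, wseq, ih (fun k hk => h k (by omega)), h n (by omega)]

lemma exists_wseq (cs : CoxeterSystem M W) (s : B) : ∀ (n : ℕ) (w : W), cs.length w = n →
    ∃ t, wseq cs t n = w := by
  intro n
  induction n with
  | zero =>
    intro w hw
    rw [cs.length_eq_zero_iff] at hw
    exact ⟨fun _ => s, hw.symm⟩
  | succ n ih =>
    intro w hw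
    have hw1 : w ≠ 1 := by rintro rfl; simp at hw
    obtain ⟨k, hk⟩ := cs.exists_rightDescent_of_ne_one hw1
    rw [cs.isRightDescent_iff] at hk
    obtain ⟨t, ht⟩ := ih (w * cs.simple k) (by omega)
    refine ⟨Function.update t n k, ?_⟩
    rw [wseq, wseq_congr cs _ t n (fun j hj => by simp [Function.update_of_ne hj.ne]), ht]
    simp

/-- chain data -/
structure CxChain (cs : CoxeterSystem M W) (s : B) (t : ℕ → B) (n : ℕ) : Prop where
  h1 : ∀ k ≤ n, cs.length (wseq cs t k) = k
  h2 : ∀ k ≤ n, cs.length ((wseq cs t k)⁻¹ * cs.simple s * wseq cs t k) = 2 * k + 1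
  h3 : ∀ k ≤ n, ∀ τ : W, cs.IsReflection τ → cs.length (τ * wseq cs t k) < k →
    (Subgroup.closure {cs.simple s, τ} : Set W).Finite

lemma chain_of_base (cs : CoxeterSystem M W) (s : B) (w : W) (h : IsBase cs s w) :
    ∃ t, CxChain cs s t (cs.length w) := by
  obtain ⟨t, ht⟩ := exists_wseq cs s _ w rfl
  refine ⟨t, ?_⟩
  obtain ⟨hb1, hb2⟩ := h
  generalize hn : cs.length w = n at *
  have L1 : ∀ τ k d, cs.length (τ * wseq cs t (k + d)) ≤ cs.length (τ * wseq cs t k) + d := by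
    intro τ k d
    induction d with
    | zero => simp
    | succ d ih =>
      have := cs.length_mul_le (τ * wseq cs t (k + d)) (cs.simple (t (k + d)))
      rw [cs.length_simple] at this
      rw [← add_assoc, wseq, ← mul_assoc]
      omega
  have L1' : ∀ k d, cs.length (wseq cs t (k + d)) ≤ cs.length (wseq cs t k) + d := by
    intro k d; simpa using L1 1 k d
  have L2 : ∀ k d, cs.length ((wseq cs t (k + d))⁻¹ * cs.simple s * wseq cs t (k + d)) ≤
      cs.length ((wseq cs t k)⁻¹ * cs.simple s * wseq cs t k) + 2 * d := by
    intro k d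
    induction d with
    | zero => simp
    | succ d ih =>
      set r := (wseq cs t (k + d))⁻¹ * cs.simple s * wseq cs t (k + d) with hr
      have e : (wseq cs t (k + (d + 1)))⁻¹ * cs.simple s * wseq cs t (k + (d + 1)) =
        cs.simple (t (k + d)) * r * cs.simple (t (k + d)) := by
        rw [← add_assoc, wseq, hr]; simp [mul_assoc]
      have a1 := cs.length_mul_le (cs.simple (t (k + d)) * r) (cs.simple (t (k + d)))
      have a2 := cs.length_mul_le (cs.simple (t (k + d))) r
      rw [cs.length_simple] at a1 a2
      rw [e]
      omega
  have H1 : ∀ k ≤ n, cs.length (wseq cs t k) = k := by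
    intro k hk
    have a := L1' 0 k
    have b := L1' k (n - k)
    rw [show k + (n - k) = n by omega, ht, hn] at b
    simp [wseq] at a
    omega
  refine ⟨H1, ?_, ?_⟩
  · intro k hk
    have a := L2 0 k
    have b := L2 k (n - k)
    rw [show k + (n - k) = n by omega, ht, hb1] at b
    simp [wseq] at a
    omega
  · intro k hk τ hτ hlt
    apply hb2 τ hτ
    have b := L1 τ k (n - k)
    rw [show k + (n - k) = n by omega, ht] at b
    omega

/-- sequence of roots -/
noncomputable def bseq (cs : CoxeterSystem M W) (s : B) (t : ℕ → B) (k : ℕ) : B → ℝ :=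
  cxRho cs (wseq cs t k)⁻¹ (cxE s)

lemma bseq_zero (cs : CoxeterSystem M W) (s : B) (t : ℕ → B) : bseq cs s t 0 = cxE s := by
  simp [bseq, wseq]

lemma bseq_succ (cs : CoxeterSystem M W) (s : B) (t : ℕ → B) (k : ℕ) :
    bseq cs s t (k + 1) =
      bseq cs s t k - cxQ M (bseq cs s t k) (cxE (t k)) • cxE (t k) := by
  rw [← cxR_apply, bseq, wseq, mul_inv_rev, cs.inv_simple, cxRho_mul_apply, cxRho_simple, bseq]

lemma bseq_norm (cs : CoxeterSystem M W) (s : B) (t : ℕ → B) (k : ℕ) :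
    cxQ M (bseq cs s t k) (bseq cs s t k) = 2 := by
  rw [bseq, cxQ_rho, cxQ_E_self]

lemma cxRho_r (cs : CoxeterSystem M W) (s : B) (t : ℕ → B) (k : ℕ) :
    cxRho cs ((wseq cs t k)⁻¹ * cs.simple s * wseq cs t k) = cxR M (bseq cs s t k) := by
  have := cxRho_conj cs (wseq cs t k)⁻¹ s
  rwa [inv_inv] at this

lemma chain_neg (cs : CoxeterSystem M W) (s : B) (t : ℕ → B) (n : ℕ) (h : CxChain cs s t n)
    (k : ℕ) (hk : k < n) (hpos : ∀ l, 0 ≤ bseq cs s t k l) :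
    cxQ M (bseq cs s t k) (cxE (t k)) < 0 := by
  by_contra hx
  push Not at hx
  set r := (wseq cs t k)⁻¹ * cs.simple s * wseq cs t k with hr
  have hρ : cxRho cs r = cxR M (bseq cs s t k) := cxRho_r cs s t k
  have hl : cs.length r = 2 * k + 1 := h.h2 k hk.le
  have hl' : cs.length (cs.simple (t k) * r * cs.simple (t k)) = 2 * k + 3 := by
    have := h.h2 (k + 1) hk
    have e : (wseq cs t (k + 1))⁻¹ * cs.simple s * wseq cs t (k + 1) =
        cs.simple (t k) * r * cs.simple (t k) := by
      rw [wseq, hr]; simp [mul_assoc]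
    rw [e] at this
    omega
  set x := cxQ M (bseq cs s t k) (cxE (t k)) with hxd
  have hβe : cxR M (bseq cs s t k) (cxE (t k)) = cxE (t k) - x • bseq cs s t k := by
    rw [cxR_apply, cxQ_symm M (cxE (t k))]
  rcases hx.eq_or_lt with hx | hx
  · -- commuting case
    have hc := cxRho_conj cs r (t k)
    rw [hρ, hβe, ← hx, zero_smul, sub_zero, ← cxRho_simple cs] at hc
    have hc := cxRho_inj cs _ _ hc
    have hc2 : r * cs.simple (t k) = cs.simple (t k) * r := by
      rw [mul_inv_eq_iff_eq_mul] at hc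
      exact hc
    rw [← hc2, mul_assoc, cs.simple_mul_simple_self, mul_one] at hl'
    omega
  · have hneg : ∃ l, cxRho cs r (cxE (t k)) l < 0 := by
      rw [hρ, hβe]
      by_cases hex : ∃ l, l ≠ t k ∧ bseq cs s t k l ≠ 0
      · obtain ⟨l, hl1, hl2⟩ := hex
        refine ⟨l, ?_⟩
        have : 0 < bseq cs s t k l := lt_of_le_of_ne (hpos l) (Ne.symm hl2)
        have := mul_pos hx this
        simp [cxE, Pi.single_eq_of_ne hl1]
        exact this
      · push Not at hex
        have he := eq_smul_E (t k) _ hex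
        set c := bseq cs s t k (t k) with hc
        have hn := bseq_norm cs s t k
        have hc0 : 0 ≤ c := hpos _
        rw [he] at hn hxd
        simp only [map_smul, LinearMap.smul_apply, cxQ_E_self, smul_eq_mul] at hn hxd
        refine ⟨t k, ?_⟩
        rw [he, hxd]
        simp [cxE]
        nlinarith
    obtain ⟨l, hneg⟩ := hneg
    have h1 := descent_of_neg cs r (t k) l hneg
    have h2 := cs.length_mul_le (cs.simple (t k)) (r * cs.simple (t k))
    rw [cs.length_simple, ← mul_assoc] at h2
    omega

lemma chain_pos (cs : CoxeterSystem M W) (s : B) (t : ℕ → B) (n : ℕ) (h : CxChain cs s t n)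
    (k : ℕ) (hk : k ≤ n) : ∀ l, 0 ≤ bseq cs s t k l := by
  induction k with
  | zero => rw [bseq_zero]; exact cxE_nonneg s
  | succ k ih =>
    have ih := ih (by omega)
    have hx := chain_neg cs s t n h k (by omega) ih
    intro l
    rw [bseq_succ]
    have := mul_nonneg (neg_nonneg.mpr hx.le) (cxE_nonneg (t k) l)
    have := ih l
    simp only [Pi.sub_apply, Pi.smul_apply, smul_eq_mul]
    linarith

lemma chain_neg' (cs : CoxeterSystem M W) (s : B) (t : ℕ → B) (n : ℕ) (h : CxChain cs s t n)
    (k : ℕ) (hk : k < n) : cxQ M (bseq cs s t k) (cxE (t k)) < 0 :=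
  chain_neg cs s t n h k hk (chain_pos cs s t n h k hk.le)

lemma chain_F (cs : CoxeterSystem M W) (s : B) (t : ℕ → B) (n : ℕ) (h : CxChain cs s t n)
    (k : ℕ) (hk : k < n) : cxQ M (bseq cs s t k) (cxE (t k)) ∈ cxF M := by
  have hx := chain_neg' cs s t n h k hk
  have hpos := chain_pos cs s t n h k hk.le
  refine ⟨cxQ_mem M _ (fun l => cxRho_mem cs _ _ _) _, ?_⟩
  set v := wseq cs t k with hv
  have hfin := h.h3 (k + 1) hk (v * cs.simple (t k) * v⁻¹) ⟨v, t k, rfl⟩ (by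
    rw [wseq, ← hv]
    have : v * cs.simple (t k) * v⁻¹ * (v * cs.simple (t k)) = v := by simp [mul_assoc]
    rw [this, hv, h.h1 k hk.le]; omega)
  rw [Set.pair_comm] at hfin
  obtain ⟨N, hN, hp⟩ := exists_pow_of_finite _ _ hfin
  have hp2 : (cs.simple (t k) * (v⁻¹ * cs.simple s * v)) ^ N = 1 := by
    have e : v * cs.simple (t k) * v⁻¹ * cs.simple s =
      v * (cs.simple (t k) * (v⁻¹ * cs.simple s * v)) * v⁻¹ := by simp [mul_assoc]
    rw [e, conj_pow] at hp
    simpa [mul_inv_eq_one] using hp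
  have hp3 := congrArg (cxRho cs) hp2
  rw [map_pow, map_mul, hv, cxRho_r, cxRho_simple, map_one] at hp3
  have ha := alt_apply M (cxE (t k)) (bseq cs s t k) (cxQ_E_self M _) (bseq_norm cs s t k) N
  rw [hp3, cxQ_symm M (cxE (t k))] at ha
  obtain ⟨l, hl1, hl2⟩ : ∃ l, l ≠ t k ∧ bseq cs s t k l ≠ 0 := by
    by_contra hex
    push Not at hex
    have he := eq_smul_E (t k) _ hex
    have hc0 := hpos (t k)
    rw [he] at hx
    simp only [map_smul, LinearMap.smul_apply, cxQ_E_self, smul_eq_mul] at hx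
    linarith
  refine ⟨2 * N, by omega, ?_⟩
  have := congrFun ha l
  simp [cxE, Pi.single_eq_of_ne hl1] at this
  exact this.resolve_right hl2

lemma not_finite_null (cs : CoxeterSystem M W) (s : B) (τ : W) (δ : B → ℝ) (hδ : δ ≠ 0)
    (h1 : cxQ M (cxE s) δ = 0) (h2 : cxQ M δ δ = 0) (hτ : cxRho cs τ = cxR M (cxE s + δ))
    (hfin : (Subgroup.closure {cs.simple s, τ} : Set W).Finite) : False := by
  obtain ⟨N, hN, hp⟩ := exists_pow_of_finite _ _ hfin
  have h1' : cxQ M δ (cxE s) = 0 := by rw [cxQ_symm, h1]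
  have key : ∀ m : ℕ, cxRho cs ((cs.simple s * τ) ^ m) (cxE s) = cxE s - (2 * m : ℝ) • δ := by
    intro m
    induction m with
    | zero => simp
    | succ m ih =>
      rw [pow_succ', cxRho_mul_apply, ih, cxRho_mul_apply, hτ, cxRho_simple]
      simp only [cxR_apply, map_sub, map_add, map_smul, LinearMap.sub_apply, LinearMap.add_apply,
        LinearMap.smul_apply, cxQ_E_self, h1, h1', h2, smul_eq_mul]
      push_cast
      module
  have := key N
  rw [hp, map_one, Module.End.one_apply] at this
  have h3 : (2 * N : ℝ) • δ = 0 := by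
    have := sub_eq_self.mp this.symm
    exact this
  rcases smul_eq_zero.mp h3 with h4 | h4
  · have : (0 : ℝ) < N := by exact_mod_cast hN
    linarith
  · exact hδ h4

lemma chain_no_repeat (cs : CoxeterSystem M W) (s : B) (t : ℕ → B) (n : ℕ) (h : CxChain cs s t n)
    (i j : ℕ) (hij : i < j) (hjn : j ≤ n)
    (hrep : ∀ k, i ≤ k → k < j →
      cxQ M (bseq cs s t i) (cxE (t k)) = cxQ M (bseq cs s t j) (cxE (t k))) : False := by
  obtain ⟨γ, hγ⟩ : ∃ γ, γ = bseq cs s t j - bseq cs s t i := ⟨_, rfl⟩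
  have hγe : ∀ k, i ≤ k → k < j → cxQ M γ (cxE (t k)) = 0 := by
    intro k h1 h2
    rw [hγ, map_sub, LinearMap.sub_apply, hrep k h1 h2, sub_self]
  have hγm : ∀ m, i ≤ m → m ≤ j → cxQ M γ (bseq cs s t m - bseq cs s t i) = 0 := by
    intro m hm
    induction m, hm using Nat.le_induction with
    | base => intro _; simp
    | succ m hm ih =>
      intro hmj
      have := ih (by omega)
      rw [map_sub] at this
      rw [bseq_succ, map_sub, map_sub, map_smul, hγe m hm (by omega), smul_zero]
      linarith
  have hγγ : cxQ M γ γ = 0 := by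
    have := hγm j hij.le le_rfl
    rwa [← hγ] at this
  have hβj : bseq cs s t j = bseq cs s t i + γ := by rw [hγ]; abel
  have hβγ : cxQ M (bseq cs s t i) γ = 0 := by
    have h1 := bseq_norm cs s t j
    have h2 := bseq_norm cs s t i
    rw [hβj] at h1
    simp only [map_add, LinearMap.add_apply, h2, hγγ, cxQ_symm M γ (bseq cs s t i)] at h1
    linarith
  have hγ0 : γ ≠ 0 := by
    have hm : ∀ m, i + 1 ≤ m → m ≤ j → bseq cs s t i (t i) < bseq cs s t m (t i) := by
      intro m hm
      induction m, hm using Nat.le_induction with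
      | base =>
        intro h1
        have := chain_neg' cs s t n h i (by omega)
        rw [bseq_succ]
        simp [cxE] at this ⊢
        linarith
      | succ m hm ih =>
        intro hmj
        have h1 := ih (by omega)
        have h2 := chain_neg' cs s t n h m (by omega)
        have h3 := mul_nonneg (neg_nonneg.mpr h2.le) (cxE_nonneg (t m) (t i))
        rw [bseq_succ]
        simp only [Pi.sub_apply, Pi.smul_apply, smul_eq_mul]
        linarith
    intro h0
    have := hm j hij le_rfl
    rw [hβj, h0, add_zero] at this
    exact lt_irrefl _ this
  obtain ⟨δ, hδ⟩ : ∃ δ, δ = cxRho cs (wseq cs t i) γ := ⟨_, rfl⟩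
  have hδm : ∀ m, i ≤ m → m ≤ j → cxRho cs (wseq cs t m) γ = δ := by
    intro m hm
    induction m, hm using Nat.le_induction with
    | base => intro _; exact hδ.symm
    | succ m hm ih =>
      intro hmj
      rw [wseq, cxRho_mul_apply, cxRho_simple, cxR_apply, hγe m hm (by omega), zero_smul, sub_zero]
      exact ih (by omega)
  have hδ0 : δ ≠ 0 := by
    intro h0
    apply hγ0
    rw [← cxRho_inv_apply cs (wseq cs t i) γ, ← hδ, h0, map_zero]
  have hδδ : cxQ M δ δ = 0 := by rw [hδ, cxQ_rho, hγγ]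
  have hwb : ∀ m, cxRho cs (wseq cs t m) (bseq cs s t m) = cxE s := fun m =>
    cxRho_apply_inv cs _ _
  have hsδ : cxQ M (cxE s) δ = 0 := by rw [hδ, ← hwb i, cxQ_rho, hβγ]
  have hij' : cxRho cs (wseq cs t i) (bseq cs s t j) = cxE s + δ := by
    rw [hβj, map_add, hwb, hδ]
  have hji' : cxRho cs (wseq cs t j) (bseq cs s t i) = cxE s + -δ := by
    have : bseq cs s t i = bseq cs s t j - γ := by rw [hγ]; abel
    rw [this, map_sub, hwb, hδm j hij.le le_rfl, sub_eq_add_neg]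
  -- general contradiction
  have fin : ∀ a b, a ≤ n → b ≤ n → ∀ δ' : B → ℝ, δ' ≠ 0 → cxQ M (cxE s) δ' = 0 →
      cxQ M δ' δ' = 0 → cxRho cs (wseq cs t a) (bseq cs s t b) = cxE s + δ' →
      ∀ l, l ≠ s → δ' l < 0 → False := by
    intro a b ha hb δ' h1 h2 h3 h4 l hl hneg
    set g := wseq cs t a * (wseq cs t b)⁻¹ with hg
    have hgE : cxRho cs g (cxE s) = cxE s + δ' := by
      rw [hg, cxRho_mul_apply, ← h4, bseq]
    have hlt := inversion_of_neg cs a (wseq cs t a) (h.h1 a ha) (wseq cs t b)⁻¹ s l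
      (chain_pos cs s t n h b hb) (by
        have h5 : cxRho cs (wseq cs t a) (cxRho cs (wseq cs t b)⁻¹ (cxE s)) = cxE s + δ' := h4
        rw [h5]
        simpa [cxE, Pi.single_eq_of_ne hl] using hneg)
    have hτ := cxRho_conj cs g s
    rw [hgE] at hτ
    refine not_finite_null cs s (g * cs.simple s * g⁻¹) δ' h1 h2 h3 hτ ?_
    apply h.h3 a ha _ ⟨g, s, rfl⟩
    have e : g * cs.simple s * g⁻¹ * wseq cs t a =
        wseq cs t a * ((wseq cs t b)⁻¹ * cs.simple s * ((wseq cs t b)⁻¹)⁻¹) := by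
      rw [hg]; simp [mul_assoc]
    rw [e]
    rwa [h.h1 a ha] at hlt
  obtain ⟨l, hl1, hl2⟩ : ∃ l, l ≠ s ∧ δ l ≠ 0 := by
    by_contra hex
    push Not at hex
    have he := eq_smul_E s _ hex
    have h1 := hsδ
    rw [he, map_smul, cxQ_E_self, smul_eq_mul] at h1
    have h2 : δ s = 0 := by linarith
    rw [h2, zero_smul] at he
    exact hδ0 he
  rcases lt_or_gt_of_ne hl2 with hl2 | hl2
  · exact fin i j (by omega) hjn δ hδ0 hsδ hδδ hij' l hl1 hl2
  · exact fin j i hjn (by omega) (-δ) (neg_ne_zero.mpr hδ0) (by simp [hsδ]) (by simp [hδδ])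
      hji' l hl1 (by simpa using hl2)

/-- finite set of small values -/
lemma exists_G (M : CoxeterMatrix B) : ∃ G : Set ℝ, G.Finite ∧ (∀ g ∈ G, -2 ≤ g) ∧
    (∀ f ∈ cxF M, f < 0 → -f ∈ G) ∧ (∀ i j, cxA M i j ∈ G) ∧
    ∀ g ∈ G, ∀ f ∈ cxF M, ∀ i j, 0 ≤ f * cxA M i j → -2 ≤ g - f * cxA M i j →
      g - f * cxA M i j ∈ G := by
  have hA : (Set.range fun p : B × B => cxA M p.1 p.2).Finite := Set.finite_range _
  have hF := cxF_finite M
  obtain ⟨G, g1, g2, g3, g4⟩ := finite_closure_sub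
    ((fun x => -x) '' cxF M ∪ Set.range fun p : B × B => cxA M p.1 p.2)
    ((Set.image2 (fun x y => x * y) (cxF M) (Set.range fun p : B × B => cxA M p.1 p.2)) ∩
      {d | 0 ≤ d}) ((hF.image _).union hA) ((hF.image2 _ hA).inter_of_left _) (fun d hd => hd.2)
  refine ⟨G, g1, g2, ?_, ?_, ?_⟩
  · intro f hf h0
    exact g3 _ (Or.inl ⟨f, hf, rfl⟩) (by linarith)
  · intro i j
    exact g3 _ (Or.inr ⟨(i, j), rfl⟩) (cxA_ge M i j)
  · intro g hg f hf i j h0 h2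
    exact g4 g hg _ ⟨⟨f, hf, _, ⟨(i, j), rfl⟩, rfl⟩, h0⟩ h2

lemma xseq_succ (cs : CoxeterSystem M W) (s : B) (t : ℕ → B) (k : ℕ) (b : B) :
    cxQ M (bseq cs s t (k + 1)) (cxE b) = cxQ M (bseq cs s t k) (cxE b) -
      cxQ M (bseq cs s t k) (cxE (t k)) * cxA M (t k) b := by
  rw [bseq_succ, map_sub, map_smul, LinearMap.sub_apply, LinearMap.smul_apply, cxQ_E, smul_eq_mul]

lemma chain_bounded (M : CoxeterMatrix B) (cs : CoxeterSystem M W) :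
    ∃ N : ℕ, ∀ s t n, CxChain cs s t n → n ≤ N := by
  obtain ⟨G, gfin, gge, gF, gA, gS⟩ := exists_G M
  have h3G : (-3 : ℝ) ∉ G := fun h => by have := gge _ h; linarith
  have hT : (Set.pi Set.univ (fun _ : B => insert (-3 : ℝ) G)).Finite :=
    Set.Finite.pi' (fun _ => gfin.insert _) |>.subset (by intro f hf b; exact hf b trivial)
  refine ⟨hT.toFinset.card, ?_⟩
  intro s t n h
  by_contra hn
  push Not at hn
  have C4 : ∀ k ≤ n, ∀ b, cxQ M (bseq cs s t k) (cxE b) ∈ G ∨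
      cxQ M (bseq cs s t k) (cxE b) < -2 := by
    intro k
    induction k with
    | zero => intro _ b; left; rw [bseq_zero, cxQ_E]; exact gA s b
    | succ k ih =>
      intro hk b
      have hneg := chain_neg' cs s t n h k hk
      have hF := chain_F cs s t n h k hk
      rw [xseq_succ]
      by_cases hb : b = t k
      · left
        rw [hb, cxA_self]
        have := gF _ hF hneg
        convert this using 1
        ring
      · have hd := mul_nonneg_of_nonpos_of_nonpos hneg.le (cxA_nonpos M (Ne.symm hb))
        rcases ih (by omega) b with hg | hg
        · by_cases hge : -2 ≤ cxQ M (bseq cs s t k) (cxE b) -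
            cxQ M (bseq cs s t k) (cxE (t k)) * cxA M (t k) b
          · left; exact gS _ hg _ hF _ _ hd hge
          · right; exact not_le.mp hge
        · right; linarith
  classical
  let st : ℕ → B → ℝ := fun k b =>
    if cxQ M (bseq cs s t k) (cxE b) ∈ G then cxQ M (bseq cs s t k) (cxE b) else -3
  have hst : ∀ k ∈ Finset.range (n + 1), st k ∈ hT.toFinset := by
    intro k _
    rw [Set.Finite.mem_toFinset]
    intro b _
    simp only [st]
    split_ifs with hg
    · exact Set.mem_insert_of_mem _ hg
    · exact Set.mem_insert _ _
  obtain ⟨a, ha, b, hb, hab, heq⟩ := Finset.exists_ne_map_eq_of_card_lt_of_maps_to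
    (s := Finset.range (n + 1)) (t := hT.toFinset) (by rw [Finset.card_range]; omega) hst
  have main : ∀ i j, i < j → j ≤ n → st i = st j → False := by
    intro i j hij hjn heq
    apply chain_no_repeat cs s t n h i j hij hjn
    intro k hik hkj
    have hG : cxQ M (bseq cs s t i) (cxE (t k)) ∈ G := by
      rcases C4 i (by omega) (t k) with hg | hg
      · exact hg
      · exfalso
        have stay : ∀ m, i ≤ m → m ≤ k → cxQ M (bseq cs s t m) (cxE (t k)) < -2 := by
          intro m hm
          induction m, hm using Nat.le_induction with
          | base => intro _; exact hg
          | succ m hm ih =>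
            intro hmk
            have ih := ih (by omega)
            have hF := cxF_ge M _ (chain_F cs s t n h m (by omega))
            have hneg := chain_neg' cs s t n h m (by omega)
            have hne : t m ≠ t k := by
              intro e
              rw [e] at hF
              linarith
            have hd := mul_nonneg_of_nonpos_of_nonpos hneg.le (cxA_nonpos M hne)
            rw [xseq_succ]
            linarith
        have h1 := stay k hik le_rfl
        have h2 := cxF_ge M _ (chain_F cs s t n h k (by omega))
        linarith
    have he := congrFun heq (t k)
    simp only [st, if_pos hG] at he
    split_ifs at he with hg
    · exact he
    · rw [he] at hG
      exact absurd hG h3G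
  simp only [Finset.mem_range] at ha hb
  rcases lt_or_gt_of_ne hab with hlt | hlt
  · exact main a b hlt (by omega) heq
  · exact main b a hlt (by omega) heq.symm

end

/-- For a Coxeter system with finite index set, the length of the second
component of any base is uniformly bounded. -/
theorem base_length_bounded
    [Finite B] (cs : CoxeterSystem M W) :
    ∃ N : ℕ, ∀ (s : B) (w : W), IsBase cs s w → cs.length w ≤ N := by
  classical
  cases nonempty_fintype B
  obtain ⟨N, hN⟩ := chain_bounded M cs
  refine ⟨N, fun s w h => ?_⟩
  obtain ⟨t, ht⟩ := chain_of_base cs s w h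
  exact hN s t _ ht
end

section
/- Let (W,S) be a Coxeter system with S finite and let (s,w) be a base with support J. Then the shadow of (s,w), namely the set of j ∈ J with ℓ((wj)⁻¹s(wj)) ≤ ℓ(w⁻¹sw), generates a finite subgroup of W. -/
variable {B : Type*} {W : Type*} [Group W] {M : CoxeterMatrix B}

namespace Shd

noncomputable section

/-- Entries of the canonical bilinear form. -/
def cc (M : CoxeterMatrix B) (i j : B) : ℝ := -Real.cos (Real.pi / M i j)

lemma cc_self (M : CoxeterMatrix B) (i : B) : cc M i i = 1 := by
  simp [cc]

lemma cc_symm (M : CoxeterMatrix B) (i j : B) : cc M i j = cc M j i := by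
  simp [cc, M.symmetric i j]

lemma cc_le_one (M : CoxeterMatrix B) (i j : B) : cc M i j ≤ 1 := by
  have := Real.neg_one_le_cos (Real.pi / M i j)
  unfold cc; linarith

lemma two_le_of (M : CoxeterMatrix B) {i j : B} (h : i ≠ j) (h0 : M i j ≠ 0) : 2 ≤ M i j := by
  have := M.off_diagonal i j h
  omega

lemma cc_nonpos (M : CoxeterMatrix B) {i j : B} (h : i ≠ j) : cc M i j ≤ 0 := by
  unfold cc
  rw [neg_nonpos]
  rcases eq_or_ne (M i j) 0 with h0 | h0
  · simp [h0]
  · have h2 : (2 : ℝ) ≤ M i j := by exact_mod_cast two_le_of M h h0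
    apply Real.cos_nonneg_of_neg_pi_div_two_le_of_le
    · have : 0 ≤ Real.pi / M i j := by positivity
      linarith [Real.pi_pos]
    · apply div_le_div_of_nonneg_left Real.pi_pos.le (by norm_num) h2

lemma exists_dihedral (cs : CoxeterSystem M W) (w : W) {i j : B} :
    ∀ (n : ℕ) (v : W) (k : ℕ), cs.length v = n → 1 ≤ k →
      w = v * cs.wordProd (CoxeterSystem.alternatingWord i j k) →
      cs.length w = cs.length v + k →
    ∃ v k, 1 ≤ k ∧ w = v * cs.wordProd (CoxeterSystem.alternatingWord i j k) ∧
      cs.length w = cs.length v + k ∧ ¬ cs.IsRightDescent v i ∧ ¬ cs.IsRightDescent v j := by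
  intro n
  induction n with
  | zero =>
    intro v k hv hk hw hl
    refine ⟨v, k, hk, hw, hl, ?_, ?_⟩ <;>
    · unfold CoxeterSystem.IsRightDescent; omega
  | succ n ih =>
    intro v k hv hk hw hl
    -- the next letter
    have next : ∀ a, a = (if Even k then j else i) → cs.IsRightDescent v a →
        ∃ v k, 1 ≤ k ∧ w = v * cs.wordProd (CoxeterSystem.alternatingWord i j k) ∧
      cs.length w = cs.length v + k ∧ ¬ cs.IsRightDescent v i ∧ ¬ cs.IsRightDescent v j := by
      intro a ha hd
      have hd' := cs.isRightDescent_iff.mp hd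
      refine ih (v * cs.simple a) (k + 1) (by omega) (by omega) ?_ (by omega)
      rw [CoxeterSystem.alternatingWord_succ', cs.wordProd_cons, ← ha, hw]
      simp [mul_assoc]
    have prev : ∀ a, a = (if Even k then i else j) → ¬ cs.IsRightDescent v a := by
      intro a ha hd
      have hd' := cs.isRightDescent_iff.mp hd
      obtain ⟨m, rfl⟩ : ∃ m, k = m + 1 := ⟨k - 1, by omega⟩
      have ha' : a = if Even m then j else i := by
        rw [ha]; by_cases hm : Even m <;> simp [hm, Nat.even_add_one]
      rw [CoxeterSystem.alternatingWord_succ', cs.wordProd_cons, ← ha', ← mul_assoc] at hw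
      have h1 := cs.length_mul_le (v * cs.simple a)
        (cs.wordProd (CoxeterSystem.alternatingWord i j m))
      have h2 := cs.length_wordProd_le (CoxeterSystem.alternatingWord i j m)
      rw [CoxeterSystem.length_alternatingWord] at h2
      rw [← hw] at h1
      omega
    by_cases hi : cs.IsRightDescent v i
    · by_cases hk' : Even k
      · exact absurd hi (prev i (by simp [hk']))
      · exact next i (by simp [hk']) hi
    · by_cases hj : cs.IsRightDescent v j
      · by_cases hk' : Even k
        · exact next j (by simp [hk']) hj
        · exact absurd hj (prev j (by simp [hk']))
      · exact ⟨v, k, hk, hw, hl, hi, hj⟩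

variable [Fintype B] [DecidableEq B]

/-- simple root -/
def al (i : B) : B → ℝ := Pi.single i 1

/-- canonical bilinear form -/
def bf (M : CoxeterMatrix B) : LinearMap.BilinForm ℝ (B → ℝ) :=
  Matrix.toBilin' (Matrix.of (cc M))

lemma bf_apply (x y : B → ℝ) : bf M x y = ∑ i, ∑ j, x i * cc M i j * y j := by
  simp [bf, Matrix.toBilin'_apply]

lemma bf_al (i j : B) : bf M (al i) (al j) = cc M i j := by
  simp [bf, al, Matrix.toBilin'_single]

lemma bf_symm (x y : B → ℝ) : bf M x y = bf M y x := by
  rw [bf_apply, bf_apply, Finset.sum_comm]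
  refine Finset.sum_congr rfl fun i _ => Finset.sum_congr rfl fun j _ => ?_
  rw [cc_symm]; ring

lemma bf_al_left (i : B) (y : B → ℝ) : bf M (al i) y = ∑ j, cc M i j * y j := by
  simp [bf_apply, al, Pi.single_apply]

lemma bf_eq_sum (x y : B → ℝ) : bf M x y = ∑ i, x i * bf M (al i) y := by
  simp_rw [bf_apply x y, bf_al_left, Finset.mul_sum, mul_assoc]

lemma al_refl (M : CoxeterMatrix B) (i : B) : ((2 : ℝ) • bf M (al i)) (al i) = 2 := by
  simp [bf_al, cc_self]

/-- simple reflection -/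
def sg (M : CoxeterMatrix B) (i : B) : (B → ℝ) ≃ₗ[ℝ] (B → ℝ) := Module.reflection (al_refl M i)

lemma sg_apply (i : B) (x : B → ℝ) : sg M i x = x - (2 * bf M (al i) x) • al i := by
  simp [sg, Module.reflection_apply]

open Polynomial.Chebyshev in
lemma sg_liftable (M : CoxeterMatrix B) : M.IsLiftable (sg M) := by
  intro i j
  rcases eq_or_ne i j with rfl | hij
  · rw [M.diagonal, pow_one]
    ext1 x
    exact Module.involutive_reflection (al_refl M i) x
  rcases eq_or_ne (M i j) 0 with h0 | h0
  · rw [h0, pow_zero]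
  have h2 := two_le_of M hij h0
  have hfy : ((2 : ℝ) • bf M (al i)) (al j) = 2 * cc M i j := by simp [bf_al]
  have hgx : ((2 : ℝ) • bf M (al j)) (al i) = 2 * cc M i j := by simp [bf_al, cc_symm M j i]
  ext1 z
  have key := Module.reflection_mul_reflection_pow_apply (al_refl M i) (al_refl M j) (M i j) z
    _ rfl
  change ((sg M i * sg M j) ^ (M i j)) z = _ at key
  rw [key, hfy, hgx]
  rcases h2.eq_or_lt with h2 | h3
  · have hc : cc M i j = 0 := by simp [cc, ← h2]
    rw [← h2, hc]
    norm_num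
    simp only [add_assoc]
    simp
  set θ : ℝ := Real.pi / M i j with hθ
  have hm0 : ((M i j : ℕ) : ℝ) ≠ 0 := by exact_mod_cast h0
  have hm3 : (3 : ℝ) ≤ M i j := by exact_mod_cast h3
  have hmθ : (M i j : ℝ) * θ = Real.pi := by rw [hθ]; field_simp
  have hθ0 : 0 < θ := by rw [hθ]; have := Real.pi_pos; positivity
  have hs : Real.sin (2 * θ) ≠ 0 := by
    apply ne_of_gt
    apply Real.sin_pos_of_pos_of_lt_pi
    · linarith
    · nlinarith
  have ht : 2 * cc M i j * (2 * cc M i j) - 2 = 2 * Real.cos (2 * θ) := by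
    rw [Real.cos_two_mul]; unfold cc; ring
  rw [ht]
  have hS : ∀ n : ℤ, (S ℝ n).eval (2 * Real.cos (2 * θ)) * Real.sin (2 * θ)
      = Real.sin ((n + 1) * (2 * θ)) := fun n => S_two_mul_real_cos (2 * θ) n
  rcases Nat.even_or_odd' (M i j) with ⟨k, hk | hk⟩
  · have e1 : ((M i j : ℤ) - 2) / 2 = k - 1 := by omega
    have e2 : ((M i j : ℤ) - 1) / 2 = k - 1 := by omega
    have hz : (S ℝ ((k : ℤ) - 1)).eval (2 * Real.cos (2 * θ)) = 0 := by
      have := hS (k - 1)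
      have h' : (((k : ℤ) - 1 : ℤ) + 1 : ℝ) * (2 * θ) = Real.pi := by
        rw [← hmθ, hk]; push_cast; ring
      rw [h', Real.sin_pi] at this
      exact (mul_eq_zero.mp this).resolve_right hs
    rw [e1, e2, hz]
    simp
  · have e1 : ((M i j : ℤ) - 2) / 2 = k - 1 := by omega
    have e2 : ((M i j : ℤ) - 1) / 2 = k := by omega
    have e3 : ((M i j : ℤ) - 3) / 2 = k - 1 := by omega
    have e4 : ((M i j : ℤ)) / 2 = k := by omega
    have hz : (S ℝ (k : ℤ)).eval (2 * Real.cos (2 * θ)) +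
        (S ℝ ((k : ℤ) - 1)).eval (2 * Real.cos (2 * θ)) = 0 := by
      have h1 := hS (k - 1)
      have h2 := hS k
      have hkθ : (2 * k + 1 : ℝ) * θ = Real.pi := by
        rw [← hmθ, hk]; push_cast; ring
      have h' : (((k : ℤ) - 1 : ℤ) + 1 : ℝ) * (2 * θ) = Real.pi - θ := by
        rw [← hkθ]; push_cast; ring
      have h'' : (((k : ℤ) : ℝ) + 1 : ℝ) * (2 * θ) = θ + Real.pi := by
        rw [← hkθ]; push_cast; ring
      rw [h', Real.sin_pi_sub] at h1
      rw [h'', Real.sin_add_pi] at h2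
      have : ((S ℝ (k : ℤ)).eval (2 * Real.cos (2 * θ)) +
        (S ℝ ((k : ℤ) - 1)).eval (2 * Real.cos (2 * θ))) * Real.sin (2 * θ) = 0 := by
        rw [add_mul, h1, h2]; ring
      exact (mul_eq_zero.mp this).resolve_right hs
    rw [e1, e2, e3, e4, hz]
    simp

/-- geometric representation -/
def rep (cs : CoxeterSystem M W) : W →* ((B → ℝ) ≃ₗ[ℝ] (B → ℝ)) :=
  cs.lift ⟨sg M, sg_liftable M⟩

lemma rep_simple (cs : CoxeterSystem M W) (i : B) (x : B → ℝ) :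
    rep cs (cs.simple i) x = x - (2 * bf M (al i) x) • al i := by
  rw [rep, cs.lift_apply_simple, sg_apply]

lemma rep_mul (cs : CoxeterSystem M W) (u v : W) (x : B → ℝ) :
    rep cs (u * v) x = rep cs u (rep cs v x) := by
  rw [map_mul]; rfl

lemma rep_one (cs : CoxeterSystem M W) (x : B → ℝ) : rep cs 1 x = x := by
  rw [map_one]; rfl

lemma rep_al_self (cs : CoxeterSystem M W) (i : B) :
    rep cs (cs.simple i) (al i) = - al i := by
  rw [rep_simple, bf_al, cc_self]; module

lemma bf_rep (cs : CoxeterSystem M W) (w : W) : ∀ x y : B → ℝ,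
    bf M (rep cs w x) (rep cs w y) = bf M x y := by
  induction w using cs.simple_induction_left with
  | one => intro x y; simp [rep_one]
  | mul_simple_left w i ih =>
    intro x y
    rw [rep_mul, rep_mul, rep_simple, rep_simple, ← ih x y]
    generalize rep cs w x = x'
    generalize rep cs w y = y'
    simp only [map_sub, map_smul, LinearMap.sub_apply, LinearMap.smul_apply, smul_eq_mul,
      bf_al, cc_self, bf_symm x' (al i)]
    ring

/-- the coefficient sequence in dihedral groups -/
lemma exists_seq (M : CoxeterMatrix B) {i j : B} (h : i ≠ j) : ∃ x : ℕ → ℝ, x 0 = 0 ∧ x 1 = 1 ∧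
    (∀ k, x (k + 2) = -2 * cc M i j * x (k + 1) - x k) ∧
    ∀ k, (M i j = 0 ∨ k ≤ M i j) → 0 ≤ x k := by
  rcases eq_or_ne (M i j) 0 with h0 | h0
  · refine ⟨fun k => k, by simp, by simp, ?_, ?_⟩
    · intro k; simp [cc, h0]; ring
    · intro k _; positivity
  · have h2 := two_le_of M h h0
    set θ : ℝ := Real.pi / M i j with hθ
    have hm0 : ((M i j : ℕ) : ℝ) ≠ 0 := by exact_mod_cast h0
    have hm2 : (2 : ℝ) ≤ M i j := by exact_mod_cast h2
    have hmθ : (M i j : ℝ) * θ = Real.pi := by rw [hθ]; field_simp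
    have hθ0 : 0 < θ := by rw [hθ]; have := Real.pi_pos; positivity
    have hs : 0 < Real.sin θ := by
      apply Real.sin_pos_of_pos_of_lt_pi hθ0
      nlinarith
    refine ⟨fun k => Real.sin (k * θ) / Real.sin θ, by simp, ?_, ?_, ?_⟩
    · simp [hs.ne']
    · intro k
      have : Real.sin ((k + 2 : ℕ) * θ) = 2 * Real.cos θ * Real.sin ((k + 1 : ℕ) * θ)
          - Real.sin (k * θ) := by
        have e1 : ((k + 2 : ℕ) : ℝ) * θ = (k + 1 : ℕ) * θ + θ := by push_cast; ring
        have e2 : (k : ℝ) * θ = (k + 1 : ℕ) * θ - θ := by push_cast; ring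
        rw [e1, e2, Real.sin_add, Real.sin_sub]; ring
      beta_reduce
      rw [this]
      have : cc M i j = - Real.cos θ := rfl
      rw [this]
      ring
    · intro k hk
      have hk := hk.resolve_left h0
      have : (k : ℝ) ≤ M i j := by exact_mod_cast hk
      apply div_nonneg _ hs.le
      apply Real.sin_nonneg_of_nonneg_of_le_pi (by positivity)
      rw [← hmθ]
      gcongr

lemma rep_alternating (cs : CoxeterSystem M W) {i j : B} (h : i ≠ j) (k : ℕ)
    (hk : M i j = 0 ∨ k < M i j) : ∃ a b : ℝ, 0 ≤ a ∧ 0 ≤ b ∧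
    rep cs (cs.wordProd (CoxeterSystem.alternatingWord i j k)) (al i) = a • al i + b • al j := by
  obtain ⟨x, hx0, hx1, hx, hpos⟩ := exists_seq M h
  have key : ∀ k, rep cs (cs.wordProd (CoxeterSystem.alternatingWord i j k)) (al i) =
      if Even k then x (k + 1) • al i + x k • al j else x k • al i + x (k + 1) • al j := by
    intro k
    induction k with
    | zero => simp [CoxeterSystem.alternatingWord, hx0, hx1, rep_one]
    | succ k ih =>
      rw [CoxeterSystem.alternatingWord_succ', cs.wordProd_cons, rep_mul, ih]
      by_cases hev : Even k
      · have h' : ¬ Even (k + 1) := by simpa [Nat.even_add_one] using hev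
        rw [if_pos hev, if_pos hev, if_neg h', rep_simple, hx]
        simp only [map_add, map_smul, smul_eq_mul, bf_al, cc_self, cc_symm M j i]
        module
      · have h' : Even (k + 1) := by simpa [Nat.even_add_one] using hev
        rw [if_neg hev, if_neg hev, if_pos h', rep_simple, hx]
        simp only [map_add, map_smul, smul_eq_mul, bf_al, cc_self]
        module
  have p1 : 0 ≤ x k := hpos k (hk.imp id le_of_lt)
  have p2 : 0 ≤ x (k + 1) := hpos (k + 1) (hk.imp id id)
  rw [key]
  split_ifs
  · exact ⟨_, _, p2, p1, rfl⟩
  · exact ⟨_, _, p1, p2, rfl⟩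

lemma pos_aux (cs : CoxeterSystem M W) : ∀ (n : ℕ) (w : W) (i : B), cs.length w = n →
    ¬ cs.IsRightDescent w i → ∀ k, 0 ≤ rep cs w (al i) k := by
  intro n
  induction n using Nat.strong_induction_on with
  | _ n ih =>
    intro w i hn hd b
    by_cases hw : w = 1
    · subst hw
      rw [rep_one]
      simp only [al, Pi.single_apply]
      split_ifs <;> norm_num
    obtain ⟨j, hj⟩ := cs.exists_rightDescent_of_ne_one hw
    have hij : i ≠ j := by rintro rfl; exact hd hj
    have hj' := cs.isRightDescent_iff.mp hj
    obtain ⟨v, k, hk, hwv, hl, hi', hj'⟩ := exists_dihedral cs w (i := i) (j := j) _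
      (w * cs.simple j) 1 rfl le_rfl (by simp [CoxeterSystem.alternatingWord])
      (by omega)
    have hkm : M i j = 0 ∨ k < M i j := by
      by_contra hcon
      push Not at hcon
      have hnr := cs.not_isReduced_alternatingWord j i (m := k + 1)
        (by rw [M.symmetric]; exact hcon.1) (by rw [M.symmetric]; omega)
      have h1 := cs.length_wordProd_le (CoxeterSystem.alternatingWord j i (k + 1))
      unfold CoxeterSystem.IsReduced at hnr
      rw [CoxeterSystem.length_alternatingWord] at h1 hnr
      have h2 : w * cs.simple i = v * cs.wordProd (CoxeterSystem.alternatingWord j i (k + 1)) := by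
        rw [CoxeterSystem.alternatingWord_succ, cs.wordProd_concat, hwv, mul_assoc]
      have h3 := cs.length_mul_le v (cs.wordProd (CoxeterSystem.alternatingWord j i (k + 1)))
      rw [← h2] at h3
      have h4 := cs.not_isRightDescent_iff.mp hd
      omega
    obtain ⟨a, c, ha, hc, hac⟩ := rep_alternating cs hij k hkm
    rw [hwv, rep_mul, hac, map_add, map_smul, map_smul]
    have h1 := ih (cs.length v) (by omega) v i rfl hi' b
    have h2 := ih (cs.length v) (by omega) v j rfl hj' b
    simp only [Pi.add_apply, Pi.smul_apply, smul_eq_mul]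
    positivity

lemma pos_of_not_descent (cs : CoxeterSystem M W) {w : W} {i : B} (h : ¬ cs.IsRightDescent w i)
    (k : B) : 0 ≤ rep cs w (al i) k := pos_aux cs _ w i rfl h k

lemma neg_of_descent (cs : CoxeterSystem M W) {w : W} {i : B} (h : cs.IsRightDescent w i)
    (k : B) : rep cs w (al i) k ≤ 0 := by
  have := pos_of_not_descent cs (cs.isRightDescent_iff_not_isRightDescent_mul.mp h) k
  rw [rep_mul, rep_al_self, map_neg] at this
  simpa using this

lemma rep_conj (cs : CoxeterSystem M W) (s : B) (w : W) (x : B → ℝ) :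
    rep cs (w⁻¹ * cs.simple s * w) x =
      x - (2 * bf M (rep cs w⁻¹ (al s)) x) • rep cs w⁻¹ (al s) := by
  rw [rep_mul, rep_mul, rep_simple, map_sub, map_smul, ← rep_mul, inv_mul_cancel, rep_one]
  congr 3
  rw [← bf_rep cs w (rep cs w⁻¹ (al s)) x, ← rep_mul, mul_inv_cancel, rep_one]

lemma conj_inv (cs : CoxeterSystem M W) (s : B) (w : W) :
    (w⁻¹ * cs.simple s * w)⁻¹ = w⁻¹ * cs.simple s * w := by
  simp [mul_assoc]

lemma al_apply_self (i : B) : al i i = (1 : ℝ) := by simp [al]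

lemma al_apply_ne {i k : B} (h : k ≠ i) : al i k = (0 : ℝ) := by simp [al, h]

lemma length_lt_of_bf_neg (cs : CoxeterSystem M W) (r : W) (β : B → ℝ) (j : B)
    (hinv : r⁻¹ = r) (hr : ∀ x, rep cs r x = x - (2 * bf M β x) • β)
    (hβ : ∀ k, 0 ≤ β k) (hneg : bf M β (al j) < 0) :
    cs.length r < cs.length (cs.simple j * r * cs.simple j) := by
  have h1 : ¬ cs.IsRightDescent r j := by
    intro hd
    have := neg_of_descent cs hd j
    rw [hr] at this
    simp only [Pi.sub_apply, Pi.smul_apply, smul_eq_mul, al_apply_self] at this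
    nlinarith [hβ j]
  have h2 : ¬ cs.IsLeftDescent (r * cs.simple j) j := by
    intro hd
    rw [← cs.isRightDescent_inv_iff, mul_inv_rev, hinv, cs.inv_simple] at hd
    have hex : ∃ k, k ≠ j ∧ β k ≠ 0 := by
      by_contra hcon
      push Not at hcon
      have : β = β j • al j := by
        ext k
        by_cases hk : k = j
        · subst hk; simp [al_apply_self]
        · simp [hcon k hk, al_apply_ne hk]
      rw [this, map_smul] at hneg
      simp only [LinearMap.smul_apply, bf_al, cc_self, smul_eq_mul, mul_one] at hneg
      linarith [hβ j]
    obtain ⟨k, hkj, hk⟩ := hex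
    have := neg_of_descent cs hd k
    rw [rep_mul, hr, rep_simple] at this
    simp only [Pi.sub_apply, Pi.smul_apply, smul_eq_mul, al_apply_ne hkj] at this
    have hk' : 0 < β k := lt_of_le_of_ne (hβ k) (Ne.symm hk)
    nlinarith
  have h1' := cs.not_isRightDescent_iff.mp h1
  have h2' := cs.not_isLeftDescent_iff.mp h2
  rw [mul_assoc]
  omega

lemma bf_neg_of_length (cs : CoxeterSystem M W) (r : W) (β : B → ℝ) (j : B)
    (hinv : r⁻¹ = r) (hr : ∀ x, rep cs r x = x - (2 * bf M β x) • β)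
    (hβ : 0 ≤ rep cs (cs.simple j) β j)
    (hl : cs.length r + 2 ≤ cs.length (cs.simple j * r * cs.simple j)) :
    bf M β (al j) < 0 := by
  have h2 : ¬ cs.IsRightDescent (cs.simple j * r) j := by
    intro hd
    have := cs.isRightDescent_iff.mp hd
    have h3 := cs.length_simple_mul r j
    omega
  have := pos_of_not_descent cs h2 j
  rw [rep_mul, hr, map_sub, map_smul, rep_al_self] at this
  simp only [Pi.sub_apply, Pi.neg_apply, Pi.smul_apply, smul_eq_mul, al_apply_self] at this
  by_contra hcon
  push Not at hcon
  nlinarith [mul_nonneg hcon hβ]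

lemma base_root_nonneg (cs : CoxeterSystem M W) (s : B) (w : W)
    (h : cs.length (w⁻¹ * cs.simple s * w) = 2 * cs.length w + 1) (k : B) :
    0 ≤ rep cs w⁻¹ (al s) k := by
  apply pos_of_not_descent
  intro hd
  have h1 := cs.isRightDescent_iff.mp hd
  have h2 := cs.length_mul_le (w⁻¹ * cs.simple s) w
  rw [cs.length_inv] at h1
  omega

lemma base_root_support (cs : CoxeterSystem M W) (s : B) : ∀ (n : ℕ) (w : W), cs.length w = n →
    cs.length (w⁻¹ * cs.simple s * w) = 2 * cs.length w + 1 →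
    rep cs w⁻¹ (al s) s ≠ 0 ∧
    w ∈ Subgroup.closure (cs.simple '' {k | rep cs w⁻¹ (al s) k ≠ 0}) ∧
    ∀ y : B → ℝ, (∀ k l, rep cs w⁻¹ (al s) k ≠ 0 → rep cs w⁻¹ (al s) l ≠ 0 → cc M k l ≠ 0 →
      y k = y l) → ∀ k, rep cs w⁻¹ (al s) k ≠ 0 → y k = y s := by
  intro n
  induction n with
  | zero =>
    intro w hn hw
    rw [cs.length_eq_zero_iff] at hn
    subst hn
    rw [inv_one, rep_one]
    refine ⟨by simp [al_apply_self], Subgroup.one_mem _, ?_⟩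
    intro y _ k hk
    by_cases hks : k = s
    · rw [hks]
    · exact absurd (al_apply_ne hks) hk
  | succ n ih =>
    intro w hn hw
    have hw1 : w ≠ 1 := by
      rintro rfl
      simp at hn
    obtain ⟨j, hj⟩ := cs.exists_rightDescent_of_ne_one hw1
    have hj' := cs.isRightDescent_iff.mp hj
    obtain ⟨v, rfl⟩ : ∃ v, w = v * cs.simple j := ⟨w * cs.simple j, by simp⟩
    rw [cs.simple_mul_simple_cancel_right] at hj'
    have hconj : (v * cs.simple j)⁻¹ * cs.simple s * (v * cs.simple j) =
        cs.simple j * (v⁻¹ * cs.simple s * v) * cs.simple j := by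
      rw [mul_inv_rev, cs.inv_simple]; simp only [mul_assoc]
    have hnn := base_root_nonneg cs s _ hw
    have hrep : rep cs (v * cs.simple j)⁻¹ (al s) =
        rep cs (cs.simple j) (rep cs v⁻¹ (al s)) := by
      rw [mul_inv_rev, cs.inv_simple, rep_mul]
    rw [hconj] at hw
    have hlv : cs.length (v⁻¹ * cs.simple s * v) = 2 * cs.length v + 1 := by
      have a1 := cs.length_mul_le (v⁻¹ * cs.simple s) v
      have a2 := cs.length_mul_le v⁻¹ (cs.simple s)
      have a3 := cs.length_simple_mul (v⁻¹ * cs.simple s * v) j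
      have a4 := cs.length_mul_simple (cs.simple j * (v⁻¹ * cs.simple s * v)) j
      rw [cs.length_inv, cs.length_simple] at a2
      omega
    have hnv := base_root_nonneg cs s _ hlv
    obtain ⟨i1, i2, i3⟩ := ih v (by omega) hlv
    rw [hrep] at hnn ⊢
    have hneg := bf_neg_of_length cs _ _ j (conj_inv cs s v) (rep_conj cs s v) (hnn j) (by omega)
    set β := rep cs v⁻¹ (al s) with hβ
    have hco : ∀ k, rep cs (cs.simple j) β k = β k + (-(2 * bf M β (al j))) * al j k := by
      intro k
      rw [rep_simple, bf_symm (al j)]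
      simp only [Pi.sub_apply, Pi.smul_apply, smul_eq_mul]
      ring
    have hmono : ∀ k, β k ≠ 0 → rep cs (cs.simple j) β k ≠ 0 := by
      intro k hk
      rw [hco]
      by_cases hkj : k = j
      · subst hkj
        rw [al_apply_self]
        have := hnv k
        apply ne_of_gt
        linarith
      · rw [al_apply_ne hkj]; simpa using hk
    have hjj : rep cs (cs.simple j) β j ≠ 0 := by
      rw [hco, al_apply_self]
      have := hnv j
      apply ne_of_gt
      linarith
    refine ⟨hmono s i1, ?_, ?_⟩
    · apply Subgroup.mul_mem
      · exact Subgroup.closure_mono (Set.image_mono hmono) i2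
      · exact Subgroup.subset_closure ⟨j, hjj, rfl⟩
    · intro y hy k hk
      have hv := i3 y (fun k l hk hl => hy k l (hmono k hk) (hmono l hl))
      by_cases hkv : β k ≠ 0
      · exact hv k hkv
      push Not at hkv
      have hkj : k = j := by
        by_contra hne
        apply hk
        rw [hco, hkv, al_apply_ne hne]; simp
      subst hkj
      -- find a neighbour
      have : ∃ l, β l ≠ 0 ∧ cc M k l ≠ 0 := by
        by_contra hcon
        push Not at hcon
        rw [bf_symm, bf_al_left] at hneg
        apply hneg.ne
        apply Finset.sum_eq_zero
        intro l _
        by_cases hl : β l = 0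
        · simp [hl]
        · simp [hcon l hl]
      obtain ⟨l, hl, hc⟩ := this
      rw [hy k l hk (hmono l hl) hc]
      exact hv l hl

lemma vinberg_identity (β y : B → ℝ) :
    bf M (fun k => y k * β k) (fun k => y k * β k) =
      ∑ k, y k ^ 2 * β k * bf M (al k) β +
        (1 / 2) * ∑ k, ∑ l, - (cc M k l * β k * β l * (y k - y l) ^ 2) := by
  have e1 : ∑ k, y k ^ 2 * β k * bf M (al k) β = ∑ k, ∑ l, cc M k l * β k * β l * y k ^ 2 := by
    refine Finset.sum_congr rfl fun k _ => ?_
    rw [bf_al_left, Finset.mul_sum]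
    refine Finset.sum_congr rfl fun l _ => ?_
    ring
  have e2 : ∑ k, ∑ l, cc M k l * β k * β l * y k ^ 2 =
      ∑ k, ∑ l, cc M k l * β k * β l * y l ^ 2 := by
    rw [Finset.sum_comm]
    refine Finset.sum_congr rfl fun k _ => Finset.sum_congr rfl fun l _ => ?_
    rw [cc_symm]; ring
  have e3 : ∑ k, y k ^ 2 * β k * bf M (al k) β =
      (1 / 2) * ∑ k, ∑ l, (cc M k l * β k * β l * y k ^ 2 + cc M k l * β k * β l * y l ^ 2) := by
    simp_rw [Finset.sum_add_distrib]
    rw [← e2, e1]; ring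
  rw [e3, ← mul_add, ← Finset.sum_add_distrib, bf_apply, Finset.mul_sum]
  refine Finset.sum_congr rfl fun k _ => ?_
  rw [← Finset.sum_add_distrib, Finset.mul_sum]
  refine Finset.sum_congr rfl fun l _ => ?_
  ring

lemma vinberg (β : B → ℝ) (hβ : ∀ k, 0 ≤ β k) (hββ : bf M β β ≠ 0) (s : B)
    (hconn : ∀ y : B → ℝ, (∀ k l, β k ≠ 0 → β l ≠ 0 → cc M k l ≠ 0 →
      y k = y l) → ∀ k, β k ≠ 0 → y k = y s)
    (x : B → ℝ) (hx0 : x ≠ 0) (hx : ∀ k, x k ≠ 0 → β k ≠ 0 ∧ 0 ≤ bf M β (al k)) :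
    0 < bf M x x := by
  set y : B → ℝ := fun k => x k / β k with hy
  have hxy : x = fun k => y k * β k := by
    ext k
    by_cases hk : x k = 0
    · simp [hy, hk]
    · have := (hx k hk).1
      simp only [hy]; field_simp
  have hyx : ∀ k, y k ≠ 0 → x k ≠ 0 := by
    intro k hk h0
    apply hk; simp [hy, h0]
  have t1 : ∀ k, 0 ≤ y k ^ 2 * β k * bf M (al k) β := by
    intro k
    by_cases hk : y k = 0
    · simp [hk]
    · have := (hx k (hyx k hk)).2
      rw [bf_symm] at this
      have := hβ k
      positivity
  have t2 : ∀ k l, 0 ≤ - (cc M k l * β k * β l * (y k - y l) ^ 2) := by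
    intro k l
    by_cases hkl : k = l
    · subst hkl; simp
    · have h1 : 0 ≤ - cc M k l := by linarith [cc_nonpos M hkl]
      have h2 := hβ k
      have h3 := hβ l
      have : 0 ≤ (- cc M k l) * β k * β l * (y k - y l) ^ 2 := by positivity
      linarith
  have s1 : 0 ≤ ∑ k, y k ^ 2 * β k * bf M (al k) β := Finset.sum_nonneg fun k _ => t1 k
  have s2 : 0 ≤ ∑ k, ∑ l, - (cc M k l * β k * β l * (y k - y l) ^ 2) :=
    Finset.sum_nonneg fun k _ => Finset.sum_nonneg fun l _ => t2 k l
  have hid := vinberg_identity (M := M) β y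
  rw [← hxy] at hid
  by_contra hcon
  push Not at hcon
  have z1 : ∑ k, y k ^ 2 * β k * bf M (al k) β = 0 := by linarith
  have z2 : ∑ k, ∑ l, - (cc M k l * β k * β l * (y k - y l) ^ 2) = 0 := by linarith
  rw [Finset.sum_eq_zero_iff_of_nonneg (fun k _ => t1 k)] at z1
  rw [Finset.sum_eq_zero_iff_of_nonneg (fun k _ => Finset.sum_nonneg fun l _ => t2 k l)] at z2
  have hc := hconn y (by
    intro k l hk hl hkl
    have := z2 k (Finset.mem_univ k)
    rw [Finset.sum_eq_zero_iff_of_nonneg (fun l _ => t2 k l)] at this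
    have := this l (Finset.mem_univ l)
    simp only [neg_eq_zero, mul_eq_zero, hk, hl, hkl, false_or] at this
    have := pow_eq_zero_iff (two_ne_zero) |>.mp this
    linarith)
  obtain ⟨k, hk⟩ := Function.ne_iff.mp hx0
  simp only [Pi.zero_apply] at hk
  have hys : y s ≠ 0 := by
    rw [← hc k (hx k hk).1]
    simp only [hy]
    exact div_ne_zero hk (hx k hk).1
  apply hββ
  rw [bf_eq_sum]
  apply Finset.sum_eq_zero
  intro l _
  by_cases hl : β l = 0
  · simp [hl]
  have := z1 l (Finset.mem_univ l)
  rw [hc l hl, mul_assoc] at this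
  exact (mul_eq_zero.mp this).resolve_left (pow_ne_zero 2 hys)

/-- positive definite form implies finite group -/
lemma finite_of_posDef (cs : CoxeterSystem M W) (hpd : ∀ x : B → ℝ, x ≠ 0 → 0 < bf M x x) :
    Finite W := by
  let T : (B → ℝ) →ₗ[ℝ] (B → ℝ) := LinearMap.pi fun i => bf M (al i)
  have hT : ∀ x i, T x i = bf M (al i) x := fun x i => rfl
  have hinj : Function.Injective T := by
    rw [injective_iff_map_eq_zero]
    intro x hx
    by_contra h0
    have := hpd x h0
    rw [bf_eq_sum] at this
    apply this.ne'
    apply Finset.sum_eq_zero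
    intro i _
    rw [← hT, hx]; simp
  obtain ⟨p, hp⟩ := LinearMap.injective_iff_surjective.mp hinj (fun _ => 1)
  have hp' : ∀ i, bf M (al i) p = 1 := fun i => by rw [← hT, hp]
  have hpsd : ∀ x : B → ℝ, 0 ≤ bf M x x := by
    intro x
    by_cases hx : x = 0
    · simp [hx]
    · exact (hpd x hx).le
  have hlow : ∀ (n : ℕ) (w : W), cs.length w = n → 2 * (n : ℝ) ≤ bf M p p - bf M p (rep cs w p) := by
    intro n
    induction n with
    | zero =>
      intro w hw
      rw [cs.length_eq_zero_iff] at hw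
      subst hw
      simp [rep_one]
    | succ n ih =>
      intro w hn
      have hw1 : w ≠ 1 := by
        rintro rfl
        simp at hn
      obtain ⟨j, hj⟩ := cs.exists_rightDescent_of_ne_one hw1
      have hj' := cs.isRightDescent_iff.mp hj
      have hnd := cs.isRightDescent_iff_not_isRightDescent_mul.mp hj
      obtain ⟨v, rfl⟩ : ∃ v, w = v * cs.simple j := ⟨w * cs.simple j, by simp⟩
      rw [cs.simple_mul_simple_cancel_right] at hj' hnd
      have h1 := ih v (by omega)
      have hpos := pos_of_not_descent cs hnd
      set γ := rep cs v (al j) with hγ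
      have hnorm : bf M γ γ = 1 := by rw [hγ, bf_rep, bf_al, cc_self]
      have hpγ : bf M p γ = ∑ k, γ k := by
        rw [bf_symm, bf_eq_sum]; simp [hp']
      have hle : bf M γ γ ≤ (∑ k, γ k) * ∑ k, γ k := by
        rw [bf_apply, Finset.sum_mul_sum]
        refine Finset.sum_le_sum fun k _ => Finset.sum_le_sum fun l _ => ?_
        have := mul_le_mul_of_nonneg_left (cc_le_one M k l) (mul_nonneg (hpos k) (hpos l))
        linarith
      have hs0 : 0 ≤ ∑ k, γ k := Finset.sum_nonneg fun k _ => hpos k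
      have hs1 : 1 ≤ ∑ k, γ k := by nlinarith
      rw [rep_mul, rep_simple, hp', map_sub, map_smul, ← hγ, map_sub, map_smul, hpγ]
      simp only [smul_eq_mul]
      push_cast
      linarith
  have hup : ∀ w : W, (cs.length w : ℝ) ≤ bf M p p := by
    intro w
    have h1 := hlow _ w rfl
    have h2 := hpsd (p + rep cs w p)
    simp only [map_add, LinearMap.add_apply, bf_rep, bf_symm (rep cs w p) p] at h2
    linarith
  obtain ⟨N, hN⟩ := exists_nat_ge (bf M p p)
  have hlen : ∀ w : W, cs.length w ≤ N := fun w => by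
    exact_mod_cast (hup w).trans hN
  have hfin : (cs.wordProd '' {l : List B | l.length ≤ N}).Finite :=
    (List.finite_length_le B N).image _
  rw [← Set.finite_univ_iff]
  refine hfin.subset fun w _ => ?_
  obtain ⟨l, hl, rfl⟩ := cs.exists_isReduced w
  refine ⟨l, ?_, rfl⟩
  have := hlen (cs.wordProd l)
  rw [hl.eq] at this
  exact this

end

noncomputable section

/-- Restriction of a Coxeter matrix. -/
def restr (M : CoxeterMatrix B) (K : Set B) : CoxeterMatrix K where
  M := Matrix.of fun i j => M i j
  isSymm := by
    ext i j
    exact M.symmetric _ _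
  diagonal i := M.diagonal _
  off_diagonal i j h := M.off_diagonal _ _ (fun h' => h (Subtype.ext h'))

lemma finite_closure_of_posDef [Fintype B] [DecidableEq B] (cs : CoxeterSystem M W) (K : Set B)
    (hpd : ∀ x : B → ℝ, x ≠ 0 → (∀ k, x k ≠ 0 → k ∈ K) → 0 < bf M x x) :
    (Subgroup.closure (cs.simple '' K) : Set W).Finite := by
  classical
  let cK := (restr M K).toCoxeterSystem
  have hfin : Finite (restr M K).Group := by
    apply finite_of_posDef cK
    intro x hx
    let x' : B → ℝ := fun i => if h : i ∈ K then x ⟨i, h⟩ else 0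
    have hx' : ∀ i : K, x' i = x i := fun i => by simp [x']
    have hx0 : ∀ i, i ∉ K → x' i = 0 := fun i hi => by simp [x', hi]
    have heq : bf (restr M K) x x = bf M x' x' := by
      rw [bf_apply, bf_apply]
      refine Fintype.sum_of_injective (Subtype.val : K → B) Subtype.val_injective _ _ ?_ ?_
      · intro i hi
        simp at hi
        simp [hx0 i hi]
      · intro i
        refine Fintype.sum_of_injective (Subtype.val : K → B) Subtype.val_injective _ _ ?_ ?_
        · intro j hj
          simp at hj
          simp [hx0 j hj]
        · intro j
          rw [hx', hx']
          rfl
    rw [heq]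
    apply hpd
    · intro h0
      apply hx
      ext i
      rw [← hx', h0]; rfl
    · intro k hk
      by_contra hkK
      exact hk (hx0 k hkK)
  have hlift : (restr M K).IsLiftable (fun i : K => cs.simple i) := by
    intro i j
    exact cs.simple_mul_simple_pow _ _
  let φ : (restr M K).Group →* W := cK.lift ⟨_, hlift⟩
  have hsub : (Subgroup.closure (cs.simple '' K) : Set W) ⊆ Set.range φ := by
    rw [← MonoidHom.coe_range]
    have : Subgroup.closure (cs.simple '' K) ≤ φ.range := by
      rw [Subgroup.closure_le]
      rintro _ ⟨k, hk, rfl⟩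
      exact ⟨cK.simple ⟨k, hk⟩, cK.lift_apply_simple hlift _⟩
    exact this
  exact (Set.finite_range φ).subset hsub

end

end Shd

/-- The shadow of a base generates a finite subgroup. -/
theorem shadow_spherical
    [Finite B] (cs : CoxeterSystem M W) (s : B) (w : W)
    (hbase : IsBase cs s w) (J : Set B) (hJ : IsSupport cs s w J) :
    (Subgroup.closure (cs.simple '' shadow cs s w J) : Set W).Finite := by
  classical
  have := Fintype.ofFinite B
  obtain ⟨hlen, -⟩ := hbase
  obtain ⟨h1, h2, h3⟩ := Shd.base_root_support cs s _ w rfl hlen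
  have hnn := Shd.base_root_nonneg cs s w hlen
  have hJs := hJ.2.2 _ h1 h2
  apply Shd.finite_closure_of_posDef
  intro x hx hxK
  refine Shd.vinberg _ hnn ?_ s h3 x hx ?_
  · rw [Shd.bf_rep, Shd.bf_al, Shd.cc_self]; norm_num
  · intro k hk
    obtain ⟨hkJ, hkl⟩ := hxK k hk
    refine ⟨hJs hkJ, ?_⟩
    by_contra hneg
    push Not at hneg
    have := Shd.length_lt_of_bf_neg cs _ _ k (Shd.conj_inv cs s w) (Shd.rep_conj cs s w) hnn hneg
    have hconj : (w * cs.simple k)⁻¹ * cs.simple s * (w * cs.simple k) =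
        cs.simple k * (w⁻¹ * cs.simple s * w) * cs.simple k := by
      rw [mul_inv_rev, cs.inv_simple]; simp only [mul_assoc]
    rw [hconj] at hkl
    omega
end

section
/- Let (W,S) be a Coxeter system with S finite, let ((s,w),m) be a complete marking with support J and shadow J̃, and let j ∈ S∖(J̃ ∪ J⊥) be such that the product s·(wjw⁻¹) has finite order. Then ((s,wj),m) is a complete marking; in particular (s,wj) is a base with some support J', m ∈ S∖J'⊥, and s·(wj)m(wj)⁻¹ has infinite order. -/
variable {B : Type*} {W : Type*} [Group W] {M : CoxeterMatrix B}

namespace GeomRep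

open Real

section Abstract

variable {V : Type*} [AddCommGroup V] [Module ℝ V]

/-- Powers of a rotation in the plane spanned by `x` and `y`. -/
lemma rot_pow (R : Module.End ℝ V) (x y : V) (θ : ℝ)
    (hx : R x = (4 * cos θ ^ 2 - 1) • x + (2 * cos θ) • y)
    (hy : R y = (-(2 * cos θ)) • x - y) (n : ℕ) :
    sin θ • (R ^ n) x = sin ((2 * n + 1) * θ) • x + sin (2 * n * θ) • y ∧
    sin θ • (R ^ n) y = (- sin (2 * n * θ)) • x - sin ((2 * n - 1) * θ) • y := by
  induction n with
  | zero => simp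
  | succ n ih =>
    have e1 : sin ((2 * n + 1) * θ) = sin (2 * n * θ) * cos θ + cos (2 * n * θ) * sin θ := by
      rw [← sin_add]; ring_nf
    have e2 : sin ((2 * n - 1) * θ) = sin (2 * n * θ) * cos θ - cos (2 * n * θ) * sin θ := by
      rw [← sin_sub]; ring_nf
    have e3 : sin (2 * ((n + 1 : ℕ) : ℝ) * θ) =
        sin (2 * n * θ) * cos (2 * θ) + cos (2 * n * θ) * sin (2 * θ) := by
      rw [← sin_add]; push_cast; ring_nf
    have e4 : sin ((2 * ((n + 1 : ℕ) : ℝ) + 1) * θ) =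
        sin (2 * n * θ) * cos (3 * θ) + cos (2 * n * θ) * sin (3 * θ) := by
      rw [← sin_add]; push_cast; ring_nf
    have e5 : sin ((2 * ((n + 1 : ℕ) : ℝ) - 1) * θ) = sin ((2 * n + 1) * θ) := by
      push_cast; ring_nf
    have hs : sin θ ^ 2 = 1 - cos θ ^ 2 := sin_sq θ
    have hs3 : sin θ ^ 3 = (1 - cos θ ^ 2) * sin θ := by rw [← hs]; ring
    rw [pow_succ', Module.End.mul_apply, Module.End.mul_apply, ← map_smul R, ← map_smul R,
      ih.1, ih.2, e5, e4, e3, e2, e1, cos_two_mul, sin_two_mul, cos_three_mul, sin_three_mul, hs3]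
    simp only [map_add, map_sub, map_smul, hx, hy]
    constructor
    · match_scalars <;> ring
    · match_scalars <;> ring

end Abstract

variable (M)

/-- The simple root. -/
noncomputable def rt (i : B) : B →₀ ℝ := Finsupp.single i 1

/-- The standard bilinear form. -/
noncomputable def bil : (B →₀ ℝ) →ₗ[ℝ] (B →₀ ℝ) →ₗ[ℝ] ℝ :=
  Finsupp.linearCombination ℝ (fun i =>
    Finsupp.linearCombination ℝ (fun j => -cos (π / (M i j : ℝ))))

lemma bil_rt (i j : B) : bil M (rt i) (rt j) = -cos (π / (M i j : ℝ)) := by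
  simp [bil, rt]

lemma bil_symm (x y : B →₀ ℝ) : bil M x y = bil M y x := by
  have : bil M = (bil M).flip := by
    ext i j
    have := bil_rt M i j
    have h2 := bil_rt M j i
    rw [M.symmetric j i] at h2
    simp only [rt] at *
    simp [this, h2]
  exact congrArg (fun f => f x y) this

lemma bil_self (i : B) : bil M (rt i) (rt i) = 1 := by
  simp [bil_rt]

lemma M_cases {i j : B} (h : i ≠ j) : M i j = 0 ∨ 2 ≤ M i j := by
  have := M.off_diagonal i j h
  omega

lemma bil_nonpos {i j : B} (h : i ≠ j) : bil M (rt i) (rt j) ≤ 0 := by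
  rw [bil_rt, neg_nonpos]
  rcases M_cases M h with h | h
  · simp [h]
  · have h' : (2 : ℝ) ≤ M i j := by exact_mod_cast h
    apply cos_nonneg_of_neg_pi_div_two_le_of_le
    · have : 0 ≤ π / (M i j : ℝ) := by positivity
      linarith [pi_pos]
    · gcongr

lemma M_eq_two {i j : B} (h : i ≠ j) (h0 : bil M (rt i) (rt j) = 0) : M i j = 2 := by
  rw [bil_rt, neg_eq_zero] at h0
  rcases M_cases M h with h | h
  · simp [h] at h0
  · rcases h.eq_or_lt with h | h
    · exact h.symm
    · exfalso
      have h' : (2 : ℝ) < M i j := by exact_mod_cast h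
      have : 0 < cos (π / (M i j : ℝ)) := by
        apply cos_pos_of_mem_Ioo
        constructor
        · have : 0 ≤ π / (M i j : ℝ) := by positivity
          linarith [pi_pos]
        · gcongr
      linarith

/-- The simple reflection. -/
noncomputable def sig (i : B) : Module.End ℝ (B →₀ ℝ) :=
  LinearMap.id - (2 : ℝ) • (bil M (rt i)).smulRight (rt i)

lemma sig_apply (i : B) (v : B →₀ ℝ) : sig M i v = v - (2 * bil M (rt i) v) • rt i := by
  simp [sig, mul_smul]

lemma sig_sq (i : B) : sig M i * sig M i = 1 := by
  ext1 j
  ext1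
  simp only [LinearMap.comp_apply, Module.End.mul_apply, sig_apply, map_sub, map_smul, bil_self,
    Module.End.one_apply]
  module

lemma liftable : M.IsLiftable (sig M) := by
  intro i j
  by_cases hij : i = j
  · subst hij
    simp [sig_sq]
  rcases M_cases M hij with h | h
  · simp [h]
  · have h2 : (2 : ℝ) ≤ M i j := by exact_mod_cast h
    have hM : (M i j : ℝ) ≠ 0 := by linarith
    set θ : ℝ := π / (M i j : ℝ) with hθ
    have hb : bil M (rt i) (rt j) = - cos θ := bil_rt M i j
    have hb' : bil M (rt j) (rt i) = - cos θ := by rw [bil_symm, hb]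
    have hs : 0 < sin θ := by
      apply sin_pos_of_pos_of_lt_pi
      · positivity
      · rw [hθ, div_lt_iff₀ (by linarith)]; nlinarith [pi_pos]
    have hMθ : (M i j : ℝ) * θ = π := by rw [hθ]; field_simp
    obtain ⟨h1, h2⟩ := rot_pow (sig M i * sig M j) (rt i) (rt j) θ
      (by
        simp only [Module.End.mul_apply, sig_apply, map_sub, map_smul, bil_self, hb, hb',
          smul_eq_mul]
        module)
      (by
        simp only [Module.End.mul_apply, sig_apply, map_sub, map_smul, bil_self, hb, hb',
          smul_eq_mul]
        module) (M i j)
    have a1 : (2 * (M i j : ℝ)) * θ = 2 * π := by linear_combination 2 * hMθ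
    have a2 : (2 * (M i j : ℝ) + 1) * θ = θ + 2 * π := by linear_combination 2 * hMθ
    have a3 : (2 * (M i j : ℝ) - 1) * θ = -θ + 2 * π := by linear_combination 2 * hMθ
    rw [a1, a2, sin_add_two_pi, sin_two_pi, zero_smul, add_zero] at h1
    rw [a1, a3, sin_add_two_pi, sin_two_pi, neg_zero, zero_smul, sin_neg] at h2
    have h1' : ((sig M i * sig M j) ^ M i j) (rt i) = rt i :=
      smul_right_injective (B →₀ ℝ) hs.ne' h1
    have h2' : ((sig M i * sig M j) ^ M i j) (rt j) = rt j := by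
      apply smul_right_injective (B →₀ ℝ) hs.ne'
      simp only [h2]; module
    ext1 k
    ext1
    simp only [LinearMap.comp_apply, Module.End.one_apply]
    generalize (Finsupp.lsingle (R := ℝ) k) (1 : ℝ) = v
    set d : ℝ := 1 - cos θ ^ 2 with hd
    have hd0 : d ≠ 0 := by rw [hd, ← sin_sq]; positivity
    set p : B →₀ ℝ := ((bil M (rt i) v + cos θ * bil M (rt j) v) / d) • rt i +
      ((bil M (rt j) v + cos θ * bil M (rt i) v) / d) • rt j with hp
    have hq : (sig M i * sig M j) (v - p) = v - p := by
      have q1 : bil M (rt i) (v - p) = 0 := by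
        simp only [hp, map_sub, map_add, map_smul, bil_self, hb, smul_eq_mul]
        field_simp
        rw [hd]; ring
      have q2 : bil M (rt j) (v - p) = 0 := by
        simp only [hp, map_sub, map_add, map_smul, bil_self, hb', smul_eq_mul]
        field_simp
        rw [hd]; ring
      rw [Module.End.mul_apply, sig_apply M j, q2, mul_zero, zero_smul, sub_zero, sig_apply, q1,
        mul_zero, zero_smul, sub_zero]
    have hq' : ∀ n : ℕ, ((sig M i * sig M j) ^ n) (v - p) = v - p := by
      intro n
      induction n with
      | zero => simp
      | succ n ih => rw [pow_succ, Module.End.mul_apply, hq, ih]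
    have hpp : ((sig M i * sig M j) ^ M i j) p = p := by
      rw [hp]; simp only [map_add, map_smul]; rw [h1', h2']
    have := congrArg₂ (· + ·) (hq' (M i j)) hpp
    simp only [← map_add, sub_add_cancel] at this
    exact this

variable {M} (cs : CoxeterSystem M W)

/-- The geometric representation. -/
noncomputable def act : W →* Module.End ℝ (B →₀ ℝ) := cs.lift ⟨sig M, liftable M⟩

lemma act_simple (i : B) : act cs (cs.simple i) = sig M i := cs.lift_apply_simple _ _

lemma act_simple_apply (i : B) (v : B →₀ ℝ) :
    act cs (cs.simple i) v = v - (2 * bil M (rt i) v) • rt i := by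
  rw [act_simple, sig_apply]

lemma act_mul (u w : W) (v : B →₀ ℝ) : act cs (u * w) v = act cs u (act cs w v) := by
  rw [map_mul, Module.End.mul_apply]

lemma act_inv_act (w : W) (v : B →₀ ℝ) : act cs w⁻¹ (act cs w v) = v := by
  rw [← act_mul, inv_mul_cancel, map_one, Module.End.one_apply]

lemma act_act_inv (w : W) (v : B →₀ ℝ) : act cs w (act cs w⁻¹ v) = v := by
  rw [← act_mul, mul_inv_cancel, map_one, Module.End.one_apply]

lemma act_simple_self (i : B) : act cs (cs.simple i) (rt i) = - rt i := by
  rw [act_simple_apply, bil_self]; module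

lemma bil_act (w : W) (x y : B →₀ ℝ) : bil M (act cs w x) (act cs w y) = bil M x y := by
  induction w using cs.simple_induction_left generalizing x y with
  | one => simp
  | mul_simple_left w i ih =>
    rw [act_mul, act_mul, act_simple_apply, act_simple_apply]
    simp only [map_sub, map_smul, LinearMap.sub_apply, LinearMap.smul_apply, bil_self, smul_eq_mul,
      ih, bil_symm M _ (rt i)]
    ring

lemma bil_act_self (w : W) (i : B) : bil M (act cs w (rt i)) (act cs w (rt i)) = 1 := by
  rw [bil_act, bil_self]

lemma act_refl (u : W) (i : B) (v : B →₀ ℝ) :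
    act cs (u * cs.simple i * u⁻¹) v =
      v - (2 * bil M (act cs u (rt i)) v) • act cs u (rt i) := by
  rw [act_mul, act_mul, act_simple_apply, map_sub, map_smul, act_act_inv,
    ← bil_act cs u (rt i), act_act_inv]

/-- Positivity. -/
def Pos (v : B →₀ ℝ) : Prop := ∀ i, 0 ≤ v i

lemma pos_rt (i : B) : Pos (rt i) := by
  intro j
  classical
  rw [rt, Finsupp.single_apply]
  split_ifs <;> simp

lemma rt_self (i : B) : rt i i = 1 := by simp [rt]
lemma rt_ne {i j : B} (h : i ≠ j) : rt i j = 0 := by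
  classical
  simp [rt, Finsupp.single_apply, h]

/-- Coefficients in dihedral groups. -/
noncomputable def pc (θ : ℝ) (k : ℕ) : ℝ := if sin θ = 0 then k else sin (k * θ) / sin θ

lemma pc_zero (θ : ℝ) : pc θ 0 = 0 := by simp [pc]
lemma pc_one (θ : ℝ) : pc θ 1 = 1 := by
  by_cases h : sin θ = 0 <;> simp [pc, h]

lemma pc_rec (m k : ℕ) (hm : m ≠ 1) :
    pc (π / m) (k + 2) = 2 * cos (π / m) * pc (π / m) (k + 1) - pc (π / m) k := by
  by_cases h : sin (π / m) = 0
  · have : m = 0 := by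
      by_contra h0
      have h2 : (2 : ℝ) ≤ m := by
        have : 2 ≤ m := by omega
        exact_mod_cast this
      have : 0 < sin (π / m) := by
        apply sin_pos_of_pos_of_lt_pi
        · positivity
        · rw [div_lt_iff₀ (by linarith)]; nlinarith [pi_pos]
      linarith
    simp [pc, this]; ring
  · simp only [pc, h, if_false]
    set θ := π / (m : ℝ)
    have e1 : sin (((k + 2 : ℕ) : ℝ) * θ) = sin (k * θ) * cos (2 * θ) + cos (k * θ) * sin (2 * θ) := by
      rw [← sin_add]; push_cast; ring_nf
    have e2 : sin (((k + 1 : ℕ) : ℝ) * θ) = sin (k * θ) * cos θ + cos (k * θ) * sin θ := by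
      rw [← sin_add]; push_cast; ring_nf
    rw [e1, e2, cos_two_mul, sin_two_mul]
    field_simp
    ring

lemma pc_nonneg (m k : ℕ) (hk : m = 0 ∨ k ≤ m) : 0 ≤ pc (π / m) k := by
  rcases hk with rfl | hk
  · simp [pc]
  · have hk' : (k : ℝ) ≤ m := by exact_mod_cast hk
    unfold pc
    split_ifs with h
    · positivity
    · rcases Nat.eq_zero_or_pos m with rfl | hm
      · simp at h
      have hm' : (1 : ℝ) ≤ m := by exact_mod_cast hm
      apply div_nonneg
      · apply sin_nonneg_of_nonneg_of_le_pi
        · positivity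
        · rw [mul_div_assoc', div_le_iff₀ (by linarith)]; nlinarith [pi_pos]
      · apply sin_nonneg_of_nonneg_of_le_pi
        · positivity
        · rw [div_le_iff₀ (by linarith)]; nlinarith [pi_pos]

lemma act_alt {a b : B} (hab : a ≠ b) (k : ℕ) :
    act cs (cs.wordProd (CoxeterSystem.alternatingWord a b k)) (rt a) =
      if Even k then pc (π / M a b) (k + 1) • rt a + pc (π / M a b) k • rt b
      else pc (π / M a b) k • rt a + pc (π / M a b) (k + 1) • rt b := by
  have hm : M a b ≠ 1 := M.off_diagonal a b hab
  have hb := bil_rt M a b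
  have hb' := bil_rt M b a
  rw [M.symmetric b a] at hb'
  induction k with
  | zero => simp [CoxeterSystem.alternatingWord, pc_zero, pc_one]
  | succ k ih =>
    rw [CoxeterSystem.alternatingWord_succ', cs.wordProd_cons, act_mul, ih,
      pc_rec (M a b) k hm]
    by_cases hk : Even k
    · have hk' : ¬ Even (k + 1) := by simpa [Nat.even_add_one] using hk
      simp only [hk, hk', if_true, if_false]
      rw [act_simple_apply]
      simp only [map_add, map_smul, hb', bil_self, smul_eq_mul]
      module
    · have hk' : Even (k + 1) := by simpa [Nat.even_add_one] using hk
      simp only [hk, hk', if_true, if_false]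
      rw [act_simple_apply]
      simp only [map_add, map_smul, hb, bil_self, smul_eq_mul]
      module

end GeomRep

namespace GeomRep
open Real
variable (cs : CoxeterSystem M W)

lemma pos_comb {x y : B →₀ ℝ} {a b : ℝ} (hx : Pos x) (hy : Pos y) (ha : 0 ≤ a) (hb : 0 ≤ b) :
    Pos (a • x + b • y) := by
  intro i
  simp only [Finsupp.add_apply, Finsupp.smul_apply, smul_eq_mul]
  have := hx i
  have := hy i
  positivity

lemma not_desc_of_alt {a b : B} (w : W) (k : ℕ)
    (hk : cs.length (w * (cs.wordProd (CoxeterSystem.alternatingWord a b (k + 1)))⁻¹) + (k + 1)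
      = cs.length w)
    (hk2 : cs.length (w * (cs.wordProd (CoxeterSystem.alternatingWord a b (k + 2)))⁻¹) + (k + 2)
      ≠ cs.length w) :
    ¬ cs.IsRightDescent (w * (cs.wordProd (CoxeterSystem.alternatingWord a b (k + 1)))⁻¹) a ∧
    ¬ cs.IsRightDescent (w * (cs.wordProd (CoxeterSystem.alternatingWord a b (k + 1)))⁻¹) b := by
  have key : ∀ k : ℕ, cs.wordProd (CoxeterSystem.alternatingWord a b (k + 1)) =
      cs.simple (if Even k then b else a) * cs.wordProd (CoxeterSystem.alternatingWord a b k) := by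
    intro k
    rw [CoxeterSystem.alternatingWord_succ', cs.wordProd_cons]
  set x := cs.wordProd (CoxeterSystem.alternatingWord a b (k + 1)) with hx
  -- first letter of x
  have h1 : ¬ cs.IsRightDescent (w * x⁻¹) (if Even k then b else a) := by
    intro h
    rw [cs.isRightDescent_iff] at h
    have e : w * x⁻¹ * cs.simple (if Even k then b else a) =
        w * (cs.wordProd (CoxeterSystem.alternatingWord a b k))⁻¹ := by
      rw [hx, key k]; simp [mul_assoc]
    rw [e] at h
    have h3 := cs.length_mul_le (w * (cs.wordProd (CoxeterSystem.alternatingWord a b k))⁻¹)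
      (cs.wordProd (CoxeterSystem.alternatingWord a b k))
    have h4 := cs.length_wordProd_le (CoxeterSystem.alternatingWord a b k)
    rw [CoxeterSystem.length_alternatingWord] at h4
    rw [inv_mul_cancel_right] at h3
    omega
  have h2 : ¬ cs.IsRightDescent (w * x⁻¹) (if Even (k + 1) then b else a) := by
    intro h
    rw [cs.isRightDescent_iff] at h
    have e : w * x⁻¹ * cs.simple (if Even (k + 1) then b else a) =
        w * (cs.wordProd (CoxeterSystem.alternatingWord a b (k + 2)))⁻¹ := by
      rw [hx, key (k + 1)]; simp [mul_assoc]
    rw [e] at h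
    omega
  by_cases hE : Even k
  · have hk' : ¬ Even (k + 1) := by simpa [Nat.even_add_one] using hE
    simp only [hE, hk', if_true, if_false] at h1 h2
    exact ⟨h2, h1⟩
  · have hk' : Even (k + 1) := by simpa [Nat.even_add_one] using hE
    simp only [hE, hk', if_true, if_false] at h1 h2
    exact ⟨h1, h2⟩

/-- The fundamental positivity theorem. -/
theorem pos_of_not_desc (w : W) (a : B) (h : ¬ cs.IsRightDescent w a) :
    Pos (act cs w (rt a)) := by
  obtain ⟨n, hn⟩ : ∃ n, cs.length w = n := ⟨_, rfl⟩
  induction n using Nat.strong_induction_on generalizing w a with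
  | _ n ih =>
  by_cases hw : w = 1
  · subst hw; simpa using pos_rt a
  obtain ⟨b, hb⟩ := cs.exists_rightDescent_of_ne_one hw
  have hab : a ≠ b := by rintro rfl; exact h hb
  classical
  let P : ℕ → Prop := fun k =>
    cs.length (w * (cs.wordProd (CoxeterSystem.alternatingWord a b (k + 1)))⁻¹) + (k + 1)
      = cs.length w
  have hP0 : P 0 := by
    simp only [P]
    simpa [CoxeterSystem.alternatingWord] using (cs.isRightDescent_iff).1 hb
  have hbd : ∀ k, P k → k ≤ n := by
    intro k hk
    simp only [P] at hk
    omega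
  obtain ⟨k, hk, hmax⟩ : ∃ k, P k ∧ ¬ P (k + 1) := by
    by_contra! hcon
    have : ∀ k, P k := fun k => Nat.rec hP0 (fun k hk => hcon k hk) k
    have := hbd _ (this (n + 1))
    omega
  obtain ⟨ha1, hb1⟩ := not_desc_of_alt cs w k hk hmax
  simp only [P] at hk
  set x := cs.wordProd (CoxeterSystem.alternatingWord a b (k + 1)) with hx
  have pa := ih _ (by omega) (w * x⁻¹) a ha1 rfl
  have pb := ih _ (by omega) (w * x⁻¹) b hb1 rfl
  have hbound : M a b = 0 ∨ k + 2 ≤ M a b := by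
    by_contra! hcon
    obtain ⟨h0, hlt⟩ := hcon
    apply cs.not_isReduced_alternatingWord b a (m := k + 2) (by rwa [M.symmetric])
      (by rwa [M.symmetric b a])
    unfold CoxeterSystem.IsReduced
    rw [CoxeterSystem.length_alternatingWord]
    apply le_antisymm
    · simpa using cs.length_wordProd_le (CoxeterSystem.alternatingWord b a (k + 2))
    · have e : w * cs.simple a =
          (w * x⁻¹) * cs.wordProd (CoxeterSystem.alternatingWord b a (k + 2)) := by
        rw [CoxeterSystem.alternatingWord_succ, cs.wordProd_concat, ← hx]
        simp [mul_assoc]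
      have := cs.length_mul_le (w * x⁻¹) (cs.wordProd (CoxeterSystem.alternatingWord b a (k + 2)))
      rw [← e, (cs.not_isRightDescent_iff).1 h] at this
      omega
  have e : act cs w (rt a) = act cs (w * x⁻¹) (act cs x (rt a)) := by
    rw [← act_mul, inv_mul_cancel_right]
  have p1 := pc_nonneg (M a b) (k + 1) (by omega)
  have p2 := pc_nonneg (M a b) (k + 1 + 1) (by omega)
  rw [e, hx, act_alt cs hab, ← hx]
  split_ifs
  · rw [map_add, map_smul, map_smul]; exact pos_comb pa pb p2 p1
  · rw [map_add, map_smul, map_smul]; exact pos_comb pa pb p1 p2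

lemma neg_of_desc (w : W) (a : B) (h : cs.IsRightDescent w a) :
    Pos (- act cs w (rt a)) := by
  have := pos_of_not_desc cs (w * cs.simple a) a
    ((cs.isRightDescent_iff_not_isRightDescent_mul).1 h)
  rwa [act_mul, act_simple_self, map_neg] at this

lemma root_ne_zero (w : W) (a : B) : act cs w (rt a) ≠ 0 := by
  intro h
  have := bil_act_self cs w a
  rw [h] at this
  simp at this

lemma eq_zero_of_pos_neg {v : B →₀ ℝ} (h : Pos v) (h' : Pos (-v)) : v = 0 := by
  ext i
  have h1 := h i
  have h2 := h' i
  simp only [Finsupp.neg_apply] at h2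
  simp only [Finsupp.zero_apply]
  linarith

lemma not_desc_of_pos {w : W} {a : B} (h : Pos (act cs w (rt a))) : ¬ cs.IsRightDescent w a :=
  fun hd => root_ne_zero cs w a (eq_zero_of_pos_neg h (neg_of_desc cs w a hd))

lemma pos_or_neg (w : W) (a : B) : Pos (act cs w (rt a)) ∨ Pos (-act cs w (rt a)) := by
  by_cases h : cs.IsRightDescent w a
  · exact Or.inr (neg_of_desc cs w a h)
  · exact Or.inl (pos_of_not_desc cs w a h)

lemma faithful {w : W} (h : ∀ v, act cs w v = v) : w = 1 := by
  by_contra hw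
  obtain ⟨b, hb⟩ := cs.exists_rightDescent_of_ne_one hw
  have := neg_of_desc cs w b hb
  rw [h] at this
  have h0 := this b
  simp only [Finsupp.neg_apply, rt_self] at h0
  linarith

lemma act_inj {u w : W} (h : ∀ v, act cs u v = act cs w v) : u = w := by
  have : w⁻¹ * u = 1 := faithful cs (fun v => by rw [act_mul, h, act_inv_act])
  exact (inv_mul_eq_one.1 this).symm

/-- Equal roots give equal reflections. -/
lemma refl_eq {u w : W} {a b : B} (h : act cs u (rt a) = act cs w (rt b)) :
    u * cs.simple a * u⁻¹ = w * cs.simple b * w⁻¹ :=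
  act_inj cs (fun v => by rw [act_refl, act_refl, h])

/-- If all coordinates of a positive root besides `m` vanish then it is the simple root. -/
lemma eq_rt_of_coord {β : B →₀ ℝ} (hβ : Pos β) (h1 : bil M β β = 1) (m : B)
    (h : ∀ i, i ≠ m → β i = 0) : β = rt m := by
  have e : β = β m • rt m := by
    ext i
    by_cases him : i = m
    · subst him; simp [rt_self]
    · simp [h i him, rt_ne (Ne.symm him)]
  have h2 : β m * β m = 1 := by
    rw [e] at h1
    simpa [bil_self, rt_self] using h1
  have h3 : β m = 1 := by nlinarith [hβ m]
  rw [e, h3, one_smul]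

/-- A simple reflection keeps positive roots positive, besides its own root. -/
lemma simple_pos {w : W} {a : B} (j : B) (h : Pos (act cs w (rt a)))
    (hne : act cs w (rt a) ≠ rt j) : Pos (act cs (cs.simple j) (act cs w (rt a))) := by
  rcases pos_or_neg cs (cs.simple j * w) a with h1 | h1
  · rwa [act_mul] at h1
  · exfalso
    apply hne
    apply eq_rt_of_coord h (bil_act_self cs w a)
    intro i hi
    have h2 := h1 i
    rw [act_mul, act_simple_apply] at h2
    simp only [Finsupp.neg_apply, Finsupp.sub_apply, Finsupp.smul_apply, rt_ne hi.symm,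
      smul_zero, sub_zero] at h2
    linarith [h i]

/-- Inversion criterion: if a positive root goes negative, then its reflection decreases length. -/
lemma length_lt_of_neg (w : W) {u : W} {a : B} (h : Pos (act cs u (rt a)))
    (hn : Pos (-act cs w (act cs u (rt a)))) :
    cs.length (w * (u * cs.simple a * u⁻¹)) < cs.length w := by
  obtain ⟨n, hn'⟩ : ∃ n, cs.length w = n := ⟨_, rfl⟩
  induction n generalizing w u a with
  | zero =>
    rw [cs.length_eq_zero_iff] at hn'
    subst hn'
    rw [map_one, Module.End.one_apply] at hn
    exact absurd (eq_zero_of_pos_neg h hn) (root_ne_zero cs u a)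
  | succ n ih =>
    have hw : w ≠ 1 := by
      rintro rfl
      simp at hn'
    obtain ⟨b, hb⟩ := cs.exists_rightDescent_of_ne_one hw
    rw [cs.isRightDescent_iff] at hb
    by_cases he : act cs u (rt a) = rt b
    · have : u * cs.simple a * u⁻¹ = 1 * cs.simple b * 1⁻¹ := refl_eq cs (by simpa using he)
      rw [this]
      simp
      omega
    · have h1 := simple_pos cs b h he
      rw [← act_mul] at h1
      have h2 := ih (w * cs.simple b) h1
        (by rw [act_mul, act_mul, ← act_mul cs (cs.simple b) (cs.simple b),
              cs.simple_mul_simple_self, map_one, Module.End.one_apply]; exact hn) (by omega)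
      have e : w * (u * cs.simple a * u⁻¹) = (w * cs.simple b * (cs.simple b * u * cs.simple a *
          (cs.simple b * u)⁻¹)) * cs.simple b := by
        simp [mul_assoc]
      rw [e]
      have h3 := cs.length_mul_le (w * cs.simple b * (cs.simple b * u * cs.simple a *
          (cs.simple b * u)⁻¹)) (cs.simple b)
      rw [cs.length_simple] at h3
      omega

lemma neg_of_length_lt (w : W) {u : W} {a : B} (h : Pos (act cs u (rt a)))
    (hl : cs.length (w * (u * cs.simple a * u⁻¹)) < cs.length w) :
    Pos (-act cs w (act cs u (rt a))) := by
  rcases pos_or_neg cs (w * u) a with h1 | h1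
  · exfalso
    have h2 := length_lt_of_neg cs (w * (u * cs.simple a * u⁻¹)) h (by
      rw [act_mul, act_refl, bil_act_self]
      have : act cs u (rt a) - (2 * 1 : ℝ) • act cs u (rt a) = - act cs u (rt a) := by module
      rw [this, map_neg, neg_neg, ← act_mul]
      exact h1)
    have e : w * (u * cs.simple a * u⁻¹) * (u * cs.simple a * u⁻¹) = w := by simp [mul_assoc]
    rw [e] at h2
    omega
  · rwa [act_mul] at h1

/-- Every reflection has a positive root. -/
lemma exists_pos_root {t : W} (ht : cs.IsReflection t) :
    ∃ (u : W) (a : B), t = u * cs.simple a * u⁻¹ ∧ Pos (act cs u (rt a)) := by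
  obtain ⟨u, a, rfl⟩ := ht
  rcases pos_or_neg cs u a with h | h
  · exact ⟨u, a, rfl, h⟩
  · refine ⟨u * cs.simple a, a, by simp [mul_assoc], ?_⟩
    rwa [act_mul, act_simple_self, map_neg]

/-- A new left inversion of `w j`. -/
lemma new_inversion {w t : W} {j : B} (ht : cs.IsReflection t)
    (h1 : cs.length (t * (w * cs.simple j)) < cs.length (w * cs.simple j))
    (h2 : ¬ cs.length (t * w) < cs.length w) : t = w * cs.simple j * w⁻¹ := by
  obtain ⟨u, a, rfl, hu⟩ := exists_pos_root cs ht
  have inv_eq : ∀ x : W, cs.length (u * cs.simple a * u⁻¹ * x) =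
      cs.length (x⁻¹ * (u * cs.simple a * u⁻¹)) := by
    intro x
    rw [← cs.length_inv]
    simp [mul_assoc]
  have n1 := neg_of_length_lt cs (w * cs.simple j)⁻¹ hu
    (by rw [← inv_eq, cs.length_inv]; exact h1)
  have p : Pos (act cs w⁻¹ (act cs u (rt a))) := by
    rcases pos_or_neg cs (w⁻¹ * u) a with h | h
    · rwa [act_mul] at h
    · rw [act_mul] at h
      have := length_lt_of_neg cs w⁻¹ hu h
      rw [← inv_eq, cs.length_inv] at this
      exact absurd this h2
  rw [mul_inv_rev, cs.inv_simple, ← act_mul, mul_assoc] at n1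
  rw [← act_mul] at p
  by_cases he : act cs (w⁻¹ * u) (rt a) = rt j
  · apply refl_eq
    rw [← he, ← act_mul, mul_inv_cancel_left]
  · have := simple_pos cs j p he
    rw [← act_mul cs (cs.simple j)] at this
    exact absurd (eq_zero_of_pos_neg this n1) (root_ne_zero cs _ _)

end GeomRep

namespace GeomRep
open Real
variable (cs : CoxeterSystem M W)

lemma rot_apply {u : W} {i m : B} (c : ℝ) (hc : bil M (act cs u (rt i)) (rt m) = -c) :
    act cs (cs.simple m * (u * cs.simple i * u⁻¹)) (rt m) =
      (4 * c ^ 2 - 1) • rt m + (2 * c) • act cs u (rt i) ∧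
    act cs (cs.simple m * (u * cs.simple i * u⁻¹)) (act cs u (rt i)) =
      (-(2 * c)) • rt m - act cs u (rt i) := by
  have hc' := hc
  rw [bil_symm] at hc'
  constructor
  · rw [act_mul, act_refl, act_simple_apply]
    simp only [map_sub, map_smul, hc, hc', bil_self, smul_eq_mul]
    module
  · rw [act_mul, act_refl, act_simple_apply]
    simp only [map_sub, map_smul, hc', bil_act_self, smul_eq_mul]
    module

lemma exists_coord {u : W} {i m : B} (h : Pos (act cs u (rt i)))
    (hne : act cs u (rt i) ≠ rt m) : ∃ b, b ≠ m ∧ 0 < act cs u (rt i) b := by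
  by_contra! hcon
  exact hne (eq_rt_of_coord h (bil_act_self cs u i) m
    (fun b hb => le_antisymm (hcon b hb) (h b)))

/-- If the roots have inner product at most `-1`, then the product of reflections has infinite
order. -/
lemma infinite_order {u : W} {i m : B} (h : Pos (act cs u (rt i)))
    (hb : bil M (act cs u (rt i)) (rt m) ≤ -1) :
    ¬ IsOfFinOrder (cs.simple m * (u * cs.simple i * u⁻¹)) := by
  obtain ⟨c, hc⟩ : ∃ c, bil M (act cs u (rt i)) (rt m) = -c := ⟨-_, (neg_neg _).symm⟩
  have hc1 : 1 ≤ c := by linarith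
  obtain ⟨h1, h2⟩ := rot_apply cs c hc
  obtain ⟨b, hbm, hbp⟩ := exists_coord cs (m := m) h (by
    intro he
    rw [he, bil_self] at hb
    linarith)
  set R := cs.simple m * (u * cs.simple i * u⁻¹) with hR
  set β := act cs u (rt i)
  have key : ∀ n : ℕ, ∃ x y : ℝ, act cs (R ^ (n + 1)) (rt m) = x • rt m + y • β ∧
      0 < y ∧ y < x := by
    intro n
    induction n with
    | zero => exact ⟨4 * c ^ 2 - 1, 2 * c, by simpa using h1, by linarith, by nlinarith⟩
    | succ n ih =>
      obtain ⟨x, y, e, hy, hxy⟩ := ih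
      refine ⟨(4 * c ^ 2 - 1) * x - 2 * c * y, 2 * c * x - y, ?_, ?_, ?_⟩
      · rw [pow_succ', act_mul, e, map_add, map_smul, map_smul, h1, h2]
        module
      · nlinarith
      · nlinarith [mul_nonneg (sub_nonneg.2 hc1) (sub_nonneg.2 hxy.le),
          mul_nonneg (mul_nonneg (sub_nonneg.2 hc1) (by linarith : (0 : ℝ) ≤ c))
            (by linarith : (0 : ℝ) ≤ x)]
  intro hfin
  rw [isOfFinOrder_iff_pow_eq_one] at hfin
  obtain ⟨n, hn, hRn⟩ := hfin
  obtain ⟨k, rfl⟩ : ∃ k, n = k + 1 := ⟨n - 1, by omega⟩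
  obtain ⟨x, y, e, hy, hxy⟩ := key k
  rw [hRn, map_one, Module.End.one_apply] at e
  have := DFunLike.congr_fun e b
  simp only [Finsupp.add_apply, Finsupp.smul_apply, rt_ne hbm.symm, smul_eq_mul] at this
  nlinarith

/-- If the roots have inner product in `(-1, 1)`, then the product of reflections has finite
order. -/
lemma finite_order {u : W} {i m : B} (h : Pos (act cs u (rt i)))
    (hb1 : -1 < bil M (act cs u (rt i)) (rt m)) (hb2 : bil M (act cs u (rt i)) (rt m) < 1) :
    IsOfFinOrder (cs.simple m * (u * cs.simple i * u⁻¹)) := by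
  obtain ⟨c, hc⟩ : ∃ c, bil M (act cs u (rt i)) (rt m) = -c := ⟨-_, (neg_neg _).symm⟩
  obtain ⟨b, hbm, hbp⟩ := exists_coord cs (m := m) h (by
    intro he
    rw [he, bil_self] at hb2
    linarith)
  set θ := arccos c with hθ
  have hcθ : cos θ = c := cos_arccos (by linarith) (by linarith)
  have hθ0 : 0 < θ := arccos_pos.2 (by linarith)
  have hθπ : θ < π := by
    rw [hθ, arccos]
    have : -(π / 2) < arcsin c := neg_pi_div_two_lt_arcsin.2 (by linarith)
    linarith
  have hs : 0 < sin θ := sin_pos_of_pos_of_lt_pi hθ0 hθπ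
  rw [← hcθ] at hc
  obtain ⟨h1, h2⟩ := rot_apply cs (cos θ) hc
  have hc' := hc
  rw [bil_symm] at hc'
  have hm0 := h m
  set R := cs.simple m * (u * cs.simple i * u⁻¹) with hR
  set β := act cs u (rt i) with hβ
  -- small angles
  have hcont : ContinuousAt (fun δ : ℝ => sin (θ + δ) - |sin δ| * β m) 0 := by fun_prop
  have hev : ∀ᶠ δ in nhds (0 : ℝ), 0 < sin (θ + δ) - |sin δ| * β m := by
    apply hcont.eventually_const_lt
    simpa using hs
  obtain ⟨ε, hε, hball⟩ := Metric.eventually_nhds_iff.1 hev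
  have hsmall : ∀ δ : ℝ, |δ| < ε → |sin δ| * β m < sin (θ + δ) := by
    intro δ hδ
    have := hball (y := δ) (by simpa using hδ)
    linarith
  -- Dirichlet approximation
  obtain ⟨N, hN⟩ := exists_nat_gt (2 * π / min ε π)
  have hmin : 0 < min ε π := lt_min hε pi_pos
  have hNpos : 0 < N := by
    have : (0 : ℝ) < N := lt_trans (by positivity) hN
    exact_mod_cast this
  obtain ⟨k, n, hn0, hnN, hkn⟩ := Real.exists_int_int_abs_mul_sub_le (θ / π) hNpos
  obtain ⟨n, rfl⟩ := Int.eq_ofNat_of_zero_le hn0.le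
  set δ : ℝ := 2 * n * θ - k * (2 * π) with hδ
  have hδs : |δ| < min ε π := by
    have e : δ = 2 * π * (((n : ℤ) : ℝ) * (θ / π) - k) := by
      rw [hδ]; field_simp; push_cast; ring
    rw [e, abs_mul, abs_of_pos (by positivity : 0 < 2 * π)]
    have hNp : (0 : ℝ) < N := by exact_mod_cast hNpos
    rw [div_lt_iff₀ hmin] at hN
    calc 2 * π * |((n : ℤ) : ℝ) * (θ / π) - k| ≤ 2 * π * (1 / (N + 1)) := by gcongr
      _ < min ε π := by
        rw [mul_one_div, div_lt_iff₀ (by positivity)]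
        nlinarith
  have hδε : |δ| < ε := lt_of_lt_of_le hδs (min_le_left _ _)
  have hδπ : |δ| < π := lt_of_lt_of_le hδs (min_le_right _ _)
  obtain ⟨e1, -⟩ := rot_pow (act cs R) (rt m) β θ h1 h2 n
  have s1 : sin (2 * n * θ) = sin δ := by
    rw [hδ, sin_sub_int_mul_two_pi]
  have s2 : sin ((2 * n + 1) * θ) = sin (θ + δ) := by
    have : θ + δ = (2 * n + 1) * θ - k * (2 * π) := by rw [hδ]; ring
    rw [this, sin_sub_int_mul_two_pi]
  rw [s1, s2, ← map_pow] at e1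
  rcases lt_trichotomy (sin δ) 0 with hd | hd | hd
  · exfalso
    have eb := DFunLike.congr_fun e1 b
    have em := DFunLike.congr_fun e1 m
    simp only [Finsupp.add_apply, Finsupp.smul_apply, rt_ne hbm.symm, rt_self, smul_eq_mul]
      at eb em
    have hsm := hsmall δ hδε
    rw [abs_of_neg hd] at hsm
    rcases pos_or_neg cs (R ^ n) m with hp | hp
    · have := hp b
      nlinarith [mul_pos (neg_pos.2 hd) hbp, mul_nonneg hs.le this]
    · have := hp m
      simp only [Finsupp.neg_apply] at this
      nlinarith [mul_nonneg hs.le this]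
  · have hδ0 : δ = 0 := by
      rw [abs_lt] at hδπ
      exact (sin_eq_zero_iff_of_lt_of_lt hδπ.1 hδπ.2).1 hd
    rw [hδ0, add_zero, sin_zero, zero_smul, add_zero] at e1
    have e2 : act cs (R ^ n) (rt m) = rt m := smul_right_injective (B →₀ ℝ) hs.ne' e1
    have e3 : R ^ n * cs.simple m * (R ^ n)⁻¹ = 1 * cs.simple m * 1⁻¹ :=
      refl_eq cs (by simpa using e2)
    have e4 : cs.simple m * R * (cs.simple m)⁻¹ = R⁻¹ := by
      rw [hR]; simp [mul_assoc]
    have e5 : cs.simple m * R ^ n * (cs.simple m)⁻¹ = (R ^ n)⁻¹ := by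
      rw [← conj_pow, e4, inv_pow]
    rw [isOfFinOrder_iff_pow_eq_one]
    refine ⟨n + n, by omega, ?_⟩
    rw [one_mul, inv_one, mul_one, mul_inv_eq_iff_eq_mul] at e3
    rw [← e3, mul_inv_cancel_right] at e5
    rw [pow_add]
    nth_rewrite 1 [e5]
    simp
  · exfalso
    have e2 : sin θ • act cs (cs.simple m * R ^ n) (rt m) =
        (- sin (θ + -δ)) • rt m + sin δ • β := by
      rw [act_mul, ← map_smul, e1, map_add, map_smul, map_smul, act_simple_self,
        act_simple_apply, hc', sin_add, sin_add, cos_neg, sin_neg]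
      module
    have eb := DFunLike.congr_fun e2 b
    have em := DFunLike.congr_fun e2 m
    simp only [Finsupp.add_apply, Finsupp.smul_apply, rt_ne hbm.symm, rt_self, smul_eq_mul]
      at eb em
    have hsm := hsmall (-δ) (by rwa [abs_neg])
    rw [sin_neg, abs_neg, abs_of_pos hd] at hsm
    rcases pos_or_neg cs (cs.simple m * R ^ n) m with hp | hp
    · have := hp m
      nlinarith [mul_nonneg hs.le this]
    · have := hp b
      simp only [Finsupp.neg_apply] at this
      nlinarith [mul_pos hd hbp, mul_nonneg hs.le this]

lemma finOrder_conj {G : Type*} [Group G] (g x : G) :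
    IsOfFinOrder (g * x * g⁻¹) ↔ IsOfFinOrder x := by
  simp only [isOfFinOrder_iff_pow_eq_one, conj_pow, conj_eq_one_iff]

/-- Two involutions generate a finite group iff their product has finite order. -/
lemma closure_finite_iff {G : Type*} [Group G] {s t : G} (hs : s * s = 1) (ht : t * t = 1) :
    (Subgroup.closure {s, t} : Set G).Finite ↔ IsOfFinOrder (s * t) := by
  constructor
  · intro h
    have : Finite (Subgroup.closure {s, t}) := h
    have hm : s * t ∈ Subgroup.closure {s, t} :=
      mul_mem (Subgroup.subset_closure (by simp)) (Subgroup.subset_closure (by simp))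
    have := isOfFinOrder_of_finite (⟨s * t, hm⟩ : Subgroup.closure {s, t})
    exact (Submonoid.isOfFinOrder_coe (H := (Subgroup.closure {s, t}).toSubmonoid)
      (x := ⟨s * t, hm⟩)).2 this
  · intro h
    have hfin : (Subgroup.zpowers (s * t) : Set G).Finite := finite_zpowers.2 h
    have hsi : s⁻¹ = s := inv_eq_of_mul_eq_one_left hs
    have hti : t⁻¹ = t := inv_eq_of_mul_eq_one_left ht
    have hc : s * (s * t) * s⁻¹ = (s * t)⁻¹ := by
      rw [mul_inv_rev, hsi, hti, ← mul_assoc, hs, one_mul]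
    have hsx : ∀ k : ℤ, s * (s * t) ^ k = (s * t) ^ (-k) * s := by
      intro k
      have : s * (s * t) ^ k * s⁻¹ = (s * t) ^ (-k) := by
        rw [← conj_zpow, hc, inv_zpow, zpow_neg]
      rw [← this]; group
    have ht' : t = s * (s * t) := by rw [← mul_assoc, hs, one_mul]
    apply (hfin.union (hfin.image (· * s))).subset
    intro g hg
    have step : ∀ x ∈ ({s, t} : Set G), ∀ y, y ∈ (Subgroup.zpowers (s * t) : Set G) ∪
      (· * s) '' (Subgroup.zpowers (s * t) : Set G) → x * y ∈ (Subgroup.zpowers (s * t) : Set G) ∪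
      (· * s) '' (Subgroup.zpowers (s * t) : Set G) := by
      rintro x hx y (⟨k, rfl⟩ | ⟨-, ⟨k, rfl⟩, rfl⟩)
      · right
        rcases hx with rfl | rfl
        · exact ⟨_, ⟨-k, rfl⟩, (hsx k).symm⟩
        · refine ⟨_, ⟨-(1 + k), rfl⟩, ?_⟩
          simp only
          rw [← hsx, zpow_one_add, ← mul_assoc, ← ht']
      · left
        rcases hx with rfl | rfl
        · refine ⟨-k, ?_⟩
          simp only
          rw [← mul_assoc, hsx, mul_assoc, hs, mul_one]
        · refine ⟨-(1 + k), ?_⟩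
          simp only
          have : x * (s * x) ^ k = s * (s * x) ^ (1 + k) := by
            rw [zpow_one_add, ← mul_assoc, ← ht']
          rw [← mul_assoc, this, hsx, mul_assoc, hs, mul_one]
    refine Subgroup.closure_induction_left (p := fun g _ => g ∈ (Subgroup.zpowers (s * t) : Set G) ∪
      (· * s) '' (Subgroup.zpowers (s * t) : Set G)) ?_ ?_ ?_ hg
    · left; exact one_mem _
    · intro x hx y _ hy
      exact step x hx y hy
    · intro x hx y _ hy
      have hxi : x⁻¹ = x := by
        rcases hx with rfl | rfl
        · exact hsi
        · exact hti
      rw [hxi]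
      exact step x hx y hy
end GeomRep

namespace GeomRep
open Real
variable (cs : CoxeterSystem M W)

/-- Elements of a parabolic subgroup do not change coordinates outside it. -/
lemma coord_of_mem {K : Set B} {x : W} (hx : x ∈ Subgroup.closure (cs.simple '' K)) {i : B}
    (hi : i ∉ K) (v : B →₀ ℝ) : act cs x v i = v i := by
  revert v
  have step : ∀ k ∈ K, ∀ v : B →₀ ℝ, act cs (cs.simple k) v i = v i := by
    intro k hk v
    have : k ≠ i := fun h => hi (h ▸ hk)
    simp [act_simple_apply, rt_ne this]
  refine Subgroup.closure_induction_left (p := fun x _ => ∀ v : B →₀ ℝ, act cs x v i = v i)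
    ?_ ?_ ?_ hx
  · intro v; simp
  · rintro _ ⟨k, hk, rfl⟩ y _ hy v
    rw [act_mul, step k hk, hy]
  · rintro _ ⟨k, hk, rfl⟩ y _ hy v
    rw [cs.inv_simple, act_mul, step k hk, hy]

lemma desc_mem {K : Set B} {x : W} (hx : x ∈ Subgroup.closure (cs.simple '' K)) {a : B}
    (ha : cs.IsRightDescent x a) : a ∈ K := by
  by_contra h
  have h1 := coord_of_mem cs hx h (rt a)
  have h2 := neg_of_desc cs x a ha a
  rw [Finsupp.neg_apply, h1, rt_self] at h2
  linarith

lemma act_refl' (w : W) (s : B) (v : B →₀ ℝ) : act cs (w⁻¹ * cs.simple s * w) v =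
    v - (2 * bil M (act cs w⁻¹ (rt s)) v) • act cs w⁻¹ (rt s) := by
  have := act_refl cs w⁻¹ s v
  rwa [inv_inv] at this

lemma pos_base {w : W} {s : B}
    (h : cs.length (w⁻¹ * cs.simple s * w) = 2 * cs.length w + 1) :
    Pos (act cs w⁻¹ (rt s)) := by
  apply pos_of_not_desc
  intro hd
  unfold CoxeterSystem.IsRightDescent at hd
  have := cs.length_mul_le (w⁻¹ * cs.simple s) w
  rw [cs.length_inv] at hd
  omega

lemma supp (s : B) (K : Set B) (w : W)
    (h : cs.length (w⁻¹ * cs.simple s * w) = 2 * cs.length w + 1)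
    (hK : ∀ i, i ∉ K → act cs w⁻¹ (rt s) i = 0) :
    s ∈ K ∧ w ∈ Subgroup.closure (cs.simple '' K) := by
  obtain ⟨n, hn⟩ : ∃ n, cs.length w = n := ⟨_, rfl⟩
  induction n generalizing w with
  | zero =>
    obtain rfl := cs.length_eq_zero_iff.1 hn
    refine ⟨?_, one_mem _⟩
    by_contra hs
    have := hK s hs
    simp [rt_self] at this
  | succ n ih =>
    have hw : w ≠ 1 := by rintro rfl; simp at hn
    obtain ⟨a, ha⟩ := cs.exists_rightDescent_of_ne_one hw
    have hla := cs.isRightDescent_iff.1 ha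
    have e1 : (w * cs.simple a)⁻¹ * cs.simple s * (w * cs.simple a) =
        cs.simple a * (w⁻¹ * cs.simple s * w) * cs.simple a := by
      simp [mul_assoc]
    have l1 : cs.length (w⁻¹ * cs.simple s * w * cs.simple a) ≤ 2 * cs.length w := by
      have q1 := cs.length_mul_le (w⁻¹ * cs.simple s) (w * cs.simple a)
      have q2 := cs.length_mul_le w⁻¹ (cs.simple s)
      rw [cs.length_inv, cs.length_simple] at q2
      rw [← mul_assoc] at q1
      omega
    have hd : cs.IsRightDescent (w⁻¹ * cs.simple s * w) a := by
      unfold CoxeterSystem.IsRightDescent; omega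
    have hu : cs.length ((w * cs.simple a)⁻¹ * cs.simple s * (w * cs.simple a)) =
        2 * cs.length (w * cs.simple a) + 1 := by
      apply le_antisymm
      · have q1 := cs.length_mul_le ((w * cs.simple a)⁻¹ * cs.simple s) (w * cs.simple a)
        have q2 := cs.length_mul_le (w * cs.simple a)⁻¹ (cs.simple s)
        rw [cs.length_inv, cs.length_simple] at q2
        omega
      · rw [e1]
        rcases cs.length_mul_simple (w⁻¹ * cs.simple s * w) a with q | q <;>
        rcases cs.length_simple_mul (w⁻¹ * cs.simple s * w * cs.simple a) a with q' | q' <;>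
        rw [← mul_assoc] at q' <;> omega
    have haK : a ∈ K := by
      by_contra hna
      have h2 := neg_of_desc cs _ a hd a
      rw [act_refl'] at h2
      simp only [Finsupp.neg_apply, Finsupp.sub_apply, Finsupp.smul_apply, hK a hna, rt_self,
        smul_eq_mul] at h2
      linarith
    obtain ⟨i1, i2⟩ := ih (w * cs.simple a) hu (by
      intro i hi
      have : a ≠ i := fun h => hi (h ▸ haK)
      rw [mul_inv_rev, cs.inv_simple, act_mul, act_simple_apply]
      simp [hK i hi, rt_ne this]) (by omega)
    refine ⟨i1, ?_⟩
    have := mul_mem i2 (Subgroup.subset_closure (Set.mem_image_of_mem cs.simple haK))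
    simpa using this

/-- If `rt j - c • β` is positive with `c > 0`, then `β = rt j`. -/
lemma eq_rt_of_sub {β : B →₀ ℝ} (hβ : Pos β) (h1 : bil M β β = 1) {j : B} {c : ℝ} (hc : 0 < c)
    (h : Pos (rt j - c • β)) : β = rt j := by
  apply eq_rt_of_coord hβ h1
  intro i hi
  have h2 := h i
  have h3 := hβ i
  simp only [Finsupp.sub_apply, Finsupp.smul_apply, rt_ne hi.symm, smul_eq_mul] at h2
  nlinarith

lemma bil_expand (β : B →₀ ℝ) (j : B) :
    bil M β (rt j) = β.sum fun i c => c * bil M (rt i) (rt j) := by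
  conv_lhs => rw [← Finsupp.sum_single β]
  have : ∀ (i : B) (c : ℝ), Finsupp.single i c = c • rt i := by
    intro i c; simp [rt]
  simp only [Finsupp.sum, map_sum, LinearMap.sum_apply, this, map_smul, LinearMap.smul_apply,
    smul_eq_mul]

lemma commute_of_bil {i j : B} (h : i ≠ j) (h0 : bil M (rt i) (rt j) = 0) :
    Commute (cs.simple i) (cs.simple j) := by
  have h2 := M_eq_two M h h0
  have := cs.simple_mul_simple_pow i j
  rw [h2, pow_two] at this
  have h3 := eq_inv_of_mul_eq_one_left this
  rw [mul_inv_rev, cs.inv_simple, cs.inv_simple] at h3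
  exact h3

end GeomRep

open GeomRep

/-- If `((s,w),m)` is a complete marking with support `J` and shadow `J̃`,
and `j ∈ S ∖ (J̃ ∪ J⊥)` is such that `s · (w j w⁻¹)` has finite order, then `((s, wj), m)`
is again a complete marking. -/
theorem extend_complete_marking_avoiding_shadow
    [Finite B] (cs : CoxeterSystem M W) (s m : B) (w : W) (J : Set B)
    (hbase : IsBase cs s w) (hJ : IsSupport cs s w J)
    (hm : m ∉ perpIn cs Set.univ J)
    (hcomplete : ¬ IsOfFinOrder (cs.simple s * (w * cs.simple m * w⁻¹)))
    (j : B) (hj1 : j ∉ shadow cs s w J) (hj2 : j ∉ perpIn cs Set.univ J)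
    (hfin : IsOfFinOrder (cs.simple s * (w * cs.simple j * w⁻¹))) :
    IsBase cs s (w * cs.simple j) ∧
      ∃ J' : Set B, IsSupport cs s (w * cs.simple j) J' ∧
        m ∉ perpIn cs Set.univ J' ∧
        ¬ IsOfFinOrder (cs.simple s *
            ((w * cs.simple j) * cs.simple m * (w * cs.simple j)⁻¹)) := by
  obtain ⟨hlen, hinv⟩ := hbase
  obtain ⟨hsJ, hwJ, hmin⟩ := hJ
  have hβ := pos_base cs hlen
  have hr := act_refl' cs w s
  have hβ1 : bil M (act cs w⁻¹ (rt s)) (act cs w⁻¹ (rt s)) = 1 := bil_act_self cs w⁻¹ s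
  have hsuppJ : ∀ i, i ∉ J → act cs w⁻¹ (rt s) i = 0 := by
    intro i hi
    rw [coord_of_mem cs (inv_mem hwJ) hi, rt_ne]
    rintro rfl
    exact hi hsJ
  have hsimp : ∀ i, cs.simple i * cs.simple i = 1 := fun i => cs.simple_mul_simple_self i
  have hconj : ∀ (x : W) (i : B), (x * cs.simple i * x⁻¹) * (x * cs.simple i * x⁻¹) = 1 := by
    intro x i
    have : (x * cs.simple i * x⁻¹) * (x * cs.simple i * x⁻¹) =
      x * (cs.simple i * cs.simple i) * x⁻¹ := by group
    rw [this, hsimp]; simp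
  -- translation of the order condition
  have hord : ∀ (x : W) (i : B), IsOfFinOrder (cs.simple s * (x * cs.simple i * x⁻¹)) ↔
      IsOfFinOrder (cs.simple i * (x⁻¹ * cs.simple s * x⁻¹⁻¹)) := by
    intro x i
    rw [← finOrder_conj x⁻¹, ← isOfFinOrder_inv_iff]
    have : (x⁻¹ * (cs.simple s * (x * cs.simple i * x⁻¹)) * x⁻¹⁻¹)⁻¹ =
        cs.simple i * (x⁻¹ * cs.simple s * x⁻¹⁻¹) := by
      simp [mul_assoc]
    rw [this]
  -- the key inequality for `j`
  have hbj : bil M (act cs w⁻¹ (rt s)) (rt j) < 0 := by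
    by_contra hge
    push Not at hge
    by_cases hjJ : j ∈ J
    · have hl : cs.length (w⁻¹ * cs.simple s * w) <
          cs.length (cs.simple j * (w⁻¹ * cs.simple s * w) * cs.simple j) := by
        by_contra hn
        apply hj1
        refine ⟨hjJ, ?_⟩
        have e : (w * cs.simple j)⁻¹ * cs.simple s * (w * cs.simple j) =
          cs.simple j * (w⁻¹ * cs.simple s * w) * cs.simple j := by simp [mul_assoc]
        rw [e]
        omega
      have hnd : ¬ cs.IsRightDescent (w⁻¹ * cs.simple s * w) j := by
        intro hd
        have h1 := cs.isRightDescent_iff.1 hd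
        have h2 := cs.length_simple_mul (w⁻¹ * cs.simple s * w * cs.simple j) j
        rw [← mul_assoc] at h2
        omega
      have hp := pos_of_not_desc cs _ _ hnd
      rcases hge.lt_or_eq with hgt | heq
      · rw [hr] at hp
        have hβj := eq_rt_of_sub hβ hβ1 (by linarith) hp
        rw [hβj, bil_self] at hp
        have := hp j
        norm_num [rt_self] at this
      · have hfix : act cs (w⁻¹ * cs.simple s * w) (rt j) = act cs 1 (rt j) := by
          rw [hr, ← heq]; simp
        have hc := refl_eq cs hfix
        have hc' : w⁻¹ * cs.simple s * w * cs.simple j = cs.simple j * (w⁻¹ * cs.simple s * w) := by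
          rw [mul_inv_eq_iff_eq_mul] at hc
          simpa using hc
        rw [← hc', mul_assoc _ (cs.simple j) (cs.simple j), hsimp, mul_one] at hl
        exact lt_irrefl _ hl
    · apply hj2
      have hz : ∀ i, act cs w⁻¹ (rt s) i ≠ 0 → bil M (rt i) (rt j) = 0 := by
        rw [bil_expand] at hge
        have hterm : ∀ i ∈ (act cs w⁻¹ (rt s)).support,
            act cs w⁻¹ (rt s) i * bil M (rt i) (rt j) ≤ 0 := by
          intro i hi
          apply mul_nonpos_of_nonneg_of_nonpos (hβ i)
          apply bil_nonpos
          rintro rfl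
          exact (Finsupp.mem_support_iff.1 hi) (hsuppJ _ hjJ)
        have h0 : (act cs w⁻¹ (rt s)).sum (fun i c => c * bil M (rt i) (rt j)) = 0 :=
          le_antisymm (Finset.sum_nonpos hterm) hge
        intro i hi
        have := (Finset.sum_eq_zero_iff_of_nonpos hterm).1 h0 i (Finsupp.mem_support_iff.2 hi)
        exact (mul_eq_zero.1 this).resolve_left hi
      have hK := supp cs s {i | act cs w⁻¹ (rt s) i ≠ 0} w hlen (by
        intro i hi; simpa using hi)
      have hJK := hmin _ hK.1 hK.2
      refine ⟨⟨Set.mem_univ _, hjJ⟩, ?_⟩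
      intro i hi
      exact (commute_of_bil cs (fun h : i = j => hjJ (h ▸ hi)) (hz i (hJK hi))).symm
  -- `w * j` is longer than `w`
  have hjne : act cs (w⁻¹ * cs.simple s * w) (rt j) ≠ rt j := by
    rw [hr]
    intro h
    have h2 : (2 * bil M (act cs w⁻¹ (rt s)) (rt j)) • act cs w⁻¹ (rt s) = 0 := by
      simpa using h
    rcases smul_eq_zero.1 h2 with h3 | h3
    · linarith
    · exact root_ne_zero cs _ _ h3
  have hp1 : Pos (act cs (w⁻¹ * cs.simple s * w) (rt j)) := by
    rw [hr]
    intro i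
    have h1 := hβ i
    have h2 := pos_rt j i
    simp only [Finsupp.sub_apply, Finsupp.smul_apply, smul_eq_mul]
    nlinarith
  have hp2 := simple_pos cs j hp1 hjne
  rw [← act_mul] at hp2
  have hl1 := cs.not_isRightDescent_iff.1 (not_desc_of_pos cs hp1)
  have hl2 := cs.not_isRightDescent_iff.1 (not_desc_of_pos cs hp2)
  have hl3 : cs.length (cs.simple j * (w⁻¹ * cs.simple s * w)) =
      cs.length (w⁻¹ * cs.simple s * w * cs.simple j) := by
    rw [← cs.length_inv (w⁻¹ * cs.simple s * w * cs.simple j)]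
    simp [mul_assoc]
  have e1 : (w * cs.simple j)⁻¹ * cs.simple s * (w * cs.simple j) =
      cs.simple j * (w⁻¹ * cs.simple s * w) * cs.simple j := by simp [mul_assoc]
  have hle : cs.length ((w * cs.simple j)⁻¹ * cs.simple s * (w * cs.simple j)) ≤
      2 * cs.length (w * cs.simple j) + 1 := by
    have q1 := cs.length_mul_le ((w * cs.simple j)⁻¹ * cs.simple s) (w * cs.simple j)
    have q2 := cs.length_mul_le (w * cs.simple j)⁻¹ (cs.simple s)
    rw [cs.length_inv, cs.length_simple] at q2
    omega
  have hwj : cs.length (w * cs.simple j) = cs.length w + 1 := by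
    rw [e1] at hle
    rcases cs.length_mul_simple w j with h | h <;> omega
  have hbase2 : cs.length ((w * cs.simple j)⁻¹ * cs.simple s * (w * cs.simple j)) =
      2 * cs.length (w * cs.simple j) + 1 := by
    rw [e1]; omega
  -- completeness
  have hnf : ¬ IsOfFinOrder (cs.simple m * (w⁻¹ * cs.simple s * w⁻¹⁻¹)) :=
    fun h => hcomplete ((hord w m).2 h)
  have hβm : act cs w⁻¹ (rt s) ≠ rt m := by
    intro h
    have h' : act cs w⁻¹ (rt s) = act cs 1 (rt m) := by rw [h]; simp
    apply hnf
    rw [refl_eq cs h']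
    simp
  have hbm : bil M (act cs w⁻¹ (rt s)) (rt m) ≤ -1 := by
    by_contra hgt
    push Not at hgt
    have hge1 : 1 ≤ bil M (act cs w⁻¹ (rt s)) (rt m) := by
      by_contra hlt
      push Not at hlt
      exact hnf (finite_order cs hβ hgt hlt)
    have hwm : ¬ cs.IsRightDescent w m := by
      intro hd
      apply hcomplete
      rw [← closure_finite_iff (hsimp s) (hconj w m)]
      apply hinv _ ⟨w, m, rfl⟩
      unfold CoxeterSystem.IsRightDescent at hd
      simpa using hd
    have hpm := pos_of_not_desc cs _ _ hwm
    have hne : act cs w (rt m) ≠ rt s := by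
      intro h
      apply hβm
      rw [← h, act_inv_act]
    have hγ := simple_pos cs s hpm hne
    rw [← act_mul] at hγ
    have hact : act cs (w⁻¹ * cs.simple s * w) (rt m) =
        act cs w⁻¹ (act cs (cs.simple s * w) (rt m)) := by
      rw [← act_mul, mul_assoc]
    rcases pos_or_neg cs (w⁻¹ * cs.simple s * w) m with hq | hq
    · rw [hr] at hq
      exact hβm (eq_rt_of_sub hβ hβ1 (by linarith) hq)
    · rw [hact] at hq
      have hl := length_lt_of_neg cs w⁻¹ hγ hq
      have hl' : cs.length ((cs.simple s * w) * cs.simple m * (cs.simple s * w)⁻¹ * w) <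
          cs.length w := by
        rw [cs.length_inv] at hl
        rw [← cs.length_inv]
        have : ((cs.simple s * w) * cs.simple m * (cs.simple s * w)⁻¹ * w)⁻¹ =
            w⁻¹ * (cs.simple s * w * cs.simple m * (cs.simple s * w)⁻¹) := by
          simp [mul_assoc]
        rwa [this]
      have hf := hinv _ ⟨cs.simple s * w, m, rfl⟩ hl'
      rw [closure_finite_iff (hsimp s) (hconj _ m)] at hf
      apply hcomplete
      rw [← isOfFinOrder_inv_iff] at hf
      have : (cs.simple s * (cs.simple s * w * cs.simple m * (cs.simple s * w)⁻¹))⁻¹ =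
          cs.simple s * (w * cs.simple m * w⁻¹) := by
        simp [mul_assoc]
      rw [this] at hf
      exact hf
  have hjm : m ≠ j := by
    rintro rfl
    exact hcomplete hfin
  have hβ' : act cs (w * cs.simple j)⁻¹ (rt s) = act cs w⁻¹ (rt s) -
      (2 * bil M (act cs w⁻¹ (rt s)) (rt j)) • rt j := by
    rw [mul_inv_rev, cs.inv_simple, act_mul, act_simple_apply, bil_symm]
  have hpos' := pos_base cs hbase2
  have hb' : bil M (act cs (w * cs.simple j)⁻¹ (rt s)) (rt m) ≤ -1 := by
    have h1 := bil_nonpos M hjm.symm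
    rw [hβ']
    simp only [map_sub, map_smul, LinearMap.sub_apply, LinearMap.smul_apply, smul_eq_mul]
    nlinarith
  have hinf := infinite_order cs hpos' hb'
  refine ⟨⟨hbase2, ?_⟩, insert j J, ⟨?_, ?_, ?_⟩, ?_, ?_⟩
  · intro t ht hlt
    by_cases h2 : cs.length (t * w) < cs.length w
    · exact hinv t ht h2
    · obtain rfl := new_inversion cs ht hlt h2
      exact (closure_finite_iff (hsimp s) (hconj w j)).2 hfin
  · exact Set.mem_insert_of_mem _ hsJ
  · apply mul_mem
    · exact Subgroup.closure_mono (Set.image_mono (Set.subset_insert _ _)) hwJ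
    · exact Subgroup.subset_closure (Set.mem_image_of_mem _ (Set.mem_insert _ _))
  · intro K hsK hwK
    have hjK : j ∈ K := by
      apply desc_mem cs hwK
      rw [cs.isRightDescent_iff, mul_assoc, hsimp, mul_one, hwj]
    apply Set.insert_subset hjK
    apply hmin K hsK
    have := mul_mem hwK (Subgroup.subset_closure (Set.mem_image_of_mem cs.simple hjK))
    rwa [mul_assoc, hsimp, mul_one] at this
  · rintro ⟨⟨-, h1⟩, h2⟩
    apply hm
    exact ⟨⟨Set.mem_univ _, fun h => h1 (Set.mem_insert_of_mem _ h)⟩,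
      fun i hi => h2 i (Set.mem_insert_of_mem _ hi)⟩
  · intro h
    exact hinf ((hord _ m).1 h)
end

section
/- Let (W,S) be a Coxeter system with S finite and twist-rigid. Let J ⊆ S be irreducible, 2-spherical and non-spherical, let K ⊆ J be spherical (possibly reducible), and let m ∈ S∖(J∪J⊥). Then at least one of the following holds: (i) m lies in the same connected component of S∖(K∪J⊥) (with respect to the adjacency graph) as some element of J∖K; or (ii) m is not adjacent to any element of J∖K, m commutes with every element of K, and J∪{m} is twist-rigid. -/
variable {B : Type*} {W : Type*} [Group W] {M : CoxeterMatrix B}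

lemma aux_spherical_mono (cs : CoxeterSystem M W) {K L : Set B} (h : K ⊆ L)
    (hL : Spherical cs L) : Spherical cs K :=
  Set.Finite.subset hL (Subgroup.closure_mono (Set.image_mono h))

lemma aux_adj_symm (cs : CoxeterSystem M W) {i j : B} (h : Adjacent cs i j) :
    Adjacent cs j i := by
  unfold Adjacent at *
  rwa [Set.pair_comm]

lemma aux_adj_of_spherical (cs : CoxeterSystem M W) {L : Set B} (hL : Spherical cs L)
    {i j : B} (hi : i ∈ L) (hj : j ∈ L) : Adjacent cs i j := by
  refine Set.Finite.subset hL (Subgroup.closure_mono ?_)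
  rintro x (rfl | rfl)
  · exact ⟨i, hi, rfl⟩
  · exact ⟨j, hj, rfl⟩

lemma aux_adj_of_commute (cs : CoxeterSystem M W) {i j : B}
    (h : Commute (cs.simple i) (cs.simple j)) : Adjacent cs i j := by
  have hfin : ({1, cs.simple i, cs.simple j, cs.simple i * cs.simple j} : Set W).Finite := by
    simp
  refine hfin.subset ?_
  intro x hx
  have hi : cs.simple i * cs.simple i = 1 := cs.simple_mul_simple_self i
  have hj : cs.simple j * cs.simple j = 1 := cs.simple_mul_simple_self j
  have hc : cs.simple j * cs.simple i = cs.simple i * cs.simple j := h.eq.symm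
  have hl : ∀ y ∈ ({1, cs.simple i, cs.simple j, cs.simple i * cs.simple j} : Set W),
      cs.simple i * y ∈ ({1, cs.simple i, cs.simple j, cs.simple i * cs.simple j} : Set W) ∧
      cs.simple j * y ∈ ({1, cs.simple i, cs.simple j, cs.simple i * cs.simple j} : Set W) := by
    rintro y (rfl | rfl | rfl | rfl)
    · simp
    · simp [hc]
    · simp
    · refine ⟨by simp, ?_⟩
      rw [← hc, ← mul_assoc, hj]
      simp
  induction hx using Subgroup.closure_induction_left with
  | one => simp
  | mul_left x hx y _ ih =>
    rcases hx with rfl | rfl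
    · exact (hl y ih).1
    · exact (hl y ih).2
  | inv_mul_cancel x hx y _ ih =>
    rcases hx with rfl | rfl
    · rw [cs.inv_simple]; exact (hl y ih).1
    · rw [cs.inv_simple]; exact (hl y ih).2

/-- An irreducible non-spherical set is not contained in `L ∪ L⊥` for `L` spherical. -/
lemma aux_exists (cs : CoxeterSystem M W) {J L : Set B} (hJ : IrreducibleSubset cs J)
    (hns : ¬ Spherical cs J) (hLJ : L ⊆ J) (hL : Spherical cs L) (hne : L.Nonempty) :
    ∃ j ∈ J, j ∉ L ∪ perpIn cs Set.univ L := by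
  by_contra! hcon
  apply hJ
  refine ⟨J \ L, L, ?_, hne, Set.disjoint_sdiff_left, Set.sdiff_union_of_subset hLJ, ?_⟩
  · by_contra h
    rw [Set.not_nonempty_iff_eq_empty, Set.sdiff_eq_empty] at h
    exact hns (aux_spherical_mono cs h hL)
  · rintro k ⟨hk, hkL⟩ l hl
    rcases hcon k hk with h | h
    · exact absurd h hkL
    · exact h.2 l hl

/-- Every element of `K` lies in an irreducible component. -/
lemma aux_component (cs : CoxeterSystem M W) {K : Set B} {k : B} (hk : k ∈ K) :
    ∃ L ⊆ K, k ∈ L ∧ IrreducibleSubset cs L ∧ K ⊆ L ∪ perpIn cs Set.univ L := by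
  let R : B → B → Prop := fun x y => y ∈ K ∧ ¬ Commute (cs.simple x) (cs.simple y)
  refine ⟨{x | x ∈ K ∧ Relation.ReflTransGen R k x}, fun x hx => hx.1,
    ⟨hk, Relation.ReflTransGen.refl⟩, ?_, ?_⟩
  · have key : ∀ A C : Set B, C.Nonempty → Disjoint A C →
        A ∪ C = {x | x ∈ K ∧ Relation.ReflTransGen R k x} →
        (∀ a ∈ A, ∀ c ∈ C, Commute (cs.simple a) (cs.simple c)) → k ∈ A → False := by
      intro A C hC hd hU hcomm hkA
      have hall : ∀ x, Relation.ReflTransGen R k x → x ∈ A := by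
        intro x hx
        induction hx with
        | refl => exact hkA
        | @tail b c hb hbc ih =>
          have : c ∈ A ∪ C := by
            rw [hU]; exact ⟨hbc.1, hb.tail hbc⟩
          rcases this with h | h
          · exact h
          · exact absurd (hcomm b ih c h) hbc.2
      obtain ⟨c, hc⟩ := hC
      have hc' : c ∈ A ∪ C := Or.inr hc
      rw [hU] at hc'
      exact Set.disjoint_left.1 hd (hall c hc'.2) hc
    rintro ⟨A, C, hA, hC, hd, hU, hcomm⟩
    have hk' : k ∈ A ∪ C := by
      rw [hU]; exact ⟨hk, Relation.ReflTransGen.refl⟩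
    rcases hk' with h | h
    · exact key A C hC hd hU hcomm h
    · exact key C A hA hd.symm (by rw [Set.union_comm]; exact hU)
        (fun a ha c hc => (hcomm c hc a ha).symm) h
  · intro x hx
    by_cases hxr : Relation.ReflTransGen R k x
    · exact Or.inl ⟨hx, hxr⟩
    · refine Or.inr ⟨⟨trivial, fun h => hxr h.2⟩, ?_⟩
      intro y hy
      by_contra hc
      exact hxr (hy.2.tail ⟨hx, fun h => hc h.symm⟩)

/-- Lemma on avoiding the shadow: let `S` be twist-rigid, `J ⊆ S`
irreducible, 2-spherical and non-spherical, `K ⊆ J` spherical, and `m ∈ S ∖ (J ∪ J⊥)`.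
Then either `m` lies in the same connected component of `S ∖ (K ∪ J⊥)` as some element of
`J ∖ K`, or `m` is not adjacent to any element of `J ∖ K`, commutes with every element of
`K`, and `J ∪ {m}` is twist-rigid. -/
theorem avoiding_shadow
    [Finite B] (cs : CoxeterSystem M W)
    (hTR : TwistRigidIn cs Set.univ)
    (J : Set B) (hJirr : IrreducibleSubset cs J) (hJ2 : TwoSpherical cs J)
    (hJns : ¬ Spherical cs J)
    (K : Set B) (hKJ : K ⊆ J) (hKsph : Spherical cs K)
    (m : B) (hm : m ∉ J ∪ perpIn cs Set.univ J) :
    (∃ j ∈ J \ K,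
        m ∈ Set.univ \ (K ∪ perpIn cs Set.univ J) ∧
        j ∈ Set.univ \ (K ∪ perpIn cs Set.univ J) ∧
        Relation.ReflTransGen
          (fun x y => x ∈ Set.univ \ (K ∪ perpIn cs Set.univ J) ∧
            y ∈ Set.univ \ (K ∪ perpIn cs Set.univ J) ∧ Adjacent cs x y) m j) ∨
    ((∀ j ∈ J \ K, ¬ Adjacent cs m j) ∧
      (∀ k ∈ K, Commute (cs.simple m) (cs.simple k)) ∧
      TwistRigidIn cs (J ∪ {m})) := by
  classical
  by_cases hi : ∃ j ∈ J \ K,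
        m ∈ Set.univ \ (K ∪ perpIn cs Set.univ J) ∧
        j ∈ Set.univ \ (K ∪ perpIn cs Set.univ J) ∧
        Relation.ReflTransGen
          (fun x y => x ∈ Set.univ \ (K ∪ perpIn cs Set.univ J) ∧
            y ∈ Set.univ \ (K ∪ perpIn cs Set.univ J) ∧ Adjacent cs x y) m j
  · exact Or.inl hi
  right
  have hmJ : m ∉ J := fun h => hm (Or.inl h)
  have hmU : m ∈ Set.univ \ (K ∪ perpIn cs Set.univ J) := by
    refine ⟨trivial, ?_⟩
    rintro (h | h)
    · exact hmJ (hKJ h)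
    · exact hm (Or.inr h)
  have hjU : ∀ j ∈ J \ K, j ∈ Set.univ \ (K ∪ perpIn cs Set.univ J) := by
    intro j hj
    refine ⟨trivial, ?_⟩
    rintro (h | h)
    · exact hj.2 h
    · exact h.1.2 hj.1
  have hnadj : ∀ j ∈ J \ K, ¬ Adjacent cs m j := fun j hj hadj =>
    hi ⟨j, hj, hmU, hjU j hj, Relation.ReflTransGen.single ⟨hmU, hjU j hj, hadj⟩⟩
  -- the main consequence of twist-rigidity
  have main : ∀ L ⊆ J, IrreducibleSubset cs L → Spherical cs L → L.Nonempty →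
      K ⊆ L ∪ perpIn cs Set.univ L → m ∈ L ∪ perpIn cs Set.univ L := by
    intro L hLJ hLi hLs hLne hKL
    by_contra hmL
    obtain ⟨j, hjJ, hjL⟩ := aux_exists cs hJirr hJns hLJ hLs hLne
    have hsub : Set.univ \ (L ∪ perpIn cs Set.univ L) ⊆
        Set.univ \ (K ∪ perpIn cs Set.univ J) := by
      rintro x ⟨_, hx⟩
      refine ⟨trivial, ?_⟩
      rintro (h | h)
      · exact hx (hKL h)
      · exact hx (Or.inr ⟨⟨trivial, fun h' => h.1.2 (hLJ h')⟩, fun l hl => h.2 l (hLJ hl)⟩)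
    have hjK : j ∈ J \ K := ⟨hjJ, fun h => hjL (hKL h)⟩
    refine hi ⟨j, hjK, hmU, hjU j hjK, ?_⟩
    refine Relation.ReflTransGen.mono ?_ _ _
      (hTR L (Set.subset_univ _) hLi hLs m ⟨trivial, hmL⟩ j ⟨trivial, hjL⟩)
    rintro x y ⟨hx, hy, hxy⟩
    exact ⟨hsub hx, hsub hy, hxy⟩
  have hcomm : ∀ k ∈ K, Commute (cs.simple m) (cs.simple k) := by
    intro k hk
    obtain ⟨L, hLK, hkL, hLi, hKL⟩ := aux_component cs hk
    rcases main L (hLK.trans hKJ) hLi (aux_spherical_mono cs hLK hKsph) ⟨k, hkL⟩ hKL with h | h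
    · exact absurd (hKJ (hLK h)) hmJ
    · exact h.2 k hkL
  refine ⟨hnadj, hcomm, ?_⟩
  intro L hLT hLi hLs a ha b hb
  by_cases hmL : m ∈ L
  · have hLK : ∀ x ∈ L, x ≠ m → x ∈ K := by
      intro x hx hxm
      by_contra hxK
      rcases hLT hx with h | h
      · exact hnadj x ⟨h, hxK⟩ (aux_adj_of_spherical cs hLs hmL hx)
      · exact hxm h
    have hsing : ∀ x ∈ L, x = m := by
      by_contra! hcon
      obtain ⟨x, hx, hxm⟩ := hcon
      apply hLi
      refine ⟨{m}, L \ {m}, ⟨m, rfl⟩, ⟨x, hx, hxm⟩, Set.disjoint_sdiff_right,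
        Set.union_sdiff_cancel (by simpa using hmL), ?_⟩
      rintro k rfl l ⟨hl, hlm⟩
      exact hcomm l (hLK l hl hlm)
    have hJ' : ∀ x ∈ (J ∪ {m}) \ (L ∪ perpIn cs (J ∪ {m}) L), x ∈ J := by
      rintro x ⟨hx | hx, hx'⟩
      · exact hx
      · exact absurd (Or.inl (by rw [Set.mem_singleton_iff.1 hx]; exact hmL)) hx'
    exact Relation.ReflTransGen.single ⟨ha, hb, hJ2 a (hJ' a ha) b (hJ' b hb)⟩
  · have hLJ : L ⊆ J := by
      intro x hx
      rcases hLT hx with h | h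
      · exact h
      · rw [Set.mem_singleton_iff.1 h] at hx
        exact absurd hx hmL
    by_cases hmT : m ∈ (J ∪ {m}) \ (L ∪ perpIn cs (J ∪ {m}) L)
    · have hmp : m ∉ L ∪ perpIn cs Set.univ L := by
        rintro (h | h)
        · exact hmL h
        · exact hmT.2 (Or.inr ⟨⟨Or.inr rfl, hmL⟩, h.2⟩)
      have hLne : L.Nonempty := by
        by_contra h
        rw [Set.not_nonempty_iff_eq_empty] at h
        exact hmp (Or.inr ⟨⟨trivial, hmL⟩, by simp [h]⟩)
      have hKL : ¬ K ⊆ L ∪ perpIn cs Set.univ L := fun h => hmp (main L hLJ hLi hLs hLne h)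
      obtain ⟨k, hkK, hkL⟩ := Set.not_subset.1 hKL
      have hkT : k ∈ (J ∪ {m}) \ (L ∪ perpIn cs (J ∪ {m}) L) := by
        refine ⟨Or.inl (hKJ hkK), ?_⟩
        rintro (h | h)
        · exact hkL (Or.inl h)
        · exact hkL (Or.inr ⟨⟨trivial, h.1.2⟩, h.2⟩)
      have hadj : ∀ x ∈ (J ∪ {m}) \ (L ∪ perpIn cs (J ∪ {m}) L), Adjacent cs x k := by
        rintro x ⟨hx | hx, -⟩
        · exact hJ2 x hx k (hKJ hkK)
        · rw [Set.mem_singleton_iff.1 hx]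
          exact aux_adj_of_commute cs (hcomm k hkK)
      exact (Relation.ReflTransGen.single ⟨ha, hkT, hadj a ha⟩).tail
        ⟨hkT, hb, aux_adj_symm cs (hadj b hb)⟩
    · have hJ' : ∀ x ∈ (J ∪ {m}) \ (L ∪ perpIn cs (J ∪ {m}) L), x ∈ J := by
        intro x hx
        rcases hx.1 with h | h
        · exact h
        · rw [Set.mem_singleton_iff.1 h] at hx
          exact absurd hx hmT
      exact Relation.ReflTransGen.single ⟨ha, hb, hJ2 a (hJ' a ha) b (hJ' b hb)⟩
end

section
/- Let (W,S) be a Coxeter system with S finite. Let J ⊆ S be irreducible, 2-spherical and non-spherical, let K ⊆ J be spherical, and let m ∈ S∖(J∪J⊥) be such that m is not adjacent to any element of J∖K, m commutes with every element of K, and J∪{m} is twist-rigid. Then K is a maximal spherical subset of J, i.e. there is no spherical subset L with K ⊊ L ⊆ J. -/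
variable {B : Type*} {W : Type*} [Group W] {M : CoxeterMatrix B}

theorem adjacent_of_commute_aux (cs : CoxeterSystem M W) (i j : B)
    (h : Commute (cs.simple i) (cs.simple j)) : Adjacent cs i j := by
  unfold Adjacent
  have hi := cs.simple_mul_simple_self i
  have hj := cs.simple_mul_simple_self j
  have hc : cs.simple j * cs.simple i = cs.simple i * cs.simple j := h.eq.symm
  refine Set.Finite.subset
    (s := {1, cs.simple i, cs.simple j, cs.simple i * cs.simple j}) (Set.toFinite _) ?_
  intro x hx
  have hx' : x ∈ Subgroup.closure {cs.simple i, cs.simple j} := hx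
  have key : ∀ y ∈ ({cs.simple i, cs.simple j} : Set W), ∀ x : W,
      x ∈ ({1, cs.simple i, cs.simple j, cs.simple i * cs.simple j} : Set W) →
      y * x ∈ ({1, cs.simple i, cs.simple j, cs.simple i * cs.simple j} : Set W) := by
    intro y hy x hx
    have e1 : cs.simple j * (cs.simple i * cs.simple j) = cs.simple i := by
      rw [← mul_assoc, hc, mul_assoc, hj, mul_one]
    have e2 : cs.simple i * (cs.simple i * cs.simple j) = cs.simple j := by
      rw [← mul_assoc, hi, one_mul]
    rcases hy with rfl | rfl <;> rcases hx with rfl | rfl | rfl | rfl <;>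
      simp [hi, hj, hc, e1, e2]
  induction hx' using Subgroup.closure_induction_left with
  | one => simp
  | mul_left y hy z hz ih => exact key y hy z (ih hz)
  | inv_mul_cancel y hy z hz ih =>
    have : y⁻¹ = y := by
      rcases hy with rfl | rfl <;> simp
    rw [this]
    exact key y hy z (ih hz)

/-- In the second case of the avoiding-shadow lemma, `K` is a maximal
spherical subset of `J`. -/
theorem maximal_spherical_of_avoiding_shadow
    [Finite B] (cs : CoxeterSystem M W)
    (J : Set B) (hJirr : IrreducibleSubset cs J) (hJ2 : TwoSpherical cs J)
    (hJns : ¬ Spherical cs J)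
    (K : Set B) (hKJ : K ⊆ J) (hKsph : Spherical cs K)
    (m : B) (hm : m ∉ J ∪ perpIn cs Set.univ J)
    (hadj : ∀ j ∈ J \ K, ¬ Adjacent cs m j)
    (hcomm : ∀ k ∈ K, Commute (cs.simple m) (cs.simple k))
    (htr : TwistRigidIn cs (J ∪ {m})) :
    ¬ ∃ L : Set B, K ⊂ L ∧ L ⊆ J ∧ Spherical cs L := by
  rintro ⟨L, hKL, hLJ, hLs⟩
  obtain ⟨hKL', j, hjL, hjK⟩ := Set.ssubset_iff_exists.mp hKL
  have hmJ : m ∉ J := fun h => hm (Or.inl h)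
  let R : B → B → Prop := fun x y => y ∈ L ∧ ¬ Commute (cs.simple x) (cs.simple y)
  let C : Set B := {x | Relation.ReflTransGen R j x}
  have hjC : j ∈ C := Relation.ReflTransGen.refl
  have hCL : C ⊆ L := by
    intro x hx
    rcases Relation.ReflTransGen.cases_tail hx with h | ⟨y, _, hy⟩
    · exact h ▸ hjL
    · exact hy.1
  have hout : ∀ x ∈ L, x ∉ C → ∀ y ∈ C, Commute (cs.simple x) (cs.simple y) := by
    intro x hx hxC y hy
    by_contra hn
    exact hxC (Relation.ReflTransGen.tail hy ⟨hx, fun h => hn h.symm⟩)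
  have hside : ∀ P Q : Set B, P ∪ Q = C →
      (∀ k ∈ P, ∀ l ∈ Q, Commute (cs.simple k) (cs.simple l)) → j ∈ P → C ⊆ P := by
    intro P Q hPQ hc hjP x hx
    have hx' : Relation.ReflTransGen R j x := hx
    induction hx' with
    | refl => exact hjP
    | tail hab hbc ih =>
      rename_i b c
      have hcC : c ∈ P ∪ Q := hPQ ▸ hx
      rcases hcC with h | h
      · exact h
      · exact absurd (hc _ (ih hab) _ h) hbc.2
  have hCirr : IrreducibleSubset cs C := by
    rintro ⟨P, Q, ⟨p, hp⟩, ⟨q, hq⟩, hd, hPQ, hc⟩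
    have hj' : j ∈ P ∪ Q := hPQ ▸ hjC
    rcases hj' with h | h
    · exact Set.disjoint_left.mp hd (hside P Q hPQ hc h (hPQ ▸ Or.inr hq)) hq
    · exact Set.disjoint_left.mp hd hp
        (hside Q P (Set.union_comm Q P ▸ hPQ) (fun k hk l hl => (hc l hl k hk).symm) h
          (hPQ ▸ Or.inl hp))
  have hCs : Spherical cs C :=
    Set.Finite.subset hLs (Subgroup.closure_mono (Set.image_mono hCL))
  have hCJ : C ⊆ J := hCL.trans hLJ
  obtain ⟨b, hbJ, hbC, k, hkC, hbk⟩ : ∃ b ∈ J, b ∉ C ∧ ∃ k ∈ C,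
      ¬ Commute (cs.simple b) (cs.simple k) := by
    by_contra hn
    push Not at hn
    refine hJirr ⟨C, J \ C, ⟨j, hjC⟩, ?_, Set.disjoint_sdiff_right,
      Set.union_diff_cancel hCJ, fun k hk l hl => (hn l hl.1 hl.2 k hk).symm⟩
    by_contra he
    rw [Set.not_nonempty_iff_eq_empty, Set.diff_eq_empty] at he
    exact hJns ((Set.Subset.antisymm he hCJ) ▸ hCs)
  have hconn := htr C (hCJ.trans Set.subset_union_left) hCirr hCs
  have hmT : m ∈ (J ∪ {m}) \ (C ∪ perpIn cs (J ∪ {m}) C) := by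
    refine ⟨Or.inr rfl, ?_⟩
    rintro (h | h)
    · exact hmJ (hCJ h)
    · exact hadj j ⟨hLJ hjL, hjK⟩ (adjacent_of_commute_aux cs m j (h.2 j hjC))
  have hbT : b ∈ (J ∪ {m}) \ (C ∪ perpIn cs (J ∪ {m}) C) := by
    refine ⟨Or.inl hbJ, ?_⟩
    rintro (h | h)
    · exact hbC h
    · exact hbk (h.2 k hkC)
  have hpath := hconn m hmT b hbT
  have hall : b = m := by
    clear hbT hbk hbC hbJ
    induction hpath with
    | refl => rfl
    | tail hab hbc ih =>
      rename_i x c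
      obtain ⟨_, hcT, hadjc⟩ := hbc
      rw [ih] at hadjc
      rcases hcT.1 with hcJ | hcm
      · exfalso
        by_cases hcK : c ∈ K
        · have hcC : c ∉ C := fun h => hcT.2 (Or.inl h)
          exact hcT.2 (Or.inr ⟨⟨Or.inl hcJ, hcC⟩, hout c (hKL' hcK) hcC⟩)
        · exact hadj c ⟨hcJ, hcK⟩ hadjc
      · exact hcm
  exact hmJ (hall ▸ hbJ)
end
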